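/- (Poisson kernel formula) Let λ > 0 with 2λ ∈ ℤ. For ϑ, φ ∈ [0,π] with cos ϑ + cos φ > 0 and −1 < t < 1, the Poisson kernel of the Gegenbauer polynomials P_λ(t,ϑ,φ) = Σ_{n=0}^∞ (n!(n+λ)/Γ(n+2λ)) C̃_n^λ(cos ϑ) C̃_n^λ(cos φ) t^n satisfies P_λ(t,ϑ,φ) = (π/2^{8λ−4}) ((cos ϑ + cos φ)/2)^{−2λ} (θ_t + λ)[(1+t)^{−2λ} I_{2λ−1,2λ−1}(−t,ϑ,φ)], where θ_t = t ∂/∂t and I_{μ,ν}(s,ϑ,φ) = ∫₀^∞ Ĩ_{μ/2}(sx/(1−s)) K̃_{ν/2}(x/(1−s)) J̃_{μ/2}(ax) J̃_{ν/2}(bx) x^{μ+ν+1} dx with a = sin ϑ/(cos ϑ + cos φ) and b = sin φ/(cos ϑ + cos φ). -/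

import Mathlib

open MeasureTheory Real Filter Set Metric

noncomputable section

/-- Normalized Bessel function of the first kind: `J̃_α(x) = (x/2)^{-α} J_α(x)`,
given by its (entire) power series. -/
def besselJt (α x : ℝ) : ℝ :=
  ∑' m : ℕ, (-1) ^ m / (m.factorial * Real.Gamma (m + α + 1)) * (x / 2) ^ (2 * m)

/-- Bessel function of the first kind `J_α`. -/
def besselJ (α x : ℝ) : ℝ :=
  ∑' m : ℕ, (-1) ^ m / (m.factorial * Real.Gamma (m + α + 1)) * (x / 2) ^ (2 * (m : ℝ) + α)

/-- Normalized modified Bessel function `Ĩ_α(x) = (x/2)^{-α} I_α(x)`,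
given by its (entire, even) power series. -/
def besselIt (α x : ℝ) : ℝ :=
  ∑' m : ℕ, (x / 2) ^ (2 * m) / (m.factorial * Real.Gamma (m + α + 1))

/-- Modified Bessel function of the first kind `I_α`. -/
def besselI (α x : ℝ) : ℝ :=
  ∑' m : ℕ, (x / 2) ^ (2 * (m : ℝ) + α) / (m.factorial * Real.Gamma (m + α + 1))

/-- Modified Bessel function of the second kind,
`K_α(x) = lim_{β→α} (π/2)(I_{−β}(x) − I_β(x))/sin(βπ)`. -/
def besselK (α x : ℝ) : ℝ :=
  limUnder (nhdsWithin α {α}ᶜ) fun β =>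
    Real.pi / 2 * (besselI (-β) x - besselI β x) / Real.sin (β * Real.pi)

/-- Normalized K-Bessel function `K̃_α(x) = (x/2)^{-α} K_α(x)`. -/
def besselKt (α x : ℝ) : ℝ := (x / 2) ^ (-α) * besselK α x

/-- Normalized Gegenbauer polynomial `C̃_n^λ = Γ(λ) C_n^λ`, where `C_n^λ` is defined via the
generating function `(1 − 2xt + t²)^{−λ} = Σ_{n≥0} C_n^λ(x) tⁿ`; explicitly,
`C̃_n^λ(x) = Σ_{k=0}^{⌊n/2⌋} (−1)^k Γ(λ+n−k)/(k!(n−2k)!) (2x)^{n−2k}`.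
This expression also gives the limit value `C̃_n^0 = lim_{λ→0+} Γ(λ) C_n^λ` for `n ≥ 1`. -/
def gegenbauerCt (n : ℕ) (l x : ℝ) : ℝ :=
  ∑ k ∈ Finset.range (n / 2 + 1),
    (-1) ^ k * Real.Gamma (l + n - k) / (k.factorial * (n - 2 * k).factorial)
      * (2 * x) ^ (n - 2 * k)

/-- Laguerre polynomial `L_n^μ(x) = Σ_{k=0}^n (−1)^k binom(n+μ, n−k) x^k/k!`
(with nonnegative integer parameter `μ`). -/
def laguerreL (n μ : ℕ) (x : ℝ) : ℝ :=
  ∑ k ∈ Finset.range (n + 1),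
    (-1) ^ k * (Nat.choose (n + μ) (n - k)) * x ^ k / k.factorial

/-- The Euler operator `θ = x d/dx`. -/
def eulerOp (u : ℝ → ℝ) : ℝ → ℝ := fun x => x * deriv u x

/-- `(θ+c)(θ+c+ν)u − x² u`, i.e. the operator `Q_ν(θ+c)` applied to `u`. -/
def besselQ (ν c : ℝ) (u : ℝ → ℝ) : ℝ → ℝ := fun x =>
  eulerOp (fun y => eulerOp u y + (c + ν) * u y) x
    + c * (eulerOp u x + (c + ν) * u x) - x ^ 2 * u x

/-- The fourth order differential operator
`D_{μ,ν} = x^{−2}((θ+μ)(θ+μ+ν) − x²)(θ(θ+ν) − x²)`. -/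
def Dop (μ ν : ℝ) (u : ℝ → ℝ) : ℝ → ℝ := fun x =>
  besselQ ν μ (besselQ ν 0 u) x / x ^ 2

/-- The generating function
`G^{μ,ν}(t,x) = (1−t)^{−(μ+ν+2)/2} Ĩ_{μ/2}(tx/(1−t)) K̃_{ν/2}(x/(1−t))`. -/
def genFun (μ ν t x : ℝ) : ℝ :=
  (1 - t) ^ (-(μ + ν + 2) / 2) * besselIt (μ / 2) (t * x / (1 - t))
    * besselKt (ν / 2) (x / (1 - t))

/-- The eigenfunctions `Λ_j^{μ,ν}`, defined as the Taylor coefficients in `t` at `t = 0` of the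
generating function `G^{μ,ν}(t,x) = Σ_{j≥0} Λ_j^{μ,ν}(x) t^j`. -/
def LambdaF (μ ν : ℝ) (j : ℕ) (x : ℝ) : ℝ :=
  iteratedDeriv j (fun t => genFun μ ν t x) 0 / j.factorial

/-- The integrality condition: `μ ≥ ν ≥ −1` are integers of the same parity,
not both equal to `−1`. -/
def IntCond (μ ν : ℤ) : Prop :=
  -1 ≤ ν ∧ ν ≤ μ ∧ Even (μ - ν) ∧ ¬(μ = -1 ∧ ν = -1)

end

/-- The Gegenbauer measure `(1-v²)^(l-1) dv` on `(-1,1)`. -/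
noncomputable def gnu (l : ℝ) : Measure ℝ :=
  (volume.restrict (Ioo (-1 : ℝ) 1)).withDensity
    (fun v => ENNReal.ofReal ((1 - v ^ 2) ^ (l - 1)))

lemma gnu_weight_pos (l : ℝ) {v : ℝ} (hv : v ∈ Ioo (-1 : ℝ) 1) : 0 < (1 - v ^ 2) ^ (l - 1) := by
  apply Real.rpow_pos_of_pos
  nlinarith [hv.1, hv.2]

lemma gnu_integrableOn {l : ℝ} (hl : 0 < l) :
    IntegrableOn (fun v : ℝ => (1 - v ^ 2) ^ (l - 1)) (Ioo (-1 : ℝ) 1) := by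
  have h1 : IntegrableOn (fun v : ℝ => (1 - v) ^ (l - 1)) (Ioo (-1 : ℝ) 1) := by
    have := (intervalIntegral.intervalIntegrable_rpow' (a := 0) (b := 2) (r := l - 1) (by linarith)).comp_sub_left 1
    norm_num at this
    exact ((intervalIntegrable_iff_integrableOn_Ioo_of_le (by norm_num)).1 this.symm)
  have h2 : IntegrableOn (fun v : ℝ => (1 + v) ^ (l - 1)) (Ioo (-1 : ℝ) 1) := by
    have := (intervalIntegral.intervalIntegrable_rpow' (a := 0) (b := 2) (r := l - 1) (by linarith)).comp_add_left 1
    norm_num at this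
    exact ((intervalIntegrable_iff_integrableOn_Ioo_of_le (by norm_num)).1 this)
  have h3 : IntegrableOn (fun v : ℝ => (1 : ℝ)) (Ioo (-1 : ℝ) 1) := by simp
  refine Integrable.mono' ((h1.add h2).add h3) ?_ ?_
  · exact (by fun_prop : Measurable (fun v : ℝ => (1 - v ^ 2) ^ (l - 1))).aestronglyMeasurable
  · filter_upwards [ae_restrict_mem measurableSet_Ioo] with v hv
    rw [Real.norm_of_nonneg (gnu_weight_pos l hv).le]
    have e : (1 - v ^ 2) = (1 - v) * (1 + v) := by ring
    have p1 : 0 < 1 - v := by linarith [hv.2]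
    have p2 : 0 < 1 + v := by linarith [hv.1]
    have q1 := Real.rpow_pos_of_pos p1 (l - 1)
    have q2 := Real.rpow_pos_of_pos p2 (l - 1)
    simp only [Pi.add_apply]
    by_cases h : 1 ≤ l
    · have : (1 - v ^ 2) ^ (l - 1) ≤ 1 := Real.rpow_le_one (by nlinarith) (by nlinarith) (by linarith)
      linarith
    · rw [e, Real.mul_rpow p1.le p2.le]
      rcases le_total 0 v with h0 | h0
      · have : (1 + v) ^ (l - 1) ≤ 1 := Real.rpow_le_one_of_one_le_of_nonpos (by linarith) (by linarith)
        nlinarith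
      · have : (1 - v) ^ (l - 1) ≤ 1 := Real.rpow_le_one_of_one_le_of_nonpos (by linarith) (by linarith)
        nlinarith

lemma gnu_finite {l : ℝ} (hl : 0 < l) : IsFiniteMeasure (gnu l) :=
  isFiniteMeasure_withDensity_ofReal (gnu_integrableOn hl).2

lemma gnu_ae (l : ℝ) : ∀ᵐ v ∂(gnu l), v ∈ Ioo (-1 : ℝ) 1 :=
  (withDensity_absolutelyContinuous _ _).ae_le (ae_restrict_mem measurableSet_Ioo)

lemma gnu_integral {E : Type*} [NormedAddCommGroup E] [NormedSpace ℝ E] (l : ℝ) (g : ℝ → E) :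
    ∫ v, g v ∂(gnu l) = ∫ v in Ioo (-1 : ℝ) 1, ((1 - v ^ 2) ^ (l - 1)) • g v := by
  unfold gnu
  rw [integral_withDensity_eq_integral_toReal_smul (by fun_prop) (by simp)]
  refine setIntegral_congr_fun measurableSet_Ioo fun v hv => ?_
  rw [ENNReal.toReal_ofReal (gnu_weight_pos l hv).le]

lemma gnu_integrable_iff {E : Type*} [NormedAddCommGroup E] [NormedSpace ℝ E] (l : ℝ) (g : ℝ → E) :
    Integrable g (gnu l) ↔
      IntegrableOn (fun v => ((1 - v ^ 2) ^ (l - 1)) • g v) (Ioo (-1 : ℝ) 1) := by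
  unfold gnu
  rw [integrable_withDensity_iff_integrable_smul' (by fun_prop) (by simp)]
  refine integrableOn_congr_fun (fun v hv => ?_) measurableSet_Ioo
  rw [ENNReal.toReal_ofReal (gnu_weight_pos l hv).le]

lemma gnu_integrable {E : Type*} [NormedAddCommGroup E] [NormedSpace ℝ E] [SecondCountableTopology E]
    {l : ℝ} (hl : 0 < l) {g : ℝ → E} (hg : ContinuousOn g (Icc (-1) 1)) : Integrable g (gnu l) := by
  have := gnu_finite hl
  obtain ⟨C, hC⟩ := isCompact_Icc.exists_bound_of_continuousOn hg
  refine Integrable.of_bound (C := C) ?_ ?_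
  · have : AEStronglyMeasurable g (volume.restrict (Icc (-1 : ℝ) 1)) :=
      hg.aestronglyMeasurable measurableSet_Icc
    refine AEStronglyMeasurable.mono_ac ?_ this
    exact (withDensity_absolutelyContinuous _ _).trans
      (Measure.absolutelyContinuous_of_le (Measure.restrict_mono Ioo_subset_Icc_self le_rfl))
  · filter_upwards [gnu_ae l] with v hv
    exact hC v (Ioo_subset_Icc_self hv)

lemma gnu_byparts {l : ℝ} (hl : 0 < l) {g g' : ℝ → ℂ} (hg : ∀ v ∈ Icc (-1 : ℝ) 1, HasDerivAt g (g' v) v)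
    (hg' : ContinuousOn g' (Icc (-1) 1)) :
    ∫ v, ((1 - v ^ 2 : ℝ) * g' v - (2 * l * v : ℝ) * g v) ∂(gnu l) = 0 := by
  have hgc : ContinuousOn g (Icc (-1) 1) := fun v hv => (hg v hv).continuousAt.continuousWithinAt
  have hcont : ContinuousOn (fun v : ℝ => ((1 - v ^ 2 : ℝ) * g' v - (2 * l * v : ℝ) * g v : ℂ))
      (Icc (-1) 1) := by
    apply ContinuousOn.sub
    · exact ContinuousOn.mul (by fun_prop) hg'
    · exact ContinuousOn.mul (by fun_prop) hgc
  have hIntg := (gnu_integrable_iff l _).1 (gnu_integrable hl hcont)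
  rw [gnu_integral]
  rw [← integral_Ioc_eq_integral_Ioo, ← intervalIntegral.integral_of_le (by norm_num)]
  rw [intervalIntegral.integral_eq_sub_of_hasDerivAt_of_le (f := fun v => ((((1 - v ^ 2) ^ l : ℝ) : ℂ) * g v)) (by norm_num)]
  · norm_num [Real.zero_rpow hl.ne']
  · apply ContinuousOn.mul _ hgc
    apply Continuous.continuousOn
    apply Complex.continuous_ofReal.comp
    exact Continuous.rpow_const (by fun_prop) (fun v => Or.inr hl.le)
  · intro v hv
    have hp : 0 < 1 - v ^ 2 := by nlinarith [hv.1, hv.2]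
    have h1 : HasDerivAt (fun v : ℝ => (1 - v ^ 2)) (-(2 * v)) v := by
      simpa using ((hasDerivAt_pow 2 v).const_sub 1)
    have h2 := (h1.rpow_const (p := l) (Or.inl hp.ne')).ofReal_comp
    have h3 := h2.mul (hg v (Ioo_subset_Icc_self hv))
    refine h3.congr_deriv ?_
    have : (1 - v ^ 2) ^ l = (1 - v ^ 2) ^ (l - 1) * (1 - v ^ 2) := by
      rw [← Real.rpow_add_one hp.ne']; ring_nf
    rw [this, Complex.real_smul]
    push_cast
    ring
  · exact (intervalIntegrable_iff_integrableOn_Ioo_of_le (by norm_num)).2 hIntg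

lemma gnu_byparts_real {l : ℝ} (hl : 0 < l) {g g' : ℝ → ℝ} (hg : ∀ v ∈ Icc (-1 : ℝ) 1, HasDerivAt g (g' v) v)
    (hg' : ContinuousOn g' (Icc (-1) 1)) :
    ∫ v, ((1 - v ^ 2) * g' v - (2 * l * v) * g v) ∂(gnu l) = 0 := by
  have := gnu_byparts hl (g := fun v => (g v : ℂ)) (g' := fun v => (g' v : ℂ))
    (fun v hv => (hg v hv).ofReal_comp) (by fun_prop)
  rw [← Complex.ofReal_inj, ← integral_complex_ofReal]
  simpa using this

/-- total mass -/
noncomputable def gm0 (l : ℝ) : ℝ := ∫ _, (1 : ℝ) ∂(gnu l)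

lemma gm0_pos {l : ℝ} (hl : 0 < l) : 0 < gm0 l := by
  unfold gm0
  rw [gnu_integral]
  simp only [smul_eq_mul, mul_one]
  rw [setIntegral_pos_iff_support_of_nonneg_ae]
  · have : Ioo (-1 : ℝ) 1 ⊆ (Function.support fun v : ℝ => (1 - v ^ 2) ^ (l - 1)) ∩ Ioo (-1 : ℝ) 1 :=
      fun v hv => ⟨(gnu_weight_pos l hv).ne', hv⟩
    refine lt_of_lt_of_le ?_ (measure_mono this)
    simp
  · filter_upwards [ae_restrict_mem measurableSet_Ioo] with v hv
    exact (gnu_weight_pos l hv).le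
  · exact gnu_integrableOn hl

/-- differentiation under the integral sign for the measure `gnu`. -/
lemma gnu_hasDerivAt {E : Type*} [NormedAddCommGroup E] [NormedSpace ℝ E] [SecondCountableTopology E]
    {l : ℝ} (hl : 0 < l) {F F' : ℝ → ℝ → E} {y0 : ℝ} {ε : ℝ} (hε : 0 < ε)
    (hF : ∀ y ∈ Icc (y0 - ε) (y0 + ε), ∀ v ∈ Icc (-1 : ℝ) 1, HasDerivAt (fun y => F y v) (F' y v) y)
    (hFc : ∀ y ∈ Icc (y0 - ε) (y0 + ε), ContinuousOn (F y) (Icc (-1) 1))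
    (hF' : ContinuousOn (Function.uncurry F') (Icc (y0 - ε) (y0 + ε) ×ˢ Icc (-1) 1)) :
    HasDerivAt (fun y => ∫ v, F y v ∂(gnu l)) (∫ v, F' y0 v ∂(gnu l)) y0 := by
  have := gnu_finite hl
  obtain ⟨C, hC⟩ := (isCompact_Icc.prod isCompact_Icc).exists_bound_of_continuousOn hF'
  have hy0 : y0 ∈ Icc (y0 - ε) (y0 + ε) := ⟨by linarith, by linarith⟩
  refine (hasDerivAt_integral_of_dominated_loc_of_deriv_le (bound := fun _ => C)
    (s := Icc (y0 - ε) (y0 + ε)) ?_ ?_ ?_ ?_ ?_ ?_ ?_).2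
  · exact Icc_mem_nhds (by linarith) (by linarith)
  · filter_upwards [Icc_mem_nhds (by linarith : y0 - ε < y0) (by linarith : y0 < y0 + ε)] with y hy
    exact (gnu_integrable hl (hFc y hy)).1
  · exact gnu_integrable hl (hFc y0 hy0)
  · refine (gnu_integrable hl ?_).1
    exact hF'.comp (f := fun v => (y0, v)) (by fun_prop) (fun v hv => ⟨hy0, hv⟩)
  · filter_upwards [gnu_ae l] with v hv y hy
    exact hC (y, v) ⟨hy, Ioo_subset_Icc_self hv⟩
  · exact integrable_const C
  · filter_upwards [gnu_ae l] with v hv y hy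
    exact hF y hy v (Ioo_subset_Icc_self hv)

lemma lin_ne {A : ℝ} (hA : 0 < A) (B v : ℝ) : (A : ℂ) + Complex.I * B * v ≠ 0 := by
  intro h
  have := congrArg Complex.re h
  simp at this
  exact hA.ne' this

lemma lin_deriv_v {A : ℝ} (hA : 0 < A) (B v : ℝ) (N : ℕ) :
    HasDerivAt (fun v : ℝ => (((A : ℂ) + Complex.I * B * v) ^ N)⁻¹)
      (-(N * (Complex.I * B)) / ((A : ℂ) + Complex.I * B * v) ^ (N + 1)) v := by
  have h0 := lin_ne hA B v
  have h1 : HasDerivAt (fun v : ℝ => (A : ℂ) + Complex.I * B * v) (Complex.I * B) v := by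
    have := ((Complex.ofRealCLM.hasDerivAt (x := v)).const_mul (Complex.I * (B : ℂ))).const_add (A : ℂ)
    simpa using this
  have := (h1.fun_pow N).fun_inv (pow_ne_zero _ h0)
  refine this.congr_deriv ?_
  rcases N with _ | N
  · simp
  · simp only [Nat.add_sub_cancel]
    field_simp
    ring

lemma lin_deriv_B {A : ℝ} (hA : 0 < A) (B v : ℝ) (N : ℕ) :
    HasDerivAt (fun B : ℝ => (((A : ℂ) + Complex.I * B * v) ^ N)⁻¹)
      (-(N * (Complex.I * v)) / ((A : ℂ) + Complex.I * B * v) ^ (N + 1)) B := by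
  have := lin_deriv_v hA v B N
  simpa [mul_right_comm] using this

lemma lin_integral {l : ℝ} (hl : 0 < l) {N : ℕ} (hN : (N : ℝ) = 2 * l) {A : ℝ} (hA : 0 < A) (B : ℝ) :
    ∫ v, (((A : ℂ) + Complex.I * B * v) ^ N)⁻¹ ∂(gnu l)
      = ((gm0 l * (A ^ 2 + B ^ 2) ^ (-l) : ℝ) : ℂ) := by
  have hP : ∀ B : ℝ, 0 < A ^ 2 + B ^ 2 := fun B => by positivity
  set Y : ℝ → ℂ := fun B => ∫ v, (((A : ℂ) + Complex.I * B * v) ^ N)⁻¹ ∂(gnu l) with hY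
  have hd : ∀ B : ℝ, HasDerivAt Y
      (∫ v : ℝ, -(N * (Complex.I * v)) / ((A : ℂ) + Complex.I * B * v) ^ (N + 1) ∂(gnu l)) B := by
    intro B
    refine gnu_hasDerivAt hl one_pos (F := fun (B : ℝ) (v : ℝ) => (((A : ℂ) + Complex.I * B * v) ^ N)⁻¹) (F' := fun (B : ℝ) (v : ℝ) => -(N * (Complex.I * v)) / ((A : ℂ) + Complex.I * B * v) ^ (N + 1)) ?_ ?_ ?_
    · intro y _ v _
      exact lin_deriv_B hA y v N
    · intro y _ v _
      exact (lin_deriv_v hA y v N).continuousAt.continuousWithinAt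
    · apply Continuous.continuousOn
      unfold Function.uncurry
      apply Continuous.div (by fun_prop) (by fun_prop)
      intro p
      exact pow_ne_zero _ (lin_ne hA _ _)
  have hode : ∀ B : ℝ, ((A : ℂ) ^ 2 + B ^ 2) * (∫ v : ℝ, -(N * (Complex.I * v)) / ((A : ℂ) + Complex.I * B * v) ^ (N + 1) ∂(gnu l))
      + 2 * l * B * Y B = 0 := by
    intro B
    have bp := gnu_byparts hl (g := fun v : ℝ => (((A : ℂ) + Complex.I * B * v) ^ N)⁻¹)
      (fun v _ => lin_deriv_v hA B v N) (by
        apply Continuous.continuousOn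
        apply Continuous.div (by fun_prop) (by fun_prop)
        intro p
        exact pow_ne_zero _ (lin_ne hA _ _))
    have i1 : Integrable (fun v : ℝ => ((A : ℂ) ^ 2 + B ^ 2) * (-(N * (Complex.I * v)) / ((A : ℂ) + Complex.I * B * v) ^ (N + 1))) (gnu l) := by
      apply gnu_integrable hl
      apply Continuous.continuousOn
      refine Continuous.mul (by fun_prop) (Continuous.div (by fun_prop) (by fun_prop) ?_)
      intro p
      exact pow_ne_zero _ (lin_ne hA _ _)
    have i2 : Integrable (fun v : ℝ => 2 * l * B * (((A : ℂ) + Complex.I * B * v) ^ N)⁻¹) (gnu l) := by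
      apply gnu_integrable hl
      apply Continuous.continuousOn
      refine Continuous.mul (by fun_prop) (Continuous.inv₀ (by fun_prop) ?_)
      intro p
      exact pow_ne_zero _ (lin_ne hA _ _)
    rw [hY]
    simp only
    rw [← integral_const_mul, ← integral_const_mul, ← integral_add i1 i2]
    rw [← mul_zero (Complex.I * (A : ℂ)), ← bp, ← integral_const_mul]
    congr 1
    ext v
    have h0 := lin_ne hA B v
    have hN' : (N : ℂ) = 2 * l := by exact_mod_cast hN
    rw [hN']
    push_cast
    have hW : (((A : ℂ) + Complex.I * B * v) ^ N)⁻¹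
        = (((A : ℂ) + Complex.I * B * v) ^ (N + 1))⁻¹ * ((A : ℂ) + Complex.I * B * v) := by
      rw [pow_succ]; field_simp
    rw [hW, div_eq_mul_inv, div_eq_mul_inv]
    generalize (((A : ℂ) + Complex.I * B * v) ^ (N + 1))⁻¹ = Z
    linear_combination (2 * l * Z * A * B) * Complex.I_sq
  have hconst : ∀ B : ℝ, (((A ^ 2 + B ^ 2) ^ l : ℝ) : ℂ) * Y B = (((A ^ 2 + 0 ^ 2) ^ l : ℝ) : ℂ) * Y 0 := by
    have hder : ∀ B : ℝ, HasDerivAt (fun B : ℝ => (((A ^ 2 + B ^ 2) ^ l : ℝ) : ℂ) * Y B) 0 B := by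
      intro B
      have h1 : HasDerivAt (fun B : ℝ => A ^ 2 + B ^ 2) (2 * B) B := by
        simpa using (hasDerivAt_pow 2 B).const_add (A ^ 2)
      have h2 := (h1.rpow_const (p := l) (Or.inl (hP B).ne')).ofReal_comp
      have h3 := h2.mul (hd B)
      refine h3.congr_deriv ?_
      have : (A ^ 2 + B ^ 2) ^ l = (A ^ 2 + B ^ 2) ^ (l - 1) * (A ^ 2 + B ^ 2) := by
        rw [← Real.rpow_add_one (hP B).ne']; ring_nf
      rw [this]
      push_cast
      linear_combination (((A ^ 2 + B ^ 2) ^ (l - 1) : ℝ) : ℂ) * hode B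
    intro B
    exact is_const_of_deriv_eq_zero (fun B => (hder B).differentiableAt) (fun B => (hder B).deriv) B 0
  have hY0 : Y 0 = ((gm0 l : ℝ) : ℂ) * ((A : ℂ) ^ N)⁻¹ := by
    simp only [hY, gm0]
    rw [← integral_complex_ofReal, ← integral_mul_const]
    simp
  have hA2 : (A ^ 2 + 0 ^ 2) ^ l = A ^ N := by
    rw [← Real.rpow_natCast A N, hN, Real.rpow_mul hA.le]; norm_num
  have := hconst B
  rw [hY0, hA2] at this
  have hne : (((A ^ 2 + B ^ 2) ^ l : ℝ) : ℂ) ≠ 0 := by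
    exact_mod_cast (Real.rpow_pos_of_pos (hP B) l).ne'
  have hA' : (A : ℂ) ≠ 0 := by exact_mod_cast hA.ne'
  rw [Real.rpow_neg (hP B).le]
  change Y B = _
  push_cast at this hne ⊢
  field_simp at this ⊢
  linear_combination this

noncomputable def gegTerm (l x : ℝ) (n k : ℕ) : ℝ :=
  if 2 * k ≤ n then (-1) ^ k * Real.Gamma (l + n - k) / (k.factorial * (n - 2 * k).factorial)
      * (2 * x) ^ (n - 2 * k) else 0

lemma gegen_eq_sum (l x : ℝ) (n M : ℕ) (hM : n / 2 + 1 ≤ M) :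
    gegenbauerCt n l x = ∑ k ∈ Finset.range M, gegTerm l x n k := by
  unfold gegenbauerCt
  rw [← Finset.sum_subset (Finset.range_mono hM)]
  · refine Finset.sum_congr rfl fun k hk => ?_
    have : 2 * k ≤ n := by have := Finset.mem_range.1 hk; omega
    simp [gegTerm, this]
  · intro k _ hk
    have : ¬ 2 * k ≤ n := by
      have := Finset.mem_range.not.1 hk; omega
    simp [gegTerm, this]

lemma gegTerm_rec_zero {l : ℝ} (hl : 0 < l) (x : ℝ) (n : ℕ) :
    (n + 2) * gegTerm l x (n + 2) 0 = 2 * (n + 1 + l) * x * gegTerm l x (n + 1) 0 := by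
  have h1 : Real.Gamma (l + (n + 2 : ℕ) - (0 : ℕ)) = (l + n + 1) * Real.Gamma (l + (n + 1 : ℕ) - (0 : ℕ)) := by
    rw [show (l + n + 1 : ℝ) = l + (n + 1 : ℕ) - (0 : ℕ) by push_cast; ring,
      ← Real.Gamma_add_one (by push_cast; rw [sub_zero]; positivity)]
    congr 1
    push_cast; ring
  simp only [gegTerm, mul_zero, zero_le, if_true, h1, Nat.sub_zero]
  rw [show (n + 2).factorial = (n + 2) * (n + 1).factorial from rfl]
  have : ((n + 1).factorial : ℝ) ≠ 0 := by positivity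
  have : (n + 2 : ℝ) ≠ 0 := by positivity
  push_cast
  simp only [sub_zero]
  field_simp
  ring

lemma gegTerm_rec {l : ℝ} (hl : 0 < l) (x : ℝ) (n k : ℕ) :
    (n + 2) * gegTerm l x (n + 2) (k + 1) = 2 * (n + 1 + l) * x * gegTerm l x (n + 1) (k + 1)
      - (n + 2 * l) * gegTerm l x n k := by
  by_cases h : 2 * k ≤ n
  · obtain ⟨d, rfl⟩ := Nat.exists_eq_add_of_le h
    have hpos : (0 : ℝ) < l + (k + d) := by positivity
    have h1 : Real.Gamma (l + (2 * k + d + 2 : ℕ) - (k + 1 : ℕ))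
        = (l + k + d) * Real.Gamma (l + (2 * k + d : ℕ) - k) := by
      rw [show l + ((2 * k + d : ℕ) : ℝ) - k = l + (k + d) by push_cast; ring,
        show (l + ((2 * k + d + 2 : ℕ) : ℝ) - (k + 1 : ℕ)) = l + (k + d) + 1 by push_cast; ring,
        Real.Gamma_add_one hpos.ne']
      ring
    have h2 : Real.Gamma (l + (2 * k + d + 1 : ℕ) - (k + 1 : ℕ)) = Real.Gamma (l + (2 * k + d : ℕ) - k) := by
      congr 1; push_cast; ring
    have c1 : 2 * (k + 1) ≤ 2 * k + d + 2 := by omega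
    have c2 : 2 * k ≤ 2 * k + d := by omega
    have e1 : 2 * k + d + 2 - 2 * (k + 1) = d := by omega
    have e2 : 2 * k + d - 2 * k = d := by omega
    have hk : ((k + 1).factorial : ℝ) = (k + 1) * k.factorial := by
      rw [Nat.factorial_succ]; push_cast; ring
    have hk0 : (k.factorial : ℝ) ≠ 0 := by positivity
    have hk1 : (k + 1 : ℝ) ≠ 0 := by positivity
    simp only [gegTerm, c1, c2, if_true, h1, h2, e1, e2, hk]
    generalize Real.Gamma (l + (2 * k + d : ℕ) - k) = G
    rcases d with _ | d
    · have c3 : ¬ 2 * (k + 1) ≤ 2 * k + 0 + 1 := by omega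
      simp only [c3, if_false]
      push_cast
      field_simp
      ring
    · have c3 : 2 * (k + 1) ≤ 2 * k + (d + 1) + 1 := by omega
      have e3 : 2 * k + (d + 1) + 1 - 2 * (k + 1) = d := by omega
      have hd : ((d + 1).factorial : ℝ) = (d + 1) * d.factorial := by
        rw [Nat.factorial_succ]; push_cast; ring
      have hd0 : (d.factorial : ℝ) ≠ 0 := by positivity
      have hd1 : (d + 1 : ℝ) ≠ 0 := by positivity
      simp only [c3, if_true, e3, hd]
      push_cast
      field_simp
      ring
  · have c1 : ¬ 2 * (k + 1) ≤ n + 2 := by omega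
    have c2 : ¬ 2 * (k + 1) ≤ n + 1 := by omega
    simp [gegTerm, h, c1, c2]

lemma gegen_rec {l : ℝ} (hl : 0 < l) (x : ℝ) (n : ℕ) :
    (n + 2) * gegenbauerCt (n + 2) l x = 2 * (n + 1 + l) * x * gegenbauerCt (n + 1) l x
      - (n + 2 * l) * gegenbauerCt n l x := by
  rw [gegen_eq_sum l x (n + 2) (n + 2 + 1) (by omega), gegen_eq_sum l x (n + 1) (n + 2 + 1) (by omega),
    gegen_eq_sum l x n (n + 2) (by omega)]
  rw [Finset.sum_range_succ', Finset.sum_range_succ' (fun k => gegTerm l x (n + 1) k), mul_add, mul_add,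
    gegTerm_rec_zero hl]
  rw [Finset.mul_sum, Finset.mul_sum, Finset.mul_sum, add_sub_right_comm, ← Finset.sum_sub_distrib]
  congr 1
  exact Finset.sum_congr rfl fun k _ => gegTerm_rec hl x n k

/-- Laplace integral -/
noncomputable def lapI (l x s : ℝ) (n : ℕ) : ℂ := ∫ v, ((x : ℂ) + Complex.I * s * v) ^ n ∂(gnu l)

lemma gnu_m1 {l : ℝ} (hl : 0 < l) : ∫ v : ℝ, (v : ℂ) ∂(gnu l) = 0 := by
  have := gnu_byparts hl (g := fun _ => 1) (g' := fun _ => 0) (fun v _ => hasDerivAt_const v _) (by fun_prop)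
  simp only [mul_zero, mul_one, zero_sub, Complex.ofReal_mul] at this
  rw [integral_neg, integral_const_mul] at this
  have h2 : ((2 : ℝ) : ℂ) * l ≠ 0 := by
    have : (l : ℂ) ≠ 0 := by exact_mod_cast hl.ne'
    simpa using this
  simpa [hl.ne'] using this

lemma lapI_zero (l x s : ℝ) : lapI l x s 0 = gm0 l := by
  unfold lapI gm0
  rw [← integral_complex_ofReal]
  simp

lemma lapI_one {l : ℝ} (hl : 0 < l) (x s : ℝ) : lapI l x s 1 = x * gm0 l := by
  unfold lapI gm0
  rw [← integral_complex_ofReal, ← integral_const_mul]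
  simp only [pow_one]
  rw [integral_add, integral_const_mul, gnu_m1 hl]
  · simp
  · apply gnu_integrable hl; fun_prop
  · apply gnu_integrable hl; fun_prop

lemma lapI_rec {l : ℝ} (hl : 0 < l) {x s : ℝ} (hs : x ^ 2 + s ^ 2 = 1) (n : ℕ) :
    ((n : ℂ) + 1 + 2 * l) * lapI l x s (n + 2) = 2 * (n + 1 + l) * x * lapI l x s (n + 1)
      - (n + 1) * lapI l x s n := by
  have hIntg : ∀ (c : ℂ) (m : ℕ), Integrable (fun v : ℝ => c * ((x : ℂ) + Complex.I * s * v) ^ m) (gnu l) := by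
    intro c m
    apply gnu_integrable hl; fun_prop
  have bp := gnu_byparts hl (g := fun v : ℝ => ((x : ℂ) + Complex.I * s * v) ^ (n + 1))
    (g' := fun v : ℝ => (n + 1) * ((x : ℂ) + Complex.I * s * v) ^ n * (Complex.I * s)) (by
      intro v _
      have h1 : HasDerivAt (fun v : ℝ => (x : ℂ) + Complex.I * s * v) (Complex.I * s) v := by
        have := ((Complex.ofRealCLM.hasDerivAt (x := v)).const_mul (Complex.I * (s : ℂ))).const_add (x : ℂ)
        simpa using this
      simpa using h1.fun_pow (n + 1)) (by fun_prop)
  unfold lapI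
  rw [← sub_eq_zero, ← integral_const_mul, ← integral_const_mul, ← integral_const_mul,
    ← integral_sub (hIntg _ _) (hIntg _ _)]
  have hIntg2 : Integrable (fun v : ℝ => 2 * ((n : ℂ) + 1 + l) * x * ((x : ℂ) + Complex.I * s * v) ^ (n + 1)
      - ((n : ℂ) + 1) * ((x : ℂ) + Complex.I * s * v) ^ n) (gnu l) := (hIntg _ _).sub (hIntg _ _)
  rw [← integral_sub (hIntg _ _) hIntg2]
  rw [← mul_zero (-Complex.I * (s : ℂ)), ← bp, ← integral_const_mul]
  congr 1
  ext v
  have hs' : (x : ℂ) ^ 2 + (s : ℂ) ^ 2 = 1 := by exact_mod_cast hs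
  push_cast
  linear_combination (- (n + 1) * ((x : ℂ) + Complex.I * s * v) ^ n) * hs' +
    (((x : ℂ) + Complex.I * s * v) ^ n * (n + 1) * (s : ℂ) ^ 2) * Complex.I_sq

lemma gegen_laplace {l : ℝ} (hl : 0 < l) {x s : ℝ} (hs : x ^ 2 + s ^ 2 = 1) (n : ℕ) :
    ((gegenbauerCt n l x : ℝ) : ℂ)
      = ((Real.Gamma l * Real.Gamma (n + 2 * l) / (n.factorial * Real.Gamma (2 * l) * gm0 l) : ℝ) : ℂ)
        * lapI l x s n := by
  have hm := (gm0_pos hl).ne'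
  have hG := (Real.Gamma_pos_of_pos (by linarith : 0 < 2 * l)).ne'
  have hmC : (gm0 l : ℂ) ≠ 0 := by exact_mod_cast hm
  have hGC : ((Real.Gamma (2 * l) : ℝ) : ℂ) ≠ 0 := by exact_mod_cast hG
  induction n using Nat.strong_induction_on with
  | _ n ih =>
  match n, ih with
  | 0, _ =>
    rw [lapI_zero]
    simp [gegenbauerCt]
    field_simp
  | 1, _ =>
    rw [lapI_one hl]
    have h1 : Real.Gamma ((1 : ℕ) + 2 * l) = 2 * l * Real.Gamma (2 * l) := by
      rw [← Real.Gamma_add_one (by positivity)]; push_cast; ring_nf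
    have h2 : Real.Gamma (l + 1) = l * Real.Gamma l := Real.Gamma_add_one hl.ne'
    rw [h1]
    simp [gegenbauerCt, h2]
    field_simp
  | n + 2, ih =>
    have i0 := ih n (by omega)
    have i1 := ih (n + 1) (by omega)
    have hr := lapI_rec hl hs n
    have hg : ((n : ℂ) + 2) * (gegenbauerCt (n + 2) l x : ℝ) = 2 * (n + 1 + l) * x * (gegenbauerCt (n + 1) l x : ℝ)
      - (n + 2 * l) * (gegenbauerCt n l x : ℝ) := by exact_mod_cast gegen_rec hl x n
    have g1 : Real.Gamma ((n + 1 : ℕ) + 2 * l) = (n + 2 * l) * Real.Gamma (n + 2 * l) := by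
      rw [← Real.Gamma_add_one (by positivity)]; push_cast; ring_nf
    have g2 : Real.Gamma ((n + 2 : ℕ) + 2 * l) = (n + 1 + 2 * l) * ((n + 2 * l) * Real.Gamma (n + 2 * l)) := by
      rw [← g1, show ((n + 2 : ℕ) + 2 * l : ℝ) = ((n + 1 : ℕ) + 2 * l) + 1 by push_cast; ring,
        Real.Gamma_add_one (by positivity)]; push_cast; ring_nf
    rw [g2]
    rw [g1] at i1
    have f2 : (n + 2).factorial = (n + 2) * ((n + 1) * n.factorial) := rfl
    have f1 : (n + 1).factorial = (n + 1) * n.factorial := rfl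
    rw [f2]
    rw [f1] at i1
    rw [i0, i1] at hg
    have hn0 : (n.factorial : ℂ) ≠ 0 := by exact_mod_cast n.factorial_ne_zero
    have hn1 : (n : ℂ) + 1 ≠ 0 := by exact_mod_cast Nat.succ_ne_zero n
    have hn2 : (n : ℂ) + 2 ≠ 0 := by exact_mod_cast (by positivity : (n : ℝ) + 2 ≠ 0)
    apply mul_left_cancel₀ hn2
    rw [hg]
    push_cast
    field_simp
    linear_combination (-(n : ℂ) - 2 * l) * (Real.Gamma l : ℂ) * (Real.Gamma (n + 2 * l) : ℂ) * hr

open Polynomial in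
/-- Gegenbauer differential operator on polynomials. -/
noncomputable def gegL (l : ℝ) (p : Polynomial ℝ) : Polynomial ℝ :=
  (1 - X ^ 2) * derivative (derivative p) - C (2 * l + 1) * X * derivative p

open Polynomial in
lemma gegL_add (l : ℝ) (p q : Polynomial ℝ) : gegL l (p + q) = gegL l p + gegL l q := by
  simp only [gegL, derivative_add]; ring

open Polynomial in
lemma gegL_C_mul (l a : ℝ) (p : Polynomial ℝ) : gegL l (C a * p) = C a * gegL l p := by
  simp only [gegL, derivative_C_mul]; ring

open Polynomial in
lemma gegL_monomial (l a : ℝ) (j : ℕ) :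
    gegL l (monomial j a) = monomial (j - 2) (a * j * (j - 1)) - monomial j (a * (j * (j + 2 * l))) := by
  rcases j with _ | _ | j
  · simp [gegL]
  · simp [gegL, derivative_monomial, ← C_mul_X_pow_eq_monomial]
    ring
  · simp only [gegL, derivative_monomial, Nat.add_sub_cancel, show j + 1 + 1 - 2 = j by omega]
    simp only [← C_mul_X_pow_eq_monomial]
    push_cast
    simp only [C_1, map_add, map_sub, map_natCast, map_one, map_ofNat, map_mul]
    ring

open Polynomial in
lemma gegL_coeff (l : ℝ) (p : Polynomial ℝ) (j : ℕ) :
    (gegL l p).coeff j = (j + 2) * (j + 1) * p.coeff (j + 2) - j * (j + 2 * l) * p.coeff j := by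
  induction p using Polynomial.induction_on' with
  | add p q hp hq => rw [gegL_add, coeff_add, hp, hq, coeff_add, coeff_add]; ring
  | monomial m a =>
    rw [gegL_monomial]
    simp only [coeff_sub, coeff_monomial]
    rcases m with _ | _ | m
    · simp
      intro h; simp [← h]
    · simp
      split_ifs with h1
      · simp [← h1]; ring
      · simp
    · simp only [Nat.add_sub_cancel, Nat.add_right_cancel_iff, show m + 1 + 1 - 2 = m by omega]
      split_ifs with h1 h2
      · omega
      · subst h1; push_cast; ring
      · rename_i h2; rw [← h2]; push_cast; ring
      · simp

open Polynomial in
lemma gegL_unique {l : ℝ} (hl : 0 < l) (n : ℕ) (r : Polynomial ℝ)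
    (h : gegL l r + C ((n : ℝ) * (n + 2 * l)) * r = 0) (hd : ∀ j, n ≤ j → r.coeff j = 0) : r = 0 := by
  by_contra hr
  have hj : r.natDegree < n := by
    by_contra hj
    exact hr (leadingCoeff_eq_zero.1 (hd _ (not_lt.1 hj)))
  have := congrArg (fun q => q.coeff r.natDegree) h
  simp only [coeff_add, gegL_coeff, coeff_C_mul, coeff_zero] at this
  rw [coeff_eq_zero_of_natDegree_lt (by omega : r.natDegree < r.natDegree + 2)] at this
  have h2 : ((n : ℝ) * (n + 2 * l) - r.natDegree * (r.natDegree + 2 * l)) * r.leadingCoeff = 0 := by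
    unfold leadingCoeff; linear_combination this
  have hj' : (r.natDegree : ℝ) < n := by exact_mod_cast hj
  rcases mul_eq_zero.1 h2 with h3 | h3
  · have : (0 : ℝ) ≤ r.natDegree := by positivity
    nlinarith
  · exact hr (leadingCoeff_eq_zero.1 h3)

noncomputable def gegCoef (l : ℝ) (n k : ℕ) : ℝ :=
  (-1) ^ k * Real.Gamma (l + n - k) / (k.factorial * (n - 2 * k).factorial) * 2 ^ (n - 2 * k)

noncomputable def gegP (l : ℝ) (n : ℕ) : Polynomial ℝ :=
  ∑ k ∈ Finset.range (n / 2 + 1), Polynomial.monomial (n - 2 * k) (gegCoef l n k)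

lemma gegP_eval (l x : ℝ) (n : ℕ) : (gegP l n).eval x = gegenbauerCt n l x := by
  unfold gegP gegenbauerCt gegCoef
  rw [Polynomial.eval_finsetSum]
  refine Finset.sum_congr rfl fun k _ => ?_
  rw [Polynomial.eval_monomial, mul_pow]; ring

lemma gegP_natDegree (l : ℝ) (n : ℕ) : (gegP l n).natDegree ≤ n := by
  unfold gegP
  refine Polynomial.natDegree_sum_le_of_forall_le _ _ fun k _ => ?_
  exact (Polynomial.natDegree_monomial_le _).trans (by omega)

lemma gegP_coeff {l : ℝ} (hl : 0 < l) (n : ℕ) : (gegP l n).coeff n ≠ 0 := by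
  have : (gegP l n).coeff n = gegCoef l n 0 := by
    unfold gegP
    rw [Polynomial.finsetSum_coeff]
    rw [Finset.sum_eq_single 0]
    · simp
    · intro k hk hk0
      rw [Polynomial.coeff_monomial, if_neg]
      have := Finset.mem_range.1 hk
      omega
    · simp
  rw [this]
  unfold gegCoef
  have := Real.Gamma_pos_of_pos (by positivity : 0 < l + n)
  simp
  exact ⟨this.ne', by positivity⟩

open Polynomial in
lemma gegP_ode_partial {l : ℝ} (hl : 0 < l) (n M : ℕ) (hM : 2 * M ≤ n) :
    gegL l (∑ k ∈ Finset.range (M + 1), monomial (n - 2 * k) (gegCoef l n k))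
      + C ((n : ℝ) * (n + 2 * l)) * (∑ k ∈ Finset.range (M + 1), monomial (n - 2 * k) (gegCoef l n k))
      = monomial (n - 2 * M - 2) (gegCoef l n M * (n - 2 * M) * (n - 2 * M - 1)) := by
  induction M with
  | zero =>
    simp only [zero_add, Finset.sum_range_one, mul_zero, Nat.sub_zero]
    rw [gegL_monomial, C_mul_monomial, sub_add_eq_add_sub, add_sub_assoc, ← map_sub]
    rw [show (n : ℝ) * (n + 2 * l) * gegCoef l n 0 - gegCoef l n 0 * (n * (n + 2 * l)) = 0 by ring]
    simp
  | succ M ih =>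
    rw [Finset.sum_range_succ, gegL_add, mul_add (C _), add_add_add_comm, ih (by omega), gegL_monomial,
      C_mul_monomial]
    obtain ⟨d, rfl⟩ := Nat.exists_eq_add_of_le hM
    have e1 : 2 * (M + 1) + d - 2 * M - 2 = d := by omega
    have e2 : 2 * (M + 1) + d - 2 * (M + 1) = d := by omega
    have e3 : 2 * (M + 1) + d - 2 * M = d + 2 := by omega
    rw [e1, e2]
    have key : gegCoef l (2 * (M + 1) + d) M * (((2 * (M + 1) + d : ℕ) : ℝ) - 2 * M) * (((2 * (M + 1) + d : ℕ) : ℝ) - 2 * M - 1)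
        - gegCoef l (2 * (M + 1) + d) (M + 1) * (d * (d + 2 * l))
        + (((2 * (M + 1) + d : ℕ) : ℝ) * (((2 * (M + 1) + d : ℕ) : ℝ) + 2 * l)) * gegCoef l (2 * (M + 1) + d) (M + 1) = 0 := by
      unfold gegCoef
      rw [e2, e3]
      have hpos : (0 : ℝ) < l + (M + 1 + d) := by positivity
      have g1 : Real.Gamma (l + (2 * (M + 1) + d : ℕ) - M) = (l + (M + 1 + d)) * Real.Gamma (l + (2 * (M + 1) + d : ℕ) - (M + 1 : ℕ)) := by
        rw [show l + ((2 * (M + 1) + d : ℕ) : ℝ) - (M + 1 : ℕ) = l + (M + 1 + d) by push_cast; ring,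
          ← Real.Gamma_add_one hpos.ne']
        congr 1; push_cast; ring
      rw [g1]
      generalize Real.Gamma (l + (2 * (M + 1) + d : ℕ) - (M + 1 : ℕ)) = G
      rw [show (M + 1).factorial = (M + 1) * M.factorial from rfl,
        show (d + 2).factorial = (d + 2) * ((d + 1) * d.factorial) from rfl]
      have hM0 : (M.factorial : ℝ) ≠ 0 := by positivity
      have hd0 : (d.factorial : ℝ) ≠ 0 := by positivity
      have hM1 : (M + 1 : ℝ) ≠ 0 := by positivity
      have hd1 : (d + 1 : ℝ) ≠ 0 := by positivity
      have hd2 : (d + 2 : ℝ) ≠ 0 := by positivity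
      push_cast
      field_simp
      ring
    have e4 : gegCoef l (2 * (M + 1) + d) (M + 1) * d * (d - 1)
      = gegCoef l (2 * (M + 1) + d) (M + 1) * (((2 * (M + 1) + d : ℕ) : ℝ) - 2 * (M + 1 : ℕ))
        * (((2 * (M + 1) + d : ℕ) : ℝ) - 2 * (M + 1 : ℕ) - 1) := by push_cast; ring
    rw [← e4]
    rw [show ∀ a b c d : Polynomial ℝ, a + (b - c + d) = b + (a - c + d) from fun a b c d => by ring]
    rw [← map_sub, ← map_add, key]
    simp

open Polynomial in
lemma gegP_ode {l : ℝ} (hl : 0 < l) (n : ℕ) :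
    gegL l (gegP l n) + C ((n : ℝ) * (n + 2 * l)) * gegP l n = 0 := by
  unfold gegP
  rw [gegP_ode_partial hl n (n / 2) (by omega)]
  rcases Nat.even_or_odd' n with ⟨k, rfl | rfl⟩
  · rw [show 2 * k / 2 = k by omega]
    simp
  · rw [show (2 * k + 1) / 2 = k by omega]
    simp

/-- moments -/
noncomputable def gmom (l : ℝ) (i : ℕ) : ℝ := ∫ v, v ^ i ∂(gnu l)

lemma gmom_zero (l : ℝ) : gmom l 0 = gm0 l := by simp [gmom, gm0]

lemma gmom_rec {l : ℝ} (hl : 0 < l) (i : ℕ) : ((i : ℝ) + 1 + 2 * l) * gmom l (i + 2) = (i + 1) * gmom l i := by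
  have bp := gnu_byparts_real hl (g := fun v : ℝ => v ^ (i + 1)) (g' := fun v => (i + 1) * v ^ i)
    (by intro v _; simpa using hasDerivAt_pow (i + 1) v) (by fun_prop)
  unfold gmom
  rw [← sub_eq_zero, ← neg_eq_zero, ← bp, ← integral_const_mul, ← integral_const_mul, neg_sub, ← integral_sub]
  · congr 1; ext v; ring
  · apply gnu_integrable hl; fun_prop
  · apply gnu_integrable hl; fun_prop

lemma gmom_odd {l : ℝ} (hl : 0 < l) (j : ℕ) : gmom l (2 * j + 1) = 0 := by
  induction j with
  | zero =>
    have := gnu_m1 hl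
    simp only [mul_zero, zero_add, gmom, pow_one]
    rw [integral_complex_ofReal] at this
    exact_mod_cast this
  | succ j ih =>
    have := gmom_rec hl (2 * j + 1)
    rw [ih, mul_zero] at this
    rcases mul_eq_zero.1 this with h | h
    · have : (0 : ℝ) < ((2 * j + 1 : ℕ) : ℝ) + 1 + 2 * l := by positivity
      linarith
    · exact h

open Polynomial in
lemma mono_exists {l : ℝ} (hl : 0 < l) (x s : ℝ) (m : ℕ) :
    ∃ p : Polynomial ℝ, p.natDegree ≤ m ∧
      ∀ φ : ℝ, ∫ v, (x * cos φ + s * sin φ * v) ^ m ∂(gnu l) = p.eval (cos φ) := by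
  refine ⟨∑ i ∈ Finset.range (m + 1),
    if Even i then C ((m.choose i : ℝ) * x ^ (m - i) * s ^ i * gmom l i) * X ^ (m - i) * (1 - X ^ 2) ^ (i / 2) else 0, ?_, ?_⟩
  · refine natDegree_sum_le_of_forall_le _ _ fun i hi => ?_
    have hi' := Finset.mem_range.1 hi
    split_ifs with h
    · refine natDegree_mul_le.trans ?_
      have h1 := natDegree_C_mul_X_pow_le ((m.choose i : ℝ) * x ^ (m - i) * s ^ i * gmom l i) (m - i)
      have h2 : ((1 - X ^ 2 : Polynomial ℝ) ^ (i / 2)).natDegree ≤ (i / 2) * 2 := by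
        refine natDegree_pow_le_of_le _ ?_
        refine (natDegree_sub_le _ _).trans ?_
        simp
      omega
    · simp
  · intro φ
    have : ∀ v : ℝ, (x * cos φ + s * sin φ * v) ^ m
        = ∑ i ∈ Finset.range (m + 1), ((m.choose i : ℝ) * x ^ (m - i) * s ^ i * cos φ ^ (m - i) * sin φ ^ i) * v ^ i := by
      intro v
      rw [add_comm, add_pow]
      refine Finset.sum_congr rfl fun i _ => ?_
      rw [mul_pow, mul_pow, mul_pow]; ring
    simp_rw [this]
    rw [integral_finsetSum, eval_finsetSum]
    · refine Finset.sum_congr rfl fun i _ => ?_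
      rw [integral_const_mul]
      change _ * gmom l i = _
      split_ifs with h
      · simp only [eval_mul, eval_C, eval_pow, eval_X, eval_sub, eval_one]
        rw [← Real.sin_sq, ← pow_mul, Nat.mul_div_cancel' h.two_dvd]
        ring
      · obtain ⟨j, rfl⟩ := Nat.not_even_iff_odd.1 h
        rw [gmom_odd hl]; simp
    · intro i _
      apply gnu_integrable hl; fun_prop

open Polynomial in
lemma poly_exists {l : ℝ} (hl : 0 < l) (x s : ℝ) (n : ℕ) (f : Polynomial ℝ) (hf : f.natDegree ≤ n) :
    ∃ p : Polynomial ℝ, p.natDegree ≤ n ∧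
      ∀ φ : ℝ, ∫ v, f.eval (x * cos φ + s * sin φ * v) ∂(gnu l) = p.eval (cos φ) := by
  choose p hp1 hp2 using mono_exists hl x s
  refine ⟨∑ m ∈ Finset.range (n + 1), C (f.coeff m) * p m, ?_, ?_⟩
  · refine natDegree_sum_le_of_forall_le _ _ fun i hi => ?_
    have hi' := Finset.mem_range.1 hi
    exact (natDegree_C_mul_le _ _).trans ((hp1 i).trans (by omega))
  · intro φ
    simp_rw [eval_eq_sum_range' (Nat.lt_succ_of_le hf)]
    rw [integral_finsetSum, eval_finsetSum]
    · refine Finset.sum_congr rfl fun i _ => ?_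
      rw [integral_const_mul, hp2]
      simp
    · intro i _
      apply gnu_integrable hl; fun_prop

open Polynomial in
lemma geg_prod_ode {l : ℝ} (hl : 0 < l) (n : ℕ) {x s : ℝ} (hs : x ^ 2 + s ^ 2 = 1) (p : Polynomial ℝ)
    (hp : ∀ φ : ℝ, ∫ v, (gegP l n).eval (x * cos φ + s * sin φ * v) ∂(gnu l) = p.eval (cos φ)) :
    gegL l p + C ((n : ℝ) * (n + 2 * l)) * p = 0 := by
  set f := gegP l n with hf
  have hz : ∀ (φ v : ℝ), HasDerivAt (fun φ => x * cos φ + s * sin φ * v) (-x * sin φ + s * cos φ * v) φ := by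
    intro φ v
    have := ((hasDerivAt_cos φ).const_mul x).add (((hasDerivAt_sin φ).const_mul s).mul_const v)
    exact this.congr_deriv (by ring)
  have hz' : ∀ (φ v : ℝ), HasDerivAt (fun φ => -x * sin φ + s * cos φ * v) (-(x * cos φ + s * sin φ * v)) φ := by
    intro φ v
    have := ((hasDerivAt_sin φ).const_mul (-x)).add (((hasDerivAt_cos φ).const_mul s).mul_const v)
    exact this.congr_deriv (by ring)
  have hfd : ∀ (g : Polynomial ℝ) (φ v : ℝ), HasDerivAt (fun φ => g.eval (x * cos φ + s * sin φ * v))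
      ((derivative g).eval (x * cos φ + s * sin φ * v) * (-x * sin φ + s * cos φ * v)) φ := by
    intro g φ v
    exact (g.hasDerivAt _).comp φ (hz φ v)
  have hc : ∀ g : Polynomial ℝ, Continuous (fun y : ℝ => g.eval y) := fun g => g.continuous
  have hfd' : ∀ (g : Polynomial ℝ) (φ v : ℝ), HasDerivAt
      (fun φ => (derivative g).eval (x * cos φ + s * sin φ * v) * (-x * sin φ + s * cos φ * v))
      ((derivative (derivative g)).eval (x * cos φ + s * sin φ * v) * (-x * sin φ + s * cos φ * v) * (-x * sin φ + s * cos φ * v)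
        + (derivative g).eval (x * cos φ + s * sin φ * v) * (-(x * cos φ + s * sin φ * v))) φ := by
    intro g φ v
    exact (hfd (derivative g) φ v).mul (hz' φ v)
  have H1 : ∀ φ : ℝ, HasDerivAt (fun φ => ∫ v, f.eval (x * cos φ + s * sin φ * v) ∂(gnu l))
      (∫ v, (derivative f).eval (x * cos φ + s * sin φ * v) * (-x * sin φ + s * cos φ * v) ∂(gnu l)) φ := by
    intro φ
    refine gnu_hasDerivAt hl (F := fun φ v => f.eval (x * cos φ + s * sin φ * v))
      (F' := fun φ v => (derivative f).eval (x * cos φ + s * sin φ * v) * (-x * sin φ + s * cos φ * v))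
      one_pos (fun y _ v _ => hfd f y v) ?_ ?_
    · intro y _; apply Continuous.continuousOn; fun_prop
    · apply Continuous.continuousOn; unfold Function.uncurry; fun_prop
  have H2 : ∀ φ : ℝ, HasDerivAt (fun φ => ∫ v, (derivative f).eval (x * cos φ + s * sin φ * v) * (-x * sin φ + s * cos φ * v) ∂(gnu l))
      (∫ v, ((derivative (derivative f)).eval (x * cos φ + s * sin φ * v) * (-x * sin φ + s * cos φ * v) * (-x * sin φ + s * cos φ * v)
        + (derivative f).eval (x * cos φ + s * sin φ * v) * (-(x * cos φ + s * sin φ * v))) ∂(gnu l)) φ := by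
    intro φ
    refine gnu_hasDerivAt hl (F := fun φ v => (derivative f).eval (x * cos φ + s * sin φ * v) * (-x * sin φ + s * cos φ * v))
      (F' := fun φ v => (derivative (derivative f)).eval (x * cos φ + s * sin φ * v) * (-x * sin φ + s * cos φ * v) * (-x * sin φ + s * cos φ * v)
        + (derivative f).eval (x * cos φ + s * sin φ * v) * (-(x * cos φ + s * sin φ * v)))
      one_pos (fun y _ v _ => hfd' f y v) ?_ ?_
    · intro y _; apply Continuous.continuousOn; fun_prop
    · apply Continuous.continuousOn; unfold Function.uncurry; fun_prop
  have P1 : ∀ φ : ℝ, HasDerivAt (fun φ => p.eval (cos φ)) (- sin φ * (derivative p).eval (cos φ)) φ := by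
    intro φ
    exact ((p.hasDerivAt _).comp φ (hasDerivAt_cos φ)).congr_deriv (by ring)
  have P2 : ∀ φ : ℝ, HasDerivAt (fun φ => - sin φ * (derivative p).eval (cos φ))
      (-cos φ * (derivative p).eval (cos φ) + sin φ ^ 2 * (derivative (derivative p)).eval (cos φ)) φ := by
    intro φ
    exact ((hasDerivAt_sin φ).neg.mul (((derivative p).hasDerivAt _).comp φ (hasDerivAt_cos φ))).congr_deriv
      (by simp; ring)
  have E1 : ∀ φ : ℝ, ∫ v, (derivative f).eval (x * cos φ + s * sin φ * v) * (-x * sin φ + s * cos φ * v) ∂(gnu l)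
      = - sin φ * (derivative p).eval (cos φ) := by
    intro φ
    refine (H1 φ).unique ?_
    rw [funext hp]; exact P1 φ
  have E2 : ∀ φ : ℝ, (∫ v, ((derivative (derivative f)).eval (x * cos φ + s * sin φ * v) * (-x * sin φ + s * cos φ * v) * (-x * sin φ + s * cos φ * v)
        + (derivative f).eval (x * cos φ + s * sin φ * v) * (-(x * cos φ + s * sin φ * v))) ∂(gnu l))
      = -cos φ * (derivative p).eval (cos φ) + sin φ ^ 2 * (derivative (derivative p)).eval (cos φ) := by
    intro φ
    refine (H2 φ).unique ?_
    rw [funext E1]; exact P2 φ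
  have hode : ∀ z : ℝ, (1 - z ^ 2) * (derivative (derivative f)).eval z - (2 * l + 1) * z * (derivative f).eval z
      + (n * (n + 2 * l)) * f.eval z = 0 := by
    intro z
    have := congrArg (fun q => q.eval z) (gegP_ode hl n)
    simpa [gegL] using this
  have key : ∀ φ : ℝ, sin φ * (-cos φ * (derivative p).eval (cos φ) + sin φ ^ 2 * (derivative (derivative p)).eval (cos φ))
      + 2 * l * cos φ * (- sin φ * (derivative p).eval (cos φ)) + n * (n + 2 * l) * (sin φ * p.eval (cos φ)) = 0 := by
    intro φ
    have bp := gnu_byparts_real hl (g := fun v : ℝ => (derivative f).eval (x * cos φ + s * sin φ * v))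
      (g' := fun v : ℝ => (derivative (derivative f)).eval (x * cos φ + s * sin φ * v) * (s * sin φ)) (by
        intro v _
        have : HasDerivAt (fun v => x * cos φ + s * sin φ * v) (s * sin φ) v := by
          simpa using ((hasDerivAt_id v).const_mul (s * sin φ)).const_add (x * cos φ)
        exact ((derivative f).hasDerivAt _).comp v this) (by fun_prop)
    rw [← E2, ← E1, ← hp, ← integral_const_mul, ← integral_const_mul, ← integral_const_mul,
      ← integral_const_mul, ← integral_add, ← integral_add]
    · rw [← neg_zero, ← mul_zero s, ← bp, ← integral_const_mul, ← integral_neg]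
      congr 1; ext v
      have h1 := hode (x * cos φ + s * sin φ * v)
      have h2 := Real.sin_sq_add_cos_sq φ
      set D2 := eval (x * cos φ + s * sin φ * v) (derivative (derivative f))
      set D1 := eval (x * cos φ + s * sin φ * v) (derivative f)
      have h3 : (-x * sin φ + s * cos φ * v) ^ 2 = 1 - (x * cos φ + s * sin φ * v) ^ 2 - s ^ 2 * (1 - v ^ 2) := by
        linear_combination hs + (x ^ 2 + s ^ 2 * v ^ 2) * h2
      linear_combination sin φ * h1 + sin φ * D2 * h3 + 2 * l * D1 * s * v * h2
    · apply gnu_integrable hl; fun_prop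
    · apply gnu_integrable hl; fun_prop
    · apply gnu_integrable hl; fun_prop
    · apply gnu_integrable hl; fun_prop
  have hroot : ∀ y ∈ Ioo (-1 : ℝ) 1, (gegL l p + C ((n : ℝ) * (n + 2 * l)) * p).eval y = 0 := by
    intro y hy
    have h1 := key (arccos y)
    rw [cos_arccos hy.1.le hy.2.le] at h1
    have h2 : sin (arccos y) ≠ 0 := by
      rw [sin_arccos]; apply (Real.sqrt_pos.2 _).ne'; nlinarith [hy.1, hy.2]
    have h3 : sin (arccos y) ^ 2 = 1 - y ^ 2 := by
      rw [sin_arccos]; apply Real.sq_sqrt; nlinarith [hy.1, hy.2]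
    rw [h3] at h1
    apply mul_left_cancel₀ h2
    simp only [gegL, eval_add, eval_sub, eval_mul, eval_C, eval_X, eval_pow, eval_one]
    linear_combination h1
  exact eq_zero_of_infinite_isRoot _ ((Ioo_infinite (by norm_num : (-1 : ℝ) < 1)).mono hroot)

open Polynomial in
lemma geg_prod0 {l : ℝ} (hl : 0 < l) (n : ℕ) {x s : ℝ} (hs : x ^ 2 + s ^ 2 = 1) (φ : ℝ) :
    (∫ v, gegenbauerCt n l (x * cos φ + s * sin φ * v) ∂(gnu l)) * gegenbauerCt n l 1
      = gm0 l * gegenbauerCt n l x * gegenbauerCt n l (cos φ) := by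
  obtain ⟨p, hpd, hp⟩ := poly_exists hl x s n (gegP l n) (gegP_natDegree l n)
  have ode := geg_prod_ode hl n hs p hp
  have hr : C ((gegP l n).coeff n) * p + C (-p.coeff n) * gegP l n = 0 := by
    refine gegL_unique hl n _ ?_ ?_
    · rw [gegL_add, gegL_C_mul, gegL_C_mul]
      linear_combination C ((gegP l n).coeff n) * ode + C (-p.coeff n) * gegP_ode hl n
    · intro j hj
      rcases hj.eq_or_lt with rfl | hj
      · simp; ring
      · simp [coeff_eq_zero_of_natDegree_lt (hpd.trans_lt hj),
          coeff_eq_zero_of_natDegree_lt ((gegP_natDegree l n).trans_lt hj)]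
  have h0 := gegP_coeff hl n
  have e1 : ∀ y, (gegP l n).coeff n * p.eval y = p.coeff n * gegenbauerCt n l y := by
    intro y
    have := congrArg (fun q => q.eval y) hr
    simp [gegP_eval] at this
    linarith
  have e2 : p.eval 1 = gm0 l * gegenbauerCt n l x := by
    have := hp 0
    simp [gegP_eval] at this
    rw [← this, gm0]; simp
  have e3 : ∫ v, gegenbauerCt n l (x * cos φ + s * sin φ * v) ∂(gnu l) = p.eval (cos φ) := by
    rw [← hp]; simp_rw [gegP_eval]
  rw [e3, ← e2]
  apply mul_left_cancel₀ h0
  linear_combination gegenbauerCt n l 1 * e1 (cos φ) - gegenbauerCt n l (cos φ) * e1 1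

lemma geg_one {l : ℝ} (hl : 0 < l) (n : ℕ) :
    gegenbauerCt n l 1 = Real.Gamma l * Real.Gamma (n + 2 * l) / (n.factorial * Real.Gamma (2 * l)) := by
  have h := gegen_laplace hl (x := 1) (s := 0) (by norm_num) n
  have : lapI l 1 0 n = gm0 l := by
    rw [← lapI_zero l 1 0]; simp [lapI]
  rw [this, ← Complex.ofReal_mul, Complex.ofReal_inj] at h
  rw [h]
  have := gm0_pos hl
  field_simp

lemma geg_prod {l : ℝ} (hl : 0 < l) (n : ℕ) {x s : ℝ} (hs : x ^ 2 + s ^ 2 = 1) (φ : ℝ) :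
    n.factorial / Real.Gamma (n + 2 * l) * gegenbauerCt n l x * gegenbauerCt n l (cos φ)
      = Real.Gamma l / (Real.Gamma (2 * l) * gm0 l) *
        ∫ v, gegenbauerCt n l (x * cos φ + s * sin φ * v) ∂(gnu l) := by
  have h := geg_prod0 hl n hs φ
  rw [geg_one hl] at h
  have h1 := gm0_pos hl
  have h2 := Real.Gamma_pos_of_pos hl
  have h3 := Real.Gamma_pos_of_pos (by positivity : 0 < 2 * l)
  have h4 := Real.Gamma_pos_of_pos (by positivity : 0 < n + 2 * l)
  have h5 : (0 : ℝ) < n.factorial := by positivity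
  field_simp
  field_simp at h
  linear_combination -h

lemma hasSum_of_eq {E : Type*} [AddCommMonoid E] [TopologicalSpace E] {f g : ℕ → E} {a b : E}
    (h : HasSum g b) (hfg : ∀ n, f n = g n) (hab : a = b) : HasSum f a := by
  rw [hab, funext hfg]; exact h

lemma gamma_choose {l : ℝ} {k : ℕ} (hk : 2 * l = k + 1) (n : ℕ) :
    Real.Gamma (n + 2 * l) / (n.factorial * Real.Gamma (2 * l)) = ((n + k).choose k : ℝ) := by
  rw [hk, show (n : ℝ) + (k + 1) = ((n + k : ℕ) : ℝ) + 1 by push_cast; ring, Real.Gamma_nat_eq_factorial,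
    Real.Gamma_nat_eq_factorial, Nat.cast_choose ℝ (by omega : k ≤ n + k), Nat.add_sub_cancel]
  rw [mul_comm (k.factorial : ℝ)]

lemma choose_summable (k : ℕ) {r : ℝ} (hr : |r| < 1) :
    Summable (fun n : ℕ => ((n + k).choose k : ℝ) * r ^ n) :=
  (hasSum_choose_mul_geometric_of_norm_lt_one k (r := r) (by simpa using hr)).summable

lemma gegen_laplace' {l : ℝ} (hl : 0 < l) {k : ℕ} (hk : 2 * l = k + 1) {x s : ℝ} (hs : x ^ 2 + s ^ 2 = 1) (n : ℕ) :
    ((gegenbauerCt n l x : ℝ) : ℂ)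
      = ((Real.Gamma l / gm0 l * ((n + k).choose k : ℝ) : ℝ) : ℂ) * lapI l x s n := by
  rw [gegen_laplace hl hs, ← gamma_choose hk]
  congr 2
  have := (gm0_pos hl).ne'
  field_simp

lemma lap_norm_le {x s v : ℝ} (hs : x ^ 2 + s ^ 2 = 1) (hv : v ∈ Icc (-1 : ℝ) 1) :
    ‖(x : ℂ) + Complex.I * s * v‖ ≤ 1 := by
  have h : ‖(x : ℂ) + Complex.I * s * v‖ ^ 2 = x ^ 2 + (s * v) ^ 2 := by
    rw [Complex.sq_norm, Complex.normSq_apply]; simp; ring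
  have h2 : ‖(x : ℂ) + Complex.I * s * v‖ ^ 2 ≤ 1 ^ 2 := by
    rw [h]; nlinarith [sq_nonneg s, hv.1, hv.2, mul_nonneg (sq_nonneg s) (by nlinarith [hv.1, hv.2] : 0 ≤ 1 - v ^ 2)]
  exact le_of_sq_le_sq h2 (by norm_num)

lemma lapI_norm_le {l : ℝ} (hl : 0 < l) {x s : ℝ} (hs : x ^ 2 + s ^ 2 = 1) (n : ℕ) :
    ‖lapI l x s n‖ ≤ gm0 l := by
  have := gnu_finite hl
  unfold lapI gm0
  refine norm_integral_le_of_norm_le (by apply gnu_integrable hl; fun_prop) ?_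
  filter_upwards [gnu_ae l] with v hv
  rw [norm_pow]
  exact pow_le_one₀ (norm_nonneg _) (lap_norm_le hs (Ioo_subset_Icc_self hv))

lemma geg_abs_le {l : ℝ} (hl : 0 < l) {k : ℕ} (hk : 2 * l = k + 1) {x : ℝ} (hx : x ∈ Icc (-1 : ℝ) 1) (n : ℕ) :
    |gegenbauerCt n l x| ≤ Real.Gamma l * ((n + k).choose k : ℝ) := by
  have hs : x ^ 2 + (√(1 - x ^ 2)) ^ 2 = 1 := by
    rw [Real.sq_sqrt (by nlinarith [hx.1, hx.2])]; ring
  have h := gegen_laplace' hl hk hs n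
  have h2 := lapI_norm_le hl hs n
  have h3 := congrArg norm h
  have hG := Real.Gamma_pos_of_pos hl
  have hm := gm0_pos hl
  rw [Complex.norm_real, norm_mul, Complex.norm_real, Real.norm_eq_abs, Real.norm_of_nonneg (by positivity)] at h3
  rw [h3]
  calc _ ≤ Real.Gamma l / gm0 l * ((n + k).choose k : ℝ) * gm0 l := by gcongr
    _ = _ := by field_simp

lemma geg_genfun {l : ℝ} (hl : 0 < l) {k : ℕ} (hk : 2 * l = k + 1) {x : ℝ} (hx : x ∈ Icc (-1 : ℝ) 1) {t : ℝ} (ht : |t| < 1) :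
    HasSum (fun n => gegenbauerCt n l x * t ^ n) (Real.Gamma l * (1 - 2 * t * x + t ^ 2) ^ (-l)) := by
  have := gnu_finite hl
  set s := √(1 - x ^ 2) with hsd
  have hs : x ^ 2 + s ^ 2 = 1 := by
    rw [Real.sq_sqrt (by nlinarith [hx.1, hx.2])]; ring
  have hm := gm0_pos hl
  have hA : 0 < 1 - t * x := by
    have : |t * x| < 1 := by
      rw [abs_mul]; exact mul_lt_one_of_nonneg_of_lt_one_left (abs_nonneg _) ht (abs_le.2 ⟨hx.1, hx.2⟩)
    linarith [(abs_lt.1 this).2]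
  have hL := lin_integral hl (N := k + 1) (by push_cast; exact hk.symm) hA (-(t * s))
  have h1 : HasSum (fun n : ℕ => ∫ v : ℝ, (((n + k).choose k : ℝ) : ℂ) * ((t : ℂ) * ((x : ℂ) + Complex.I * s * v)) ^ n ∂(gnu l))
      (∫ v : ℝ, ∑' n : ℕ, (((n + k).choose k : ℝ) : ℂ) * ((t : ℂ) * ((x : ℂ) + Complex.I * s * v)) ^ n ∂(gnu l)) := by
    refine hasSum_integral_of_summable_integral_norm ?_ ?_
    · intro n; apply gnu_integrable hl; fun_prop
    · refine Summable.of_nonneg_of_le (fun n => integral_nonneg fun v => norm_nonneg _) (fun n => ?_)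
        ((choose_summable k (r := |t|) (by simpa using ht)).mul_right (gm0 l))
      rw [gm0, ← integral_const_mul]
      refine integral_mono_ae ?_ ?_ ?_
      · apply Integrable.norm; apply gnu_integrable hl; fun_prop
      · apply gnu_integrable hl; fun_prop
      · filter_upwards [gnu_ae l] with v hv
        rw [norm_mul, Complex.norm_real, norm_pow, norm_mul, Complex.norm_real, mul_one,
          Real.norm_of_nonneg (by positivity), Real.norm_eq_abs]
        gcongr
        exact mul_le_of_le_one_right (abs_nonneg _) (lap_norm_le hs (Ioo_subset_Icc_self hv))
  have h2 : (∫ v : ℝ, ∑' n : ℕ, (((n + k).choose k : ℝ) : ℂ) * ((t : ℂ) * ((x : ℂ) + Complex.I * s * v)) ^ n ∂(gnu l))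
      = ((gm0 l * (1 - 2 * t * x + t ^ 2) ^ (-l) : ℝ) : ℂ) := by
    rw [show 1 - 2 * t * x + t ^ 2 = (1 - t * x) ^ 2 + (-(t * s)) ^ 2 by linear_combination (-t ^ 2) * hs, ← hL]
    refine integral_congr_ae ?_
    filter_upwards [gnu_ae l] with v hv
    have hn : ‖(t : ℂ) * ((x : ℂ) + Complex.I * s * v)‖ < 1 := by
      rw [norm_mul, Complex.norm_real]
      exact mul_lt_one_of_nonneg_of_lt_one_left (norm_nonneg _) ht (lap_norm_le hs (Ioo_subset_Icc_self hv))
    have := (hasSum_choose_mul_geometric_of_norm_lt_one k hn).tsum_eq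
    simp only [Complex.ofReal_natCast]
    rw [this, one_div]
    congr 2
    push_cast; ring
  rw [h2] at h1
  have h3 := h1.mul_left ((Real.Gamma l / gm0 l : ℝ) : ℂ)
  rw [← Complex.hasSum_ofReal]
  refine hasSum_of_eq h3 (fun n => ?_) ?_
  · rw [Complex.ofReal_mul, gegen_laplace' hl hk hs]
    simp_rw [mul_pow]
    rw [integral_const_mul, integral_const_mul]
    unfold lapI
    push_cast
    ring
  · rw [← Complex.ofReal_mul]
    congr 1; field_simp

lemma zz_mem {x s φ v : ℝ} (hs : x ^ 2 + s ^ 2 = 1) (hv : v ∈ Icc (-1 : ℝ) 1) :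
    x * cos φ + s * sin φ * v ∈ Icc (-1 : ℝ) 1 := by
  have h2 := Real.sin_sq_add_cos_sq φ
  have hv2 : v ^ 2 ≤ 1 := by nlinarith [hv.1, hv.2]
  rw [Set.mem_Icc, ← abs_le]
  apply abs_le_of_sq_le_sq _ (by norm_num)
  have : (x * cos φ + s * sin φ * v) ^ 2 + (x * (sin φ * v) - s * cos φ) ^ 2 = cos φ ^ 2 + (sin φ * v) ^ 2 := by
    linear_combination (cos φ ^ 2 + (sin φ * v) ^ 2) * hs
  nlinarith [sq_nonneg (x * (sin φ * v) - s * cos φ), mul_nonneg (sq_nonneg (sin φ)) (sub_nonneg.2 hv2)]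

/-- Closed form of the basic kernel. -/
lemma kernelF {l : ℝ} (hl : 0 < l) {k : ℕ} (hk : 2 * l = k + 1) {x s : ℝ} (hs : x ^ 2 + s ^ 2 = 1) (φ : ℝ) {t : ℝ} (ht : |t| < 1) :
    HasSum (fun n : ℕ => n.factorial / Real.Gamma (n + 2 * l) * gegenbauerCt n l x * gegenbauerCt n l (cos φ) * t ^ n)
      (Real.Gamma l ^ 2 / (Real.Gamma (2 * l) * gm0 l) *
        ∫ v, (1 - 2 * t * (x * cos φ + s * sin φ * v) + t ^ 2) ^ (-l) ∂(gnu l)) := by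
  have := gnu_finite hl
  have hcont : ∀ n : ℕ, Continuous (fun y => gegenbauerCt n l y) := by
    intro n; simp_rw [← gegP_eval]; exact (gegP l n).continuous
  have h1 : HasSum (fun n : ℕ => ∫ v : ℝ, gegenbauerCt n l (x * cos φ + s * sin φ * v) * t ^ n ∂(gnu l))
      (∫ v : ℝ, ∑' n : ℕ, gegenbauerCt n l (x * cos φ + s * sin φ * v) * t ^ n ∂(gnu l)) := by
    refine hasSum_integral_of_summable_integral_norm ?_ ?_
    · intro n; have := hcont n; apply gnu_integrable hl; fun_prop
    · refine Summable.of_nonneg_of_le (fun n => integral_nonneg fun v => norm_nonneg _) (fun n => ?_)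
        ((choose_summable k (r := |t|) (by simpa using ht)).mul_left (Real.Gamma l * gm0 l))
      rw [gm0, mul_right_comm, ← integral_const_mul]
      refine integral_mono_ae ?_ ?_ ?_
      · have := hcont n; apply Integrable.norm; apply gnu_integrable hl; fun_prop
      · apply gnu_integrable hl; fun_prop
      · filter_upwards [gnu_ae l] with v hv
        rw [norm_mul, norm_pow, Real.norm_eq_abs, Real.norm_eq_abs]
        have := geg_abs_le hl hk (zz_mem (φ := φ) hs (Ioo_subset_Icc_self hv)) n
        calc _ ≤ Real.Gamma l * ((n + k).choose k : ℝ) * |t| ^ n := by gcongr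
          _ = _ := by ring
  have h2 : (∫ v : ℝ, ∑' n : ℕ, gegenbauerCt n l (x * cos φ + s * sin φ * v) * t ^ n ∂(gnu l))
      = Real.Gamma l * ∫ v, (1 - 2 * t * (x * cos φ + s * sin φ * v) + t ^ 2) ^ (-l) ∂(gnu l) := by
    rw [← integral_const_mul]
    refine integral_congr_ae ?_
    filter_upwards [gnu_ae l] with v hv
    exact (geg_genfun hl hk (zz_mem (φ := φ) hs (Ioo_subset_Icc_self hv)) ht).tsum_eq
  rw [h2] at h1
  refine hasSum_of_eq (h1.mul_left (Real.Gamma l / (Real.Gamma (2 * l) * gm0 l))) (fun n => ?_) ?_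
  · rw [geg_prod hl n hs, integral_mul_const]; ring
  · ring

lemma mobius {l : ℝ} {E D : ℝ} (hE : |D| < E) (G : ℝ → ℝ) :
    ∫ v, G v ∂(gnu l) = (E ^ 2 - D ^ 2) ^ l * ∫ v, G ((D + E * v) / (E + D * v)) * (E + D * v) ^ (-(2 * l)) ∂(gnu l) := by
  have hE1 := (abs_lt.1 hE).1
  have hE2 := (abs_lt.1 hE).2
  have hE0 : 0 < E := by linarith
  have hED : 0 < E ^ 2 - D ^ 2 := by nlinarith
  have hden : ∀ v ∈ Ioo (-1 : ℝ) 1, 0 < E + D * v := by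
    intro v hv
    have : |D * v| ≤ |D| := by
      rw [abs_mul]; exact mul_le_of_le_one_right (abs_nonneg _) (abs_le.2 ⟨hv.1.le, hv.2.le⟩)
    linarith [(abs_le.1 this).1]
  set ψ : ℝ → ℝ := fun v => (D + E * v) / (E + D * v) with hψ
  have hinj : InjOn ψ (Ioo (-1) 1) := by
    intro a ha b hb hab
    have h1 := hden a ha
    have h2 := hden b hb
    simp only [hψ] at hab
    rw [div_eq_div_iff h1.ne' h2.ne'] at hab
    have : (E ^ 2 - D ^ 2) * (a - b) = 0 := by linear_combination hab
    rcases mul_eq_zero.1 this with h | h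
    · exact absurd h hED.ne'
    · linarith
  have himg : ψ '' (Ioo (-1) 1) = Ioo (-1) 1 := by
    apply Subset.antisymm
    · rintro _ ⟨v, hv, rfl⟩
      have h1 := hden v hv
      simp only [hψ]
      refine ⟨?_, ?_⟩
      · rw [lt_div_iff₀ h1]; nlinarith [hv.1, hv.2]
      · rw [div_lt_one h1]; nlinarith [hv.1, hv.2]
    · intro w hw
      have h1 : 0 < E - D * w := by
        have := hden (-w) ⟨by linarith [hw.2], by linarith [hw.1]⟩
        linarith
      refine ⟨(E * w - D) / (E - D * w), ⟨?_, ?_⟩, ?_⟩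
      · rw [lt_div_iff₀ h1]; nlinarith [hw.1, hw.2]
      · rw [div_lt_one h1]; nlinarith [hw.1, hw.2]
      · simp only [hψ]
        have h2 : E + D * ((E * w - D) / (E - D * w)) = (E ^ 2 - D ^ 2) / (E - D * w) := by
          field_simp; ring
        rw [h2]
        field_simp
        ring
  have hder : ∀ v ∈ Ioo (-1 : ℝ) 1, HasDerivWithinAt ψ ((E ^ 2 - D ^ 2) / (E + D * v) ^ 2) (Ioo (-1) 1) v := by
    intro v hv
    have h1 : HasDerivAt (fun v => D + E * v) E v := by
      simpa using ((hasDerivAt_id v).const_mul E).const_add D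
    have h2 : HasDerivAt (fun v => E + D * v) D v := by
      simpa using ((hasDerivAt_id v).const_mul D).const_add E
    exact ((h1.div h2 (hden v hv).ne').congr_deriv (by ring)).hasDerivWithinAt
  rw [gnu_integral, gnu_integral]
  conv_lhs => rw [← himg]
  rw [integral_image_eq_integral_abs_deriv_smul measurableSet_Ioo hder hinj, ← integral_const_mul]
  refine setIntegral_congr_fun measurableSet_Ioo fun v hv => ?_
  have h1 := hden v hv
  have hv2 : 0 < 1 - v ^ 2 := by nlinarith [hv.1, hv.2]
  have e1 : 1 - ψ v ^ 2 = (E ^ 2 - D ^ 2) * (1 - v ^ 2) / (E + D * v) ^ 2 := by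
    simp only [hψ]; field_simp; ring
  simp only [smul_eq_mul]
  rw [e1, abs_of_pos (by positivity), Real.div_rpow (by positivity) (by positivity),
    Real.mul_rpow hED.le hv2.le, Real.rpow_neg h1.le, Real.rpow_mul h1.le, Real.rpow_two,
    Real.rpow_sub_one hED.ne', Real.rpow_sub_one (x := (E + D * v) ^ 2) (by positivity)]
  have := Real.rpow_pos_of_pos (x := (E + D * v) ^ 2) (by positivity) l
  simp only [hψ]
  field_simp

lemma mobius_kernel {l : ℝ} {x y sx sy : ℝ} (hx : x ^ 2 + sx ^ 2 = 1) (hy : y ^ 2 + sy ^ 2 = 1)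
    (hc : 0 < x + y) (t : ℝ) :
    ∫ v, (1 - 2 * t * (x * y + sx * sy * v) + t ^ 2) ^ (-l) ∂(gnu l)
      = (x + y) ^ (2 * l) * ∫ v, (1 + t ^ 2 - 2 * t * ((x + y) ^ 2 / (1 + x * y - sx * sy * v) - 1)) ^ (-l)
          * (1 + x * y - sx * sy * v) ^ (-(2 * l)) ∂(gnu l) := by
  have hE0 : 0 < 1 + x * y := by
    have : (1 + x * y) ^ 2 = (x + y) ^ 2 + sx ^ 2 * sy ^ 2 := by
      linear_combination (y ^ 2 - 1) * hx - sx ^ 2 * hy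
    have h3 : 0 < (1 + x * y) ^ 2 := by rw [this]; positivity
    have h4 : 0 ≤ 1 + x * y := by nlinarith [sq_nonneg (x + y), sq_nonneg sx, sq_nonneg sy]
    rcases h4.eq_or_lt with h | h
    · rw [← h] at h3; norm_num at h3
    · exact h
  have hD : (1 + x * y) ^ 2 - (-(sx * sy)) ^ 2 = (x + y) ^ 2 := by
    linear_combination (y ^ 2 - 1) * hx - sx ^ 2 * hy
  have hlt : |-(sx * sy)| < 1 + x * y := by
    apply abs_lt_of_sq_lt_sq _ hE0.le
    nlinarith
  rw [mobius hlt, hD, show ((x + y) ^ 2) ^ l = (x + y) ^ (2 * l) by rw [Real.rpow_mul hc.le, Real.rpow_two]]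
  congr 1
  refine integral_congr_ae ?_
  filter_upwards [gnu_ae l] with v hv
  have hden : 0 < 1 + x * y - sx * sy * v := by
    have : |sx * sy * v| ≤ |-(sx * sy)| := by
      rw [abs_mul, abs_neg]; exact mul_le_of_le_one_right (abs_nonneg _) (abs_le.2 ⟨hv.1.le, hv.2.le⟩)
    linarith [(abs_le.1 this).2]
  rw [show 1 + x * y + -(sx * sy) * v = 1 + x * y - sx * sy * v by ring]
  congr 2
  rw [← hD]
  field_simp
  ring

lemma pow_bernoulli {r d : ℝ} (hr : 0 ≤ r) (hd : 0 ≤ d) (n : ℕ) : n * r ^ (n - 1) * d ≤ (r + d) ^ n := by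
  induction n with
  | zero => simp
  | succ n ih =>
    have h1 : r ^ n ≤ (r + d) ^ n := pow_le_pow_left₀ hr (by linarith) n
    have h2 : (n : ℝ) * r ^ n * d ≤ (r + d) ^ n * r := by
      rcases n with _ | n
      · simp; exact hr
      · simp only [Nat.add_sub_cancel] at ih
        calc _ = (((n + 1 : ℕ) : ℝ) * r ^ n * d) * r := by ring
          _ ≤ _ := by gcongr
    simp only [Nat.add_sub_cancel]
    push_cast
    calc ((n : ℝ) + 1) * r ^ n * d = n * r ^ n * d + r ^ n * d := by ring
      _ ≤ (r + d) ^ n * r + (r + d) ^ n * d := by gcongr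
      _ = _ := by ring

lemma powser_deriv {a : ℕ → ℝ} {R : ℝ} (ha : ∀ r, 0 ≤ r → r < R → Summable (fun n => |a n| * r ^ n))
    {z : ℝ} (hz : |z| < R) :
    Summable (fun n : ℕ => n * a n * z ^ (n - 1)) ∧
    HasDerivAt (fun z => ∑' n, a n * z ^ n) (∑' n : ℕ, n * a n * z ^ (n - 1)) z := by
  set r := (|z| + R) / 2 with hr
  set r' := (r + R) / 2 with hr'
  have hz0 := abs_nonneg z
  have h1 : |z| < r := by linarith
  have h2 : r < r' := by linarith
  have h3 : r' < R := by linarith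
  have hr0 : 0 ≤ r := by linarith
  have hu : Summable (fun n : ℕ => (r' - r)⁻¹ * (|a n| * r' ^ n)) := (ha r' (by linarith) h3).mul_left _
  have hb : ∀ (n : ℕ) (y : ℝ), y ∈ ball (0 : ℝ) r → ‖(n : ℝ) * a n * y ^ (n - 1)‖ ≤ (r' - r)⁻¹ * (|a n| * r' ^ n) := by
    intro n y hy
    have hy' : |y| < r := by simpa using hy
    rw [norm_mul, norm_mul, norm_pow, Real.norm_eq_abs, Real.norm_eq_abs, Real.norm_eq_abs, abs_of_nonneg (by positivity : (0 : ℝ) ≤ n)]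
    have h4 := pow_bernoulli hr0 (by linarith : 0 ≤ r' - r) n
    rw [add_sub_cancel] at h4
    have hd : 0 < r' - r := by linarith
    rw [inv_mul_eq_div, le_div_iff₀ hd]
    calc (n : ℝ) * |a n| * |y| ^ (n - 1) * (r' - r) ≤ n * |a n| * r ^ (n - 1) * (r' - r) := by gcongr
      _ = |a n| * (n * r ^ (n - 1) * (r' - r)) := by ring
      _ ≤ _ := by gcongr
  have hzm : z ∈ ball (0 : ℝ) r := by simpa using h1
  refine ⟨Summable.of_norm_bounded hu fun n => hb n z hzm, ?_⟩
  refine hasDerivAt_tsum_of_isPreconnected hu isOpen_ball (convex_ball _ _).isPreconnected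
    (g := fun n z => a n * z ^ n) (g' := fun n z => n * a n * z ^ (n - 1)) ?_ hb hzm ?_ hzm
  · intro n y _
    exact ((hasDerivAt_pow n y).const_mul (a n)).congr_deriv (by ring)
  · exact Summable.of_norm_bounded (ha |z| hz0 hz) fun n => by simp [abs_mul, abs_pow]

/-- reciprocal gamma -/
noncomputable def rG (s : ℝ) : ℝ := (Real.Gamma s)⁻¹

lemma rG_rec (s : ℝ) : rG s = s * rG (s + 1) := by
  unfold rG
  rcases eq_or_ne s 0 with rfl | h
  · simp
  · rw [Real.Gamma_add_one h, mul_inv, mul_inv_cancel_left₀ h]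

noncomputable def vcoef (β : ℝ) (m : ℕ) : ℝ := rG (m + 1 + β) / m.factorial

noncomputable def vB (β z : ℝ) : ℝ := ∑' m, vcoef β m * z ^ m

lemma vcoef_summable (β r : ℝ) : Summable (fun m => |vcoef β m| * r ^ m) := by
  refine Summable.of_norm_bounded_eventually_nat (Real.summable_pow_div_factorial |r|) ?_
  obtain ⟨M, hM⟩ := exists_nat_ge (1 - β)
  filter_upwards [eventually_ge_atTop M] with m hm
  have h1 : (2 : ℝ) ≤ m + 1 + β := by
    have : (M : ℝ) ≤ m := by exact_mod_cast hm
    linarith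
  have h2 : 1 ≤ Real.Gamma (m + 1 + β) := by
    have h4 := Real.Gamma_strictMonoOn_Ici.monotoneOn (a := 2) (b := m + 1 + β) (by simp) (by simpa using h1) h1
    rwa [Real.Gamma_two] at h4
  have h3 : |rG (m + 1 + β)| ≤ 1 := by
    unfold rG; rw [abs_inv, abs_of_pos (by linarith)]; exact inv_le_one_of_one_le₀ h2
  rw [norm_mul, norm_pow, Real.norm_eq_abs, Real.norm_eq_abs, abs_abs, vcoef, abs_div, Nat.abs_cast, div_mul_eq_mul_div]
  gcongr
  exact mul_le_of_le_one_left (by positivity) h3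

lemma vB_summable (β z : ℝ) : Summable (fun m => vcoef β m * z ^ m) :=
  Summable.of_norm_bounded (vcoef_summable β |z|) fun m => by simp [abs_mul, abs_pow]

lemma vcoef_succ (β : ℝ) (m : ℕ) : ((m + 1 : ℕ) : ℝ) * vcoef β (m + 1) = vcoef (β + 1) m := by
  unfold vcoef
  rw [Nat.factorial_succ]
  push_cast
  rw [show (m : ℝ) + 1 + 1 + β = m + 1 + (β + 1) by ring]
  field_simp

lemma vB_deriv (β z : ℝ) : HasDerivAt (vB β) (vB (β + 1) z) z := by
  obtain ⟨h1, h2⟩ := powser_deriv (a := vcoef β) (R := |z| + 1) (fun r _ _ => vcoef_summable β r) (z := z) (by linarith)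
  refine h2.congr_deriv ?_
  rw [h1.tsum_eq_zero_add]
  simp only [Nat.cast_zero, zero_mul, zero_add, Nat.add_sub_cancel, vcoef_succ]
  rfl

lemma vB_rec (β z : ℝ) : vB (β - 1) z = β * vB β z + z * vB (β + 1) z := by
  obtain ⟨h1, h2⟩ := powser_deriv (a := vcoef β) (R := |z| + 1) (fun r _ _ => vcoef_summable β r) (z := z) (by linarith)
  have e : vB (β + 1) z = ∑' n : ℕ, n * vcoef β n * z ^ (n - 1) := (vB_deriv β z).unique h2
  rw [e, ← tsum_mul_left, vB, vB, ← tsum_mul_left, ← Summable.tsum_add ((vB_summable β z).mul_left _) (h1.mul_left _)]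
  congr 1; ext m
  have h3 : vcoef (β - 1) m = (m + β) * vcoef β m := by
    unfold vcoef
    rw [show (m : ℝ) + 1 + (β - 1) = m + β by ring, rG_rec, show (m : ℝ) + β + 1 = m + 1 + β by ring]
    ring
  rw [h3]
  rcases m with _ | m
  · simp
  · simp only [Nat.add_sub_cancel]; ring

lemma vB_zero (β : ℝ) : vB β 0 = rG (1 + β) := by
  unfold vB
  rw [tsum_eq_single 0]
  · simp [vcoef]
  · intro m hm; simp [hm]

lemma zvB_deriv (β : ℝ) {z : ℝ} (hz : 0 < z) :
    HasDerivAt (fun z => z ^ β * vB β z) (z ^ (β - 1) * vB (β - 1) z) z := by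
  refine ((Real.hasDerivAt_rpow_const (p := β) (Or.inl hz.ne')).mul (vB_deriv β z)).congr_deriv ?_
  rw [vB_rec, Real.rpow_sub_one hz.ne']
  field_simp

lemma besselI_eq (β : ℝ) {x : ℝ} (hx : 0 < x) : besselI β x = (x / 2) ^ β * vB β (x ^ 2 / 4) := by
  unfold besselI vB
  rw [← tsum_mul_left]
  congr 1; ext m
  rw [Real.rpow_add (by positivity), show (x : ℝ) ^ 2 / 4 = (x / 2) ^ 2 by ring, ← pow_mul, vcoef, rG,
    show (2 * (m : ℝ)) = ((2 * m : ℕ) : ℝ) by push_cast; ring, Real.rpow_natCast,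
    show (m : ℝ) + β + 1 = m + 1 + β by ring]
  rw [div_eq_mul_inv, mul_inv]; ring

noncomputable def UB (β z : ℝ) : ℝ := π / sin (π * β) * (vB (-β) z - z ^ β * vB β z)

lemma UB_deriv (β : ℝ) {z : ℝ} (hz : 0 < z) : HasDerivAt (UB β) (-UB (β - 1) z) z := by
  have h := (((vB_deriv (-β) z).sub (zvB_deriv β hz)).const_mul (π / sin (π * β)))
  refine h.congr_deriv ?_
  unfold UB
  rw [show π * (β - 1) = π * β - π by ring, Real.sin_sub_pi, show -(β - 1) = -β + 1 by ring, div_neg]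
  ring

lemma UB_symm (β : ℝ) {z : ℝ} (hz : 0 < z) : UB (-β) z = z ^ (-β) * UB β z := by
  unfold UB
  rw [neg_neg, mul_neg, Real.sin_neg, div_neg, Real.rpow_neg hz.le]
  have := Real.rpow_pos_of_pos hz β
  field_simp
  ring

lemma UB_lim {β : ℝ} (h0 : 0 < β) (h1 : β < 1) : Tendsto (UB β) (nhdsWithin 0 (Ioi 0)) (nhds (Real.Gamma β)) := by
  have hs : 0 < sin (π * β) := Real.sin_pos_of_pos_of_lt_pi (by positivity) (by nlinarith [Real.pi_pos])
  have c1 : ContinuousAt (fun z => π / sin (π * β) * (vB (-β) z - z ^ β * vB β z)) 0 := by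
    have a1 := (vB_deriv (-β) 0).continuousAt
    have a2 := (vB_deriv β 0).continuousAt
    have a3 := Real.continuousAt_rpow_const (0 : ℝ) β (Or.inr h0.le)
    exact continuousAt_const.mul (a1.sub (a3.mul a2))
  have := c1.tendsto
  rw [Real.zero_rpow h0.ne', vB_zero, zero_mul, sub_zero, rG, ← sub_eq_add_neg] at this
  have hG := Real.Gamma_mul_Gamma_one_sub β
  have hp := Real.Gamma_pos_of_pos (by linarith : 0 < 1 - β)
  have h5 : π / sin (π * β) * (Real.Gamma (1 - β))⁻¹ = Real.Gamma β := by
    rw [← hG, mul_inv_cancel_right₀ hp.ne']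
  rw [h5] at this
  exact this.mono_left nhdsWithin_le_nhds

noncomputable def gB (β z : ℝ) : ℝ := ∫ s in Ioi (0 : ℝ), exp (-s - z / s) * s ^ (β - 1)

lemma exp_neg_le_pow (k : ℕ) {u : ℝ} (hu : 0 < u) : exp (-u) ≤ k.factorial / u ^ k := by
  have h := Real.pow_div_factorial_le_exp u hu.le k
  rw [Real.exp_neg, ← one_div, div_le_div_iff₀ (exp_pos _) (by positivity), one_mul]
  rwa [div_le_iff₀ (by positivity), mul_comm] at h

lemma gB_bound (β : ℝ) (k : ℕ) {z s : ℝ} (hz : 0 < z) (hs : 0 < s) :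
    exp (-s - z / s) * s ^ (β - 1) ≤ k.factorial / z ^ k * (exp (-s) * s ^ ((β + k) - 1)) := by
  have h := exp_neg_le_pow k (by positivity : 0 < z / s)
  rw [sub_eq_add_neg, Real.exp_add]
  have hp := Real.rpow_pos_of_pos hs (β - 1)
  calc exp (-s) * exp (-(z / s)) * s ^ (β - 1) ≤ exp (-s) * (k.factorial / (z / s) ^ k) * s ^ (β - 1) := by gcongr
    _ = _ := by
      rw [show (β + k) - 1 = (β - 1) + k by ring, Real.rpow_add hs, Real.rpow_natCast, div_pow]
      field_simp

lemma gB_meas (β z : ℝ) : Measurable (fun s : ℝ => exp (-s - z / s) * s ^ (β - 1)) := by fun_prop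

lemma gB_integrable (β : ℝ) {z : ℝ} (hz : 0 < z) :
    IntegrableOn (fun s => exp (-s - z / s) * s ^ (β - 1)) (Ioi 0) := by
  obtain ⟨k, hk⟩ := exists_nat_gt (-β)
  have h := (Real.GammaIntegral_convergent (s := β + k) (by linarith)).const_mul (k.factorial / z ^ k)
  refine Integrable.mono' h (gB_meas β z).aestronglyMeasurable ?_
  filter_upwards [ae_restrict_mem measurableSet_Ioi] with s hs
  rw [Real.norm_of_nonneg (mul_nonneg (exp_pos _).le (Real.rpow_nonneg (le_of_lt hs) _))]
  exact gB_bound β k hz hs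

lemma gB_deriv (β : ℝ) {z : ℝ} (hz : 0 < z) : HasDerivAt (gB β) (-gB (β - 1) z) z := by
  have h := hasDerivAt_integral_of_dominated_loc_of_deriv_le (μ := volume.restrict (Ioi 0))
    (F := fun z s => exp (-s - z / s) * s ^ (β - 1)) (F' := fun z s => -(exp (-s - z / s) * s ^ (β - 1 - 1)))
    (x₀ := z) (s := Ioi (z / 2)) (bound := fun s => exp (-s - (z / 2) / s) * s ^ (β - 1 - 1))
    (Ioi_mem_nhds (by linarith)) (Eventually.of_forall fun y => (gB_meas β y).aestronglyMeasurable)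
    (gB_integrable β hz) (gB_meas (β - 1) z).neg.aestronglyMeasurable ?_ (gB_integrable (β - 1) (by positivity)) ?_
  · refine h.2.congr_deriv ?_
    rw [integral_neg]; rfl
  · filter_upwards [ae_restrict_mem measurableSet_Ioi] with s hs y hy
    have hs' : 0 < s := hs
    have hy' : z / 2 < y := hy
    rw [norm_neg, Real.norm_of_nonneg (mul_nonneg (exp_pos _).le (Real.rpow_nonneg (le_of_lt hs) _))]
    gcongr
  · filter_upwards [ae_restrict_mem measurableSet_Ioi] with s hs y hy
    have hs' : 0 < s := hs
    have h1 : HasDerivAt (fun y => -s - y / s) (-(1 / s)) y := by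
      simpa using ((hasDerivAt_id y).div_const s).const_sub (-s)
    refine (h1.exp.mul_const (s ^ (β - 1))).congr_deriv ?_
    rw [Real.rpow_sub_one hs'.ne' (β - 1)]
    field_simp

lemma gB_symm (β : ℝ) {z : ℝ} (hz : 0 < z) : gB (-β) z = z ^ (-β) * gB β z := by
  unfold gB
  have h1 := integral_comp_rpow_Ioi (fun s => exp (-s - z / s) * s ^ (β - 1)) (p := -1) (by norm_num)
  have h2 := integral_comp_mul_left_Ioi (fun y => (|(-1 : ℝ)| * y ^ (-1 - 1 : ℝ)) • (exp (-(y ^ (-1 : ℝ)) - z / (y ^ (-1 : ℝ))) * (y ^ (-1 : ℝ)) ^ (β - 1))) 0 (b := z⁻¹) (by positivity)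
  rw [mul_zero, h1] at h2
  rw [inv_inv, smul_eq_mul] at h2
  have h3 : ∫ s in Ioi (0 : ℝ), exp (-s - z / s) * s ^ (β - 1) = z⁻¹ * ∫ x in Ioi (0 : ℝ), (|(-1 : ℝ)| * (z⁻¹ * x) ^ (-1 - 1 : ℝ)) • (exp (-((z⁻¹ * x) ^ (-1 : ℝ)) - z / ((z⁻¹ * x) ^ (-1 : ℝ))) * ((z⁻¹ * x) ^ (-1 : ℝ)) ^ (β - 1)) := by
    rw [h2]; field_simp
  rw [h3, ← integral_const_mul, ← integral_const_mul]
  refine setIntegral_congr_fun measurableSet_Ioi fun x hx => ?_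
  have hx' : 0 < x := hx
  simp only [smul_eq_mul]
  rw [Real.rpow_neg_one, abs_neg, abs_one, mul_inv, inv_inv, one_mul, show z / (z * x⁻¹) = x by field_simp,
    show -(z * x⁻¹) - x = -x - z / x by rw [div_eq_mul_inv]; ring,
    Real.rpow_sub_one (x := z⁻¹ * x) (by positivity), Real.rpow_neg_one,
    Real.mul_rpow hz.le (by positivity), Real.inv_rpow hx'.le, Real.rpow_sub_one hx'.ne', Real.rpow_sub_one hx'.ne',
    Real.rpow_sub_one hz.ne', Real.rpow_neg hx'.le, Real.rpow_neg hz.le]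
  have := Real.rpow_pos_of_pos hz β
  have := Real.rpow_pos_of_pos hx' β
  field_simp

lemma gB_lim {β : ℝ} (h0 : 0 < β) : Tendsto (gB β) (nhdsWithin 0 (Ioi 0)) (nhds (Real.Gamma β)) := by
  rw [Real.Gamma_eq_integral h0]
  refine tendsto_integral_filter_of_dominated_convergence (fun s => exp (-s) * s ^ (β - 1)) ?_ ?_
    (Real.GammaIntegral_convergent h0) ?_
  · exact Eventually.of_forall fun z => (gB_meas β z).aestronglyMeasurable
  · filter_upwards [self_mem_nhdsWithin] with z hz
    have hz' : 0 < z := hz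
    filter_upwards [ae_restrict_mem measurableSet_Ioi] with s hs
    have hs' : 0 < s := hs
    rw [Real.norm_of_nonneg (mul_nonneg (exp_pos _).le (Real.rpow_nonneg (le_of_lt hs) _))]
    gcongr
    have : 0 < z / s := by positivity
    linarith
  · filter_upwards [ae_restrict_mem measurableSet_Ioi] with s hs
    have : ContinuousAt (fun z => exp (-s - z / s) * s ^ (β - 1)) 0 := by fun_prop
    have := this.tendsto
    simp only [zero_div, sub_zero] at this
    exact this.mono_left nhdsWithin_le_nhds

lemma gB_cont {z : ℝ} (hz : 0 < z) (α : ℝ) : ContinuousAt (fun β => gB β z) α := by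
  unfold gB ContinuousAt
  refine tendsto_integral_filter_of_dominated_convergence
    (fun s => exp (-s - z / s) * s ^ ((α - 1) - 1) + exp (-s - z / s) * s ^ ((α + 1) - 1)) ?_ ?_
    ((gB_integrable (α - 1) hz).add (gB_integrable (α + 1) hz)) ?_
  · exact Eventually.of_forall fun β => (gB_meas β z).aestronglyMeasurable
  · filter_upwards [Ioo_mem_nhds (show α - 1 < α by linarith) (show α < α + 1 by linarith)] with β hβ
    filter_upwards [ae_restrict_mem measurableSet_Ioi] with s hs
    have hs' : 0 < s := hs
    rw [Real.norm_of_nonneg (mul_nonneg (exp_pos _).le (Real.rpow_nonneg (le_of_lt hs) _)), ← mul_add]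
    gcongr
    have p1 := Real.rpow_pos_of_pos hs' ((α - 1) - 1)
    have p2 := Real.rpow_pos_of_pos hs' ((α + 1) - 1)
    rcases le_total s 1 with h | h
    · have := Real.rpow_le_rpow_of_exponent_ge hs' h (by linarith [hβ.1] : (α - 1) - 1 ≤ β - 1)
      linarith
    · have := Real.rpow_le_rpow_of_exponent_le h (by linarith [hβ.2] : β - 1 ≤ (α + 1) - 1)
      linarith
  · filter_upwards [ae_restrict_mem measurableSet_Ioi] with s hs
    have hs' : 0 < s := hs
    refine Tendsto.const_mul _ ?_
    exact ((Real.continuousAt_const_rpow hs'.ne').comp (f := fun β => β - 1) (by fun_prop)).tendsto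

/-- base case -/
lemma gB_eq_UB_base {β : ℝ} (h0 : 0 < β) (h1 : β < 1) : ∀ z, 0 < z → gB β z = UB β z := by
  set h : ℝ → ℝ → ℝ := fun β z => gB β z - UB β z with hh
  have hd : ∀ β z, 0 < z → HasDerivAt (h β) (-(h (β - 1) z)) z := by
    intro β z hz
    exact ((gB_deriv β hz).sub (UB_deriv β hz)).congr_deriv (by simp only [hh]; ring)
  have hsym : ∀ β z, 0 < z → h (-β) z = z ^ (-β) * h β z := by
    intro β z hz; simp only [hh]; rw [gB_symm β hz, UB_symm β hz]; ring
  have hlim : ∀ β, 0 < β → β < 1 → Tendsto (h β) (nhdsWithin 0 (Ioi 0)) (nhds 0) := by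
    intro β h0 h1
    have := (gB_lim h0).sub (UB_lim h0 h1)
    rwa [sub_self] at this
  have d1 : ∀ z, 0 < z → HasDerivAt (h β) (-(z ^ (β - 1) * h (1 - β) z)) z := by
    intro z hz
    refine (hd β z hz).congr_deriv ?_
    rw [show β - 1 = -(1 - β) by ring, hsym _ z hz]
  have d2 : ∀ z, 0 < z → HasDerivAt (h (1 - β)) (-(z ^ (-β) * h β z)) z := by
    intro z hz
    refine (hd (1 - β) z hz).congr_deriv ?_
    rw [show 1 - β - 1 = -β by ring, hsym _ z hz]
  set w1 : ℝ → ℝ := vB (-β) with hw1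
  set w2 : ℝ → ℝ := fun z => z ^ (1 - β) * vB (1 - β) z with hw2
  have e1 : ∀ z, 0 < z → HasDerivAt w1 (z ^ (β - 1) * w2 z) z := by
    intro z hz
    refine (vB_deriv (-β) z).congr_deriv ?_
    simp only [hw2]
    rw [← mul_assoc, ← Real.rpow_add hz, show β - 1 + (1 - β) = 0 by ring, Real.rpow_zero, one_mul, neg_add_eq_sub]
  have e2 : ∀ z, 0 < z → HasDerivAt w2 (z ^ (-β) * w1 z) z := by
    intro z hz
    refine (zvB_deriv (1 - β) hz).congr_deriv ?_
    rw [show 1 - β - 1 = -β by ring]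
  have hw1pos : ∀ z, 0 < z → 0 < w1 z := by
    intro z hz
    refine (vB_summable (-β) z).tsum_pos ?_ 0 ?_
    · intro m
      unfold vcoef rG
      have := Real.Gamma_pos_of_pos (by linarith [(by positivity : (0 : ℝ) ≤ m)] : 0 < (m : ℝ) + 1 + -β)
      positivity
    · unfold vcoef rG
      have := Real.Gamma_pos_of_pos (by simp; linarith : 0 < ((0 : ℕ) : ℝ) + 1 + -β)
      positivity
  have constlem : ∀ (f : ℝ → ℝ), (∀ z, 0 < z → HasDerivAt f 0 z) → Tendsto f (nhdsWithin 0 (Ioi 0)) (nhds 0) →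
      ∀ z, 0 < z → f z = 0 := by
    intro f hf hl z hz
    have hc : ∀ y, 0 < y → f y = f z := by
      intro y hy
      exact (convex_Ioi (0 : ℝ)).is_const_of_fderivWithin_eq_zero (𝕜 := ℝ) (f := f)
        (fun y hy => (hf y hy).differentiableAt.differentiableWithinAt)
        (fun y hy => by
          rw [fderivWithin_of_isOpen isOpen_Ioi hy]
          have := (hf y hy).hasFDerivAt.fderiv
          rw [this]; ext; simp) hy hz
    have : Tendsto f (nhdsWithin 0 (Ioi 0)) (nhds (f z)) := by
      refine tendsto_const_nhds.congr' ?_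
      filter_upwards [self_mem_nhdsWithin] with y hy
      exact (hc y hy).symm
    exact tendsto_nhds_unique this hl
  have w1lim : Tendsto w1 (nhdsWithin 0 (Ioi 0)) (nhds (rG (1 + -β))) := by
    have := (vB_deriv (-β) 0).continuousAt.tendsto
    rw [vB_zero] at this
    exact this.mono_left nhdsWithin_le_nhds
  have w2lim : Tendsto w2 (nhdsWithin 0 (Ioi 0)) (nhds 0) := by
    have a2 := (vB_deriv (1 - β) 0).continuousAt
    have a3 := Real.continuousAt_rpow_const (0 : ℝ) (1 - β) (Or.inr (by linarith))
    have := (a3.mul a2).tendsto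
    have h7 : (0 : ℝ) ^ (1 - β) * vB (1 - β) 0 = 0 := by rw [Real.zero_rpow (by linarith : 1 - β ≠ 0), zero_mul]
    simp only [Pi.mul_apply] at this
    rw [h7] at this
    exact this.mono_left nhdsWithin_le_nhds
  have hW : ∀ z, 0 < z → h β z * w2 z + h (1 - β) z * w1 z = 0 := by
    refine constlem (fun z => h β z * w2 z + h (1 - β) z * w1 z) ?_ ?_
    · intro z hz
      refine (((d1 z hz).mul (e2 z hz)).add ((d2 z hz).mul (e1 z hz))).congr_deriv ?_
      ring
    · have := ((hlim β h0 h1).mul w2lim).add ((hlim (1 - β) (by linarith) (by linarith)).mul w1lim)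
      simpa using this
  have hq := constlem (fun z => h β z / w1 z) ?_ ?_
  · intro z hz
    have := hq z hz
    rcases div_eq_zero_iff.1 this with h | h
    · exact sub_eq_zero.1 h
    · exact absurd h (hw1pos z hz).ne'
  · intro z hz
    refine ((d1 z hz).div (e1 z hz) (hw1pos z hz).ne').congr_deriv ?_
    rw [div_eq_zero_iff]; left
    linear_combination (-z ^ (β - 1)) * hW z hz
  · have hG : rG (1 + -β) ≠ 0 := by
      unfold rG; apply inv_ne_zero; exact (Real.Gamma_pos_of_pos (by linarith)).ne'
    have := (hlim β h0 h1).div w1lim hG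
    rw [zero_div] at this
    exact this

lemma gB_eq_UB_down {β : ℝ} (h : ∀ z, 0 < z → gB β z = UB β z) : ∀ z, 0 < z → gB (β - 1) z = UB (β - 1) z := by
  intro z hz
  have h1 := gB_deriv β hz
  have h2 := UB_deriv β hz
  have : gB β =ᶠ[nhds z] UB β := by
    filter_upwards [Ioi_mem_nhds hz] with y hy
    exact h y hy
  have h3 := h1.unique (h2.congr_of_eventuallyEq this)
  linarith

lemma gB_eq_UB_neg {β : ℝ} (h0 : 0 < β) (h1 : β < 1) (n : ℕ) : ∀ z, 0 < z → gB (β - n) z = UB (β - n) z := by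
  induction n with
  | zero => simpa using gB_eq_UB_base h0 h1
  | succ n ih =>
    have := gB_eq_UB_down ih
    rw [show β - (n + 1 : ℕ) = β - n - 1 by push_cast; ring]
    exact this

lemma gB_eq_UB {β : ℝ} (hβ : ∀ n : ℤ, β ≠ n) {z : ℝ} (hz : 0 < z) : gB β z = UB β z := by
  have key : ∀ β : ℝ, (∀ n : ℤ, β ≠ n) → β < 1 → gB β z = UB β z := by
    intro β hβ hlt
    have hf0 : 0 < Int.fract β := by
      rcases (Int.fract_nonneg β).eq_or_lt with h | h
      · exfalso
        refine hβ ⌊β⌋ ?_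
        have := Int.floor_add_fract β
        linarith
      · exact h
    have hfl : ⌊β⌋ ≤ 0 := by
      have : ⌊β⌋ < 1 := Int.floor_lt.2 (by simpa using hlt)
      omega
    obtain ⟨n, hn⟩ := Int.exists_eq_neg_ofNat hfl
    have := gB_eq_UB_neg hf0 (Int.fract_lt_one β) n z hz
    rwa [show Int.fract β - n = β by
      have h := Int.floor_add_fract β
      rw [hn] at h; push_cast at h; linarith] at this
  rcases lt_or_ge β 1 with h | h
  · exact key β hβ h
  · have h2 := key (-β) (fun n hn => hβ (-n) (by push_cast; linarith)) (by linarith)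
    have := gB_symm β hz
    rw [h2, UB_symm β hz] at this
    exact (mul_left_cancel₀ (Real.rpow_pos_of_pos hz _).ne' this).symm

lemma besselK_eq (α : ℝ) {x : ℝ} (hx : 0 < x) :
    besselK α x = (x / 2) ^ (-α) * gB α (x ^ 2 / 4) / 2 := by
  unfold besselK
  have hz : 0 < x ^ 2 / 4 := by positivity
  apply Tendsto.limUnder_eq
  have hc : Tendsto (fun β => (x / 2) ^ (-β) * gB β (x ^ 2 / 4) / 2) (nhdsWithin α {α}ᶜ)
      (nhds ((x / 2) ^ (-α) * gB α (x ^ 2 / 4) / 2)) := by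
    have h1 : ContinuousAt (fun β => (x / 2) ^ (-β) * gB β (x ^ 2 / 4) / 2) α := by
      have h2 := gB_cont hz α
      have h3 : ContinuousAt (fun β : ℝ => (x / 2) ^ (-β)) α :=
        (Real.continuousAt_const_rpow (by positivity)).comp (f := fun β : ℝ => -β) (by fun_prop)
      exact (h3.mul h2).div_const 2
    exact h1.tendsto.mono_left nhdsWithin_le_nhds
  refine hc.congr' ?_
  have hne : ∀ᶠ β : ℝ in nhdsWithin α {α}ᶜ, ∀ n : ℤ, β ≠ n := by
    have hcl : IsClosed ((Int.cast : ℤ → ℝ) '' {n : ℤ | (n : ℝ) ≠ α}) :=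
      Int.isClosedEmbedding_coe_real.isClosedMap _ (isClosed_discrete _)
    have hmem : ((Int.cast : ℤ → ℝ) '' {n : ℤ | (n : ℝ) ≠ α})ᶜ ∈ nhds α := by
      apply hcl.isOpen_compl.mem_nhds
      rintro ⟨n, hn, h⟩
      exact hn h
    filter_upwards [self_mem_nhdsWithin, mem_nhdsWithin_of_mem_nhds hmem] with β hβ h2 n hn
    exact h2 ⟨n, fun h => hβ (by rw [hn, h]; rfl), hn.symm⟩
  filter_upwards [hne] with β hβ
  have hx2 : 0 < x / 2 := by positivity
  rw [gB_eq_UB hβ hz, besselI_eq _ hx, besselI_eq _ hx, UB, show x ^ 2 / 4 = (x / 2) ^ 2 by ring,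
    ← Real.rpow_natCast (x / 2) 2, ← Real.rpow_mul hx2.le, Real.rpow_neg hx2.le, mul_comm β π,
    show ((2 : ℕ) : ℝ) * β = β + β by push_cast; ring, Real.rpow_add hx2]
  have := Real.rpow_pos_of_pos hx2 β
  field_simp

lemma cpowser_deriv {a : ℕ → ℝ} (ha : ∀ r, Summable (fun n => |a n| * r ^ n)) (z : ℂ) :
    Summable (fun n : ℕ => (n : ℂ) * a n * z ^ (n - 1)) ∧
    HasDerivAt (fun z : ℂ => ∑' n, (a n : ℂ) * z ^ n) (∑' n : ℕ, (n : ℂ) * a n * z ^ (n - 1)) z := by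
  set r := ‖z‖ + 1 with hr
  have hr0 : 0 ≤ r := by positivity
  have hu : Summable (fun n : ℕ => (|a n| * (r + 1) ^ n)) := ha (r + 1)
  have hb : ∀ (n : ℕ) (y : ℂ), y ∈ ball (0 : ℂ) r → ‖(n : ℂ) * a n * y ^ (n - 1)‖ ≤ (|a n| * (r + 1) ^ n) := by
    intro n y hy
    have hy' : ‖y‖ < r := by simpa using hy
    rw [norm_mul, norm_mul, norm_pow, Complex.norm_real, Complex.norm_natCast, Real.norm_eq_abs]
    have h4 := pow_bernoulli hr0 (by norm_num : (0 : ℝ) ≤ 1) n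
    calc (n : ℝ) * |a n| * ‖y‖ ^ (n - 1) ≤ n * |a n| * r ^ (n - 1) := by gcongr
      _ = |a n| * (n * r ^ (n - 1) * 1) := by ring
      _ ≤ _ := by gcongr
  have hzm : z ∈ ball (0 : ℂ) r := by simp [hr]
  refine ⟨Summable.of_norm_bounded hu fun n => hb n z hzm, ?_⟩
  refine hasDerivAt_tsum_of_isPreconnected hu isOpen_ball (convex_ball _ _).isPreconnected
    (g := fun n (z : ℂ) => (a n : ℂ) * z ^ n) (g' := fun n (z : ℂ) => (n : ℂ) * a n * z ^ (n - 1)) ?_ hb hzm ?_ hzm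
  · intro n y _
    exact ((hasDerivAt_pow n y).const_mul (a n : ℂ)).congr_deriv (by ring)
  · exact Summable.of_norm_bounded (ha ‖z‖) fun n => by simp

noncomputable def cV (β : ℝ) (w : ℂ) : ℂ := ∑' m, (vcoef β m : ℂ) * w ^ m

lemma cV_summable (β : ℝ) (w : ℂ) : Summable (fun m => (vcoef β m : ℂ) * w ^ m) :=
  Summable.of_norm_bounded (vcoef_summable β ‖w‖) fun m => by simp

lemma cV_ofReal (β w : ℝ) : cV β (w : ℂ) = (vB β w : ℂ) := by
  unfold cV vB
  push_cast
  rfl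

lemma cV_deriv (β : ℝ) (w : ℂ) : HasDerivAt (cV β) (cV (β + 1) w) w := by
  obtain ⟨h1, h2⟩ := cpowser_deriv (a := vcoef β) (fun r => vcoef_summable β r) w
  refine h2.congr_deriv ?_
  rw [h1.tsum_eq_zero_add]
  simp only [Nat.cast_zero, zero_mul, zero_add, Nat.add_sub_cancel]
  unfold cV
  congr 1; ext m
  rw [← vcoef_succ]; push_cast; ring

lemma cV_rec (β : ℝ) (w : ℂ) : cV (β - 1) w = β * cV β w + w * cV (β + 1) w := by
  obtain ⟨h1, h2⟩ := cpowser_deriv (a := vcoef β) (fun r => vcoef_summable β r) w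
  have e : cV (β + 1) w = ∑' n : ℕ, (n : ℂ) * vcoef β n * w ^ (n - 1) := (cV_deriv β w).unique h2
  rw [e, ← tsum_mul_left, cV, cV, ← tsum_mul_left, ← Summable.tsum_add ((cV_summable β w).mul_left _) (h1.mul_left _)]
  congr 1; ext m
  have h3 : vcoef (β - 1) m = (m + β) * vcoef β m := by
    unfold vcoef
    rw [show (m : ℝ) + 1 + (β - 1) = m + β by ring, rG_rec, show (m : ℝ) + β + 1 = m + 1 + β by ring]
    ring
  rw [h3]
  push_cast
  rcases m with _ | m
  · simp
  · simp only [Nat.add_sub_cancel]; ring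

lemma cV_ode (β : ℝ) (w : ℂ) : w * cV (β + 2) w + (β + 1) * cV (β + 1) w - cV β w = 0 := by
  have := cV_rec (β + 1) w
  rw [add_sub_cancel_right, show β + 1 + 1 = β + 2 by ring] at this
  rw [this]; push_cast; ring

lemma cV_zero (β : ℝ) : cV β 0 = rG (1 + β) := by
  have := cV_ofReal β 0
  rw [vB_zero] at this
  simpa using this

lemma cV_cont (β : ℝ) : Continuous (cV β) :=
  continuous_iff_continuousAt.2 fun w => (cV_deriv β w).continuousAt

lemma energy {l : ℝ} (hl : 0 < l) {u u' u'' : ℝ → ℂ} (h1 : ∀ b, HasDerivAt u (u' b) b)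
    (h2 : ∀ b, HasDerivAt u' (u'' b) b) (h3 : ∀ b : ℝ, 0 < b → (b : ℂ) * u'' b + 2 * l * u' b + b * u b = 0)
    {b : ℝ} (hb : 0 ≤ b) : ‖u b‖ ^ 2 + ‖u' b‖ ^ 2 ≤ ‖u 0‖ ^ 2 + ‖u' 0‖ ^ 2 := by
  have hd : ∀ b, HasDerivAt (fun b => ‖u b‖ ^ 2 + ‖u' b‖ ^ 2) (2 * inner ℝ (u b) (u' b) + 2 * inner ℝ (u' b) (u'' b)) b :=
    fun b => (h1 b).norm_sq.add (h2 b).norm_sq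
  have ha : AntitoneOn (fun b => ‖u b‖ ^ 2 + ‖u' b‖ ^ 2) (Ici 0) := by
    refine antitoneOn_of_deriv_nonpos (convex_Ici 0) (fun b _ => (hd b).continuousAt.continuousWithinAt)
      (fun b _ => (hd b).differentiableAt.differentiableWithinAt) ?_
    intro b hb
    rw [interior_Ici] at hb
    have hb' : 0 < b := hb
    rw [(hd b).deriv]
    have hbc : (b : ℂ) ≠ 0 := by exact_mod_cast hb'.ne'
    have e : u'' b = (-(2 * l / b) : ℝ) • u' b - u b := by
      apply mul_left_cancel₀ hbc
      rw [Complex.real_smul]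
      push_cast
      have := h3 b hb'
      field_simp
      linear_combination this
    rw [e, inner_sub_right, inner_smul_right, real_inner_self_eq_norm_sq, real_inner_comm (u' b) (u b)]
    have : 0 ≤ 2 * l / b * ‖u' b‖ ^ 2 := by positivity
    linarith
  exact ha (by simp) (by simpa using hb) hb

lemma cV_J_derivs (β : ℝ) (b : ℝ) : HasDerivAt (fun b : ℝ => cV β (-(b : ℂ) ^ 2 / 4)) (cV (β + 1) (-(b : ℂ) ^ 2 / 4) * (-(b : ℂ) / 2)) b := by
  have h0 : HasDerivAt (fun b : ℝ => -(b : ℂ) ^ 2 / 4) (-(b : ℂ) / 2) b := by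
    have := (((Complex.ofRealCLM.hasDerivAt (x := b)).pow 2).neg.div_const 4)
    refine this.congr_deriv ?_
    simp; ring
  exact (cV_deriv β _).comp b h0

lemma cV_J_derivs2 (β : ℝ) (b : ℝ) : HasDerivAt (fun b : ℝ => cV (β + 1) (-(b : ℂ) ^ 2 / 4) * (-(b : ℂ) / 2))
    (cV (β + 2) (-(b : ℂ) ^ 2 / 4) * ((b : ℂ) ^ 2 / 4) - cV (β + 1) (-(b : ℂ) ^ 2 / 4) / 2) b := by
  have h0 : HasDerivAt (fun b : ℝ => -(b : ℂ) / 2) (-1 / 2) b := by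
    have := (((Complex.ofRealCLM.hasDerivAt (x := b))).neg.div_const 2)
    refine this.congr_deriv ?_
    simp
  refine ((cV_J_derivs (β + 1) b).mul h0).congr_deriv ?_
  rw [show β + 1 + 1 = β + 2 by ring]; ring

lemma cV_J_ode (l : ℝ) (b : ℝ) : (b : ℂ) * (cV (l - 1 / 2 + 2) (-(b : ℂ) ^ 2 / 4) * ((b : ℂ) ^ 2 / 4) - cV (l - 1 / 2 + 1) (-(b : ℂ) ^ 2 / 4) / 2)
      + 2 * l * (cV (l - 1 / 2 + 1) (-(b : ℂ) ^ 2 / 4) * (-(b : ℂ) / 2)) + b * cV (l - 1 / 2) (-(b : ℂ) ^ 2 / 4) = 0 := by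
  have := cV_ode (l - 1 / 2) (-(b : ℂ) ^ 2 / 4)
  push_cast at this
  linear_combination (-(b : ℂ)) * this

lemma cV_J_bound {l : ℝ} (hl : 0 < l) {b : ℝ} (hb : 0 ≤ b) : ‖cV (l - 1 / 2) (-(b : ℂ) ^ 2 / 4)‖ ≤ rG (l + 1 / 2) := by
  have h := energy hl (cV_J_derivs (l - 1 / 2)) (cV_J_derivs2 (l - 1 / 2)) (fun b _ => cV_J_ode l b) hb
  have hp : 0 < rG (l + 1 / 2) := by
    unfold rG; have := Real.Gamma_pos_of_pos (by positivity : 0 < l + 1 / 2); positivity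
  simp only [Complex.ofReal_zero, neg_zero, zero_div, mul_zero, norm_zero] at h
  rw [show -(0 : ℂ) ^ 2 / 4 = 0 by norm_num, cV_zero, Complex.norm_real, show 1 + (l - 1 / 2) = l + 1 / 2 by ring,
    Real.norm_of_nonneg hp.le] at h
  apply le_of_sq_le_sq _ hp.le
  nlinarith [sq_nonneg ‖cV (l - 1 / 2 + 1) (-(b : ℂ) ^ 2 / 4) * (-(b : ℂ) / 2)‖]

lemma bessel_prod {l : ℝ} (hl : 0 < l) (a : ℂ) {b : ℝ} (hb : 0 ≤ b) :
    ∫ v : ℝ, cV (l - 1 / 2) (-(a ^ 2 + (b : ℂ) ^ 2 - 2 * a * b * v) / 4) ∂(gnu l)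
      = ((gm0 l * Real.Gamma (l + 1 / 2) : ℝ) : ℂ) * cV (l - 1 / 2) (-a ^ 2 / 4) * cV (l - 1 / 2) (-(b : ℂ) ^ 2 / 4) := by
  set β := l - 1 / 2 with hβ
  have := gnu_finite hl
  have hW : ∀ b v : ℝ, HasDerivAt (fun b : ℝ => -(a ^ 2 + (b : ℂ) ^ 2 - 2 * a * b * v) / 4) (-((b : ℂ) - a * v) / 2) b := by
    intro b v
    have h := ((((Complex.ofRealCLM.hasDerivAt (x := b)).pow 2).const_add (a ^ 2)).sub
      (((Complex.ofRealCLM.hasDerivAt (x := b)).const_mul (2 * a)).mul_const (v : ℂ))).neg.div_const 4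
    refine h.congr_deriv ?_
    simp; ring
  have hW' : ∀ b v : ℝ, HasDerivAt (fun b : ℝ => -((b : ℂ) - a * v) / 2) (-1 / 2) b := by
    intro b v
    have h := ((Complex.ofRealCLM.hasDerivAt (x := b)).sub_const (a * v)).neg.div_const 2
    refine h.congr_deriv ?_
    simp
  have hV1 : ∀ (β : ℝ) (b v : ℝ), HasDerivAt (fun b : ℝ => cV β (-(a ^ 2 + (b : ℂ) ^ 2 - 2 * a * b * v) / 4))
      (cV (β + 1) (-(a ^ 2 + (b : ℂ) ^ 2 - 2 * a * b * v) / 4) * (-((b : ℂ) - a * v) / 2)) b :=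
    fun β b v => (cV_deriv β _).comp b (hW b v)
  have hV2 : ∀ (b v : ℝ), HasDerivAt (fun b : ℝ => cV (β + 1) (-(a ^ 2 + (b : ℂ) ^ 2 - 2 * a * b * v) / 4) * (-((b : ℂ) - a * v) / 2))
      (cV (β + 1 + 1) (-(a ^ 2 + (b : ℂ) ^ 2 - 2 * a * b * v) / 4) * (-((b : ℂ) - a * v) / 2) * (-((b : ℂ) - a * v) / 2)
        + cV (β + 1) (-(a ^ 2 + (b : ℂ) ^ 2 - 2 * a * b * v) / 4) * (-1 / 2)) b :=
    fun b v => (hV1 (β + 1) b v).mul (hW' b v)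
  have c0 := cV_cont β
  have c1 := cV_cont (β + 1)
  have c2 := cV_cont (β + 1 + 1)
  set H : ℝ → ℂ := fun b => ∫ v : ℝ, cV β (-(a ^ 2 + (b : ℂ) ^ 2 - 2 * a * b * v) / 4) ∂(gnu l) with hH
  set H' : ℝ → ℂ := fun b => ∫ v : ℝ, cV (β + 1) (-(a ^ 2 + (b : ℂ) ^ 2 - 2 * a * b * v) / 4) * (-((b : ℂ) - a * v) / 2) ∂(gnu l) with hH'
  set H'' : ℝ → ℂ := fun b => ∫ v : ℝ, (cV (β + 1 + 1) (-(a ^ 2 + (b : ℂ) ^ 2 - 2 * a * b * v) / 4) * (-((b : ℂ) - a * v) / 2) * (-((b : ℂ) - a * v) / 2)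
        + cV (β + 1) (-(a ^ 2 + (b : ℂ) ^ 2 - 2 * a * b * v) / 4) * (-1 / 2)) ∂(gnu l) with hH''
  have d1 : ∀ b, HasDerivAt H (H' b) b := by
    intro b
    refine gnu_hasDerivAt hl (F := fun (b v : ℝ) => cV β (-(a ^ 2 + (b : ℂ) ^ 2 - 2 * a * b * v) / 4))
      (F' := fun (b v : ℝ) => cV (β + 1) (-(a ^ 2 + (b : ℂ) ^ 2 - 2 * a * b * v) / 4) * (-((b : ℂ) - a * v) / 2))
      one_pos (fun y _ v _ => hV1 β y v) ?_ ?_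
    · intro y _; apply Continuous.continuousOn; fun_prop
    · apply Continuous.continuousOn; unfold Function.uncurry; fun_prop
  have d2 : ∀ b, HasDerivAt H' (H'' b) b := by
    intro b
    refine gnu_hasDerivAt hl (F := fun (b v : ℝ) => cV (β + 1) (-(a ^ 2 + (b : ℂ) ^ 2 - 2 * a * b * v) / 4) * (-((b : ℂ) - a * v) / 2))
      (F' := fun (b v : ℝ) => cV (β + 1 + 1) (-(a ^ 2 + (b : ℂ) ^ 2 - 2 * a * b * v) / 4) * (-((b : ℂ) - a * v) / 2) * (-((b : ℂ) - a * v) / 2)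
        + cV (β + 1) (-(a ^ 2 + (b : ℂ) ^ 2 - 2 * a * b * v) / 4) * (-1 / 2))
      one_pos (fun y _ v _ => hV2 y v) ?_ ?_
    · intro y _; apply Continuous.continuousOn; fun_prop
    · apply Continuous.continuousOn; unfold Function.uncurry; fun_prop
  have ode : ∀ b : ℝ, (b : ℂ) * H'' b + 2 * l * H' b + b * H b = 0 := by
    intro b
    have bp := gnu_byparts hl (g := fun v : ℝ => cV (β + 1) (-(a ^ 2 + (b : ℂ) ^ 2 - 2 * a * b * v) / 4))
      (g' := fun v : ℝ => cV (β + 1 + 1) (-(a ^ 2 + (b : ℂ) ^ 2 - 2 * a * b * v) / 4) * (a * b / 2)) (by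
        intro v _
        have h0 : HasDerivAt (fun v : ℝ => -(a ^ 2 + (b : ℂ) ^ 2 - 2 * a * b * v) / 4) (a * b / 2) v := by
          have h := (((Complex.ofRealCLM.hasDerivAt (x := v)).const_mul (2 * a * b)).const_sub (a ^ 2 + (b : ℂ) ^ 2)).neg.div_const 4
          refine h.congr_deriv ?_
          simp; ring
        exact (cV_deriv (β + 1) _).comp v h0) (by fun_prop)
    simp only [hH, hH', hH'']
    rw [← integral_const_mul, ← integral_const_mul, ← integral_const_mul, ← integral_add, ← integral_add]
    · rw [← mul_zero (-a / 2), ← bp, ← integral_const_mul]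
      congr 1; ext v
      have h1 := cV_ode β (-(a ^ 2 + (b : ℂ) ^ 2 - 2 * a * b * v) / 4)
      rw [show β + 2 = β + 1 + 1 by ring] at h1
      set V2 := cV (β + 1 + 1) (-(a ^ 2 + (b : ℂ) ^ 2 - 2 * a * b * v) / 4)
      set V1 := cV (β + 1) (-(a ^ 2 + (b : ℂ) ^ 2 - 2 * a * b * v) / 4)
      rw [hβ] at h1
      push_cast at h1 ⊢
      linear_combination (-(b : ℂ)) * h1
    all_goals (apply gnu_integrable hl; fun_prop)
  set C : ℂ := ((gm0 l * Real.Gamma (l + 1 / 2) : ℝ) : ℂ) * cV β (-a ^ 2 / 4) with hC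
  have hG := Real.Gamma_pos_of_pos (by positivity : 0 < l + 1 / 2)
  have u0 : H 0 - C * cV β (-((0 : ℝ) : ℂ) ^ 2 / 4) = 0 := by
    simp only [hH, hC]
    rw [show -((0 : ℝ) : ℂ) ^ 2 / 4 = 0 by norm_num, cV_zero, rG, show 1 + β = l + 1 / 2 by rw [hβ]; ring]
    have : ∀ v : ℝ, (-(a ^ 2 + ((0 : ℝ) : ℂ) ^ 2 - 2 * a * ((0 : ℝ) : ℂ) * v) / 4) = -a ^ 2 / 4 := by
      intro v; simp
    simp_rw [this]
    rw [integral_const]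
    have hm : (gnu l).real univ = gm0 l := by simp [gm0]
    rw [hm, Complex.real_smul]
    have hGc : (Real.Gamma (l + 1 / 2) : ℂ) ≠ 0 := by exact_mod_cast hG.ne'
    rw [Complex.ofReal_mul, Complex.ofReal_inv]
    have h5 := mul_inv_cancel₀ hGc
    linear_combination (-(gm0 l : ℂ) * cV β (-a ^ 2 / 4)) * h5
  have u1 : H' 0 - C * (cV (β + 1) (-((0 : ℝ) : ℂ) ^ 2 / 4) * (-((0 : ℝ) : ℂ) / 2)) = 0 := by
    simp only [hH']
    have : ∀ v : ℝ, cV (β + 1) (-(a ^ 2 + ((0 : ℝ) : ℂ) ^ 2 - 2 * a * ((0 : ℝ) : ℂ) * v) / 4) * (-(((0 : ℝ) : ℂ) - a * v) / 2)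
        = (cV (β + 1) (-a ^ 2 / 4) * a / 2) * v := by
      intro v; simp; ring
    simp_rw [this]
    rw [integral_const_mul, gnu_m1 hl]; simp
  have h := energy hl (u := fun b => H b - C * cV β (-(b : ℂ) ^ 2 / 4))
    (u' := fun b => H' b - C * (cV (β + 1) (-(b : ℂ) ^ 2 / 4) * (-(b : ℂ) / 2)))
    (u'' := fun b => H'' b - C * (cV (β + 2) (-(b : ℂ) ^ 2 / 4) * ((b : ℂ) ^ 2 / 4) - cV (β + 1) (-(b : ℂ) ^ 2 / 4) / 2))
    (fun b => (d1 b).sub ((cV_J_derivs β b).const_mul C)) (fun b => (d2 b).sub ((cV_J_derivs2 β b).const_mul C))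
    (fun b _ => by
      have h1 := ode b
      have h2 := cV_J_ode l b
      rw [← hβ] at h2
      linear_combination h1 - C * h2) hb
  simp only [u0, u1, norm_zero] at h
  have h2 : ‖H b - C * cV β (-(b : ℂ) ^ 2 / 4)‖ ^ 2 ≤ 0 := by
    nlinarith [sq_nonneg ‖H' b - C * (cV (β + 1) (-(b : ℂ) ^ 2 / 4) * (-(b : ℂ) / 2))‖]
  have h3 : ‖H b - C * cV β (-(b : ℂ) ^ 2 / 4)‖ = 0 := by
    have := le_antisymm h2 (by positivity)
    exact pow_eq_zero_iff (by norm_num) |>.1 this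
  exact sub_eq_zero.1 (norm_eq_zero.1 h3)

lemma besselJt_eq (α x : ℝ) : besselJt α x = vB α (-(x ^ 2) / 4) := by
  unfold besselJt vB
  congr 1; ext m
  rw [show -(x ^ 2) / 4 = (-1) * (x / 2) ^ 2 by ring, mul_pow, ← pow_mul, vcoef, rG,
    show (m : ℝ) + α + 1 = m + 1 + α by ring, div_eq_mul_inv, div_eq_mul_inv, mul_inv]
  ring

lemma besselIt_eq (α x : ℝ) : besselIt α x = vB α (x ^ 2 / 4) := by
  unfold besselIt vB
  congr 1; ext m
  rw [show x ^ 2 / 4 = (x / 2) ^ 2 by ring, ← pow_mul, vcoef, rG,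
    show (m : ℝ) + α + 1 = m + 1 + α by ring, div_eq_mul_inv, div_eq_mul_inv, mul_inv]
  ring

lemma vB_J_bound {l : ℝ} (hl : 0 < l) (x : ℝ) : |vB (l - 1 / 2) (-(x ^ 2) / 4)| ≤ rG (l + 1 / 2) := by
  have h := cV_J_bound hl (abs_nonneg x)
  have e : -((|x| : ℝ) : ℂ) ^ 2 / 4 = ((-(x ^ 2) / 4 : ℝ) : ℂ) := by
    rw [← sq_abs x]; push_cast; ring
  rw [e, cV_ofReal, Complex.norm_real, Real.norm_eq_abs] at h
  exact h

lemma vcoef_nonneg {l : ℝ} (hl : 0 < l) (m : ℕ) : 0 ≤ vcoef (l - 1 / 2) m := by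
  unfold vcoef rG
  have := Real.Gamma_pos_of_pos (by have : (0:ℝ) ≤ m := Nat.cast_nonneg m
                                    linarith : 0 < (m : ℝ) + 1 + (l - 1 / 2))
  positivity

lemma vB_I_bound {l : ℝ} (hl : 1 / 2 ≤ l) (x : ℝ) :
    |vB (l - 1 / 2) (x ^ 2 / 4)| ≤ (1 + rG (l + 1 / 2)) * exp |x| := by
  have hr : 0 < rG (l + 1 / 2) := by
    unfold rG; have := Real.Gamma_pos_of_pos (by positivity : 0 < l + 1 / 2); positivity
  have hG : ∀ m : ℕ, rG (m + 1 + (l - 1 / 2)) ≤ (1 + rG (l + 1 / 2)) * (m.factorial : ℝ)⁻¹ := by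
    intro m
    rcases Nat.eq_zero_or_pos m with rfl | hm
    · rw [Nat.cast_zero, show (0:ℝ) + 1 + (l - 1 / 2) = l + 1 / 2 by ring]; simp only [Nat.factorial_zero, Nat.cast_one, inv_one]; linarith
    · have h1 : (1 : ℝ) ≤ m := by exact_mod_cast hm
      have h2 : Real.Gamma (m + 1) ≤ Real.Gamma (m + 1 + (l - 1 / 2)) :=
        Real.Gamma_strictMonoOn_Ici.monotoneOn (by simp; linarith) (by simp; linarith) (by linarith)
      rw [Real.Gamma_nat_eq_factorial] at h2
      have h3 : rG (m + 1 + (l - 1 / 2)) ≤ (m.factorial : ℝ)⁻¹ := by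
        unfold rG; exact inv_anti₀ (by positivity) h2
      have : 0 < (m.factorial : ℝ)⁻¹ := by positivity
      nlinarith
  have hc := (Real.hasSum_cosh x).mul_left (1 + rG (l + 1 / 2))
  have h0 : 0 ≤ vB (l - 1 / 2) (x ^ 2 / 4) :=
    tsum_nonneg fun m => mul_nonneg (vcoef_nonneg (by linarith) m) (by positivity)
  rw [abs_of_nonneg h0]
  have h1 : vB (l - 1 / 2) (x ^ 2 / 4) ≤ (1 + rG (l + 1 / 2)) * cosh x := by
    rw [← hc.tsum_eq]
    refine Summable.tsum_le_tsum (fun m => ?_) (vB_summable _ _) hc.summable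
    have h2 : ((2 * m).factorial : ℝ) ≤ 4 ^ m * m.factorial * m.factorial := by
      have h3 := Nat.choose_le_two_pow (2 * m) m
      have h4 := Nat.choose_mul_factorial_mul_factorial (show m ≤ 2 * m by omega)
      rw [show 2 * m - m = m by omega] at h4
      rw [← h4, show (4 : ℝ) = 2 ^ 2 by norm_num, ← pow_mul]
      push_cast
      gcongr
      exact_mod_cast h3
    have h5 := hG m
    have h6 : vcoef (l - 1 / 2) m ≤ (1 + rG (l + 1 / 2)) * (m.factorial : ℝ)⁻¹ / m.factorial := by
      unfold vcoef; gcongr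
    have h7 : (0:ℝ) < (2 * m).factorial := by positivity
    calc vcoef (l - 1 / 2) m * (x ^ 2 / 4) ^ m ≤ (1 + rG (l + 1 / 2)) * (m.factorial : ℝ)⁻¹ / m.factorial * (x ^ 2 / 4) ^ m := by gcongr
      _ = (1 + rG (l + 1 / 2)) * (x ^ (2 * m) / (4 ^ m * m.factorial * m.factorial)) := by
        rw [div_pow, ← pow_mul]; field_simp
      _ ≤ (1 + rG (l + 1 / 2)) * (x ^ (2 * m) / (2 * m).factorial) := by
        have : 0 ≤ x ^ (2 * m) := by rw [pow_mul]; positivity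
        gcongr
  refine h1.trans ?_
  gcongr
  rw [← Real.cosh_abs, Real.cosh_eq]
  have : exp (-|x|) ≤ exp |x| := by gcongr; linarith [abs_nonneg x]
  linarith

lemma gauss_mom {c ρ : ℝ} (hc : 0 < c) (hρ : 0 < ρ) :
    IntegrableOn (fun x : ℝ => x ^ (2 * c - 1) * exp (-ρ * x ^ 2)) (Ioi 0) ∧
    ∫ x in Ioi (0 : ℝ), x ^ (2 * c - 1) * exp (-ρ * x ^ 2) = ρ ^ (-c) * Real.Gamma c / 2 := by
  constructor
  · exact integrableOn_rpow_mul_exp_neg_mul_sq hρ (by linarith)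
  · have h := integral_rpow_mul_exp_neg_mul_rpow (p := 2) (q := 2 * c - 1) (b := ρ) (by norm_num) (by linarith) hρ
    simp only [Real.rpow_two] at h
    rw [h, show -(2 * c - 1 + 1) / 2 = -c by ring, show (2 * c - 1 + 1) / 2 = c by ring]
    ring

lemma gauss_laplace {l ρ : ℝ} (hl : 0 < l) (hρ : 0 < ρ) (G : ℂ) :
    ∫ x in Ioi (0 : ℝ), ((x ^ (2 * l) * exp (-ρ * x ^ 2) : ℝ) : ℂ) * cV (l - 1 / 2) (-(x : ℂ) ^ 2 * G / 4)
      = ((ρ ^ (-(l + 1 / 2)) / 2 : ℝ) : ℂ) * Complex.exp (-G / (4 * ρ)) := by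
  have hm : ∀ m : ℕ, (0:ℝ) < m + (l + 1 / 2) := fun m => by positivity
  have hpt : ∀ (m : ℕ), ∀ x ∈ Ioi (0:ℝ), x ^ (2 * (m + (l + 1 / 2)) - 1) = x ^ (2 * l) * (x ^ 2) ^ m := by
    intro m x hx
    rw [← pow_mul, ← Real.rpow_natCast, ← Real.rpow_add hx]; congr 1; push_cast; ring
  set F : ℕ → ℝ → ℂ := fun m x => (((vcoef (l - 1 / 2) m : ℂ) * (-G / 4) ^ m)) *
    ((x ^ (2 * (m + (l + 1 / 2)) - 1) * exp (-ρ * x ^ 2) : ℝ) : ℂ) with hF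
  have hFi : ∀ m, Integrable (F m) (volume.restrict (Ioi 0)) := fun m =>
    ((gauss_mom (hm m) hρ).1.ofReal).const_mul _
  have hco : ∀ m : ℕ, vcoef (l - 1 / 2) m * (ρ ^ (-(m + (l + 1 / 2))) * Real.Gamma (m + (l + 1 / 2)) / 2)
      = (ρ ^ (-(l + 1 / 2)) / 2) * ((ρ⁻¹) ^ m / m.factorial) := by
    intro m
    have hg := (Real.Gamma_pos_of_pos (hm m)).ne'
    rw [vcoef, rG, show (m : ℝ) + 1 + (l - 1 / 2) = m + (l + 1 / 2) by ring, neg_add, Real.rpow_add hρ,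
      Real.rpow_neg hρ.le, Real.rpow_natCast, inv_pow]
    field_simp
  have hIntg : ∀ m, ∫ x in Ioi (0:ℝ), F m x = ((ρ ^ (-(l + 1 / 2)) / 2 : ℝ) : ℂ) * ((-G / (4 * ρ)) ^ m / m.factorial) := by
    intro m
    simp only [hF]
    rw [integral_const_mul, integral_complex_ofReal, (gauss_mom (hm m) hρ).2]
    have h := congrArg (fun r : ℝ => (r : ℂ)) (hco m)
    rw [Complex.ofReal_mul] at h
    rw [mul_right_comm, h]
    push_cast
    rw [show -G / (4 * (ρ:ℂ)) = (ρ:ℂ)⁻¹ * (-G / 4) by field_simp, mul_pow]; ring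
  have hnorm : ∀ m, ∫ x in Ioi (0:ℝ), ‖F m x‖ = (ρ ^ (-(l + 1 / 2)) / 2) * ((‖G‖ / (4 * ρ)) ^ m / m.factorial) := by
    intro m
    simp only [hF, norm_mul]
    rw [integral_const_mul]
    have : ∫ x in Ioi (0:ℝ), ‖((x ^ (2 * (m + (l + 1 / 2)) - 1) * exp (-ρ * x ^ 2) : ℝ) : ℂ)‖
        = ρ ^ (-(m + (l + 1 / 2))) * Real.Gamma (m + (l + 1 / 2)) / 2 := by
      rw [← (gauss_mom (hm m) hρ).2]
      refine setIntegral_congr_fun measurableSet_Ioi fun x hx => ?_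
      have hx' : 0 < x := hx
      rw [Complex.norm_real, Real.norm_of_nonneg (by positivity)]
    rw [this, Complex.norm_real, Real.norm_of_nonneg (vcoef_nonneg hl m), norm_pow, mul_right_comm, hco]
    rw [norm_div, norm_neg, show ‖G‖ / (4 * ρ) = ρ⁻¹ * (‖G‖ / 4) by field_simp, mul_pow]; norm_num; ring
  have hsn : Summable fun m => ∫ x in Ioi (0:ℝ), ‖F m x‖ := by
    simp_rw [hnorm]
    exact (Real.summable_pow_div_factorial _).mul_left _
  have hsum : ∀ x ∈ Ioi (0:ℝ), HasSum (fun m => F m x) (((x ^ (2 * l) * exp (-ρ * x ^ 2) : ℝ) : ℂ) * cV (l - 1 / 2) (-(x : ℂ) ^ 2 * G / 4)) := by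
    intro x hx
    refine hasSum_of_eq ((cV_summable (l - 1 / 2) (-(x : ℂ) ^ 2 * G / 4)).hasSum.mul_left ((x ^ (2 * l) * exp (-ρ * x ^ 2) : ℝ) : ℂ)) (fun m => ?_) rfl
    simp only [hF]
    rw [hpt m x hx, show -(x : ℂ) ^ 2 * G / 4 = (x:ℂ) ^ 2 * (-G / 4) by ring, mul_pow]
    push_cast; ring
  have hae : ∀ᵐ x ∂(volume.restrict (Ioi (0:ℝ))), ∑' m, F m x = ((x ^ (2 * l) * exp (-ρ * x ^ 2) : ℝ) : ℂ) * cV (l - 1 / 2) (-(x : ℂ) ^ 2 * G / 4) := by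
    filter_upwards [ae_restrict_mem measurableSet_Ioi] with x hx using (hsum x hx).tsum_eq
  have h := hasSum_integral_of_summable_integral_norm hFi hsn
  rw [integral_congr_ae hae] at h
  simp_rw [hIntg] at h
  refine h.unique ?_
  have h2 := NormedSpace.expSeries_div_hasSum_exp (𝔸 := ℂ) (-G / (4 * ρ))
  rw [← Complex.exp_eq_exp_ℂ] at h2
  exact h2.mul_left _

lemma cV_norm_le {l : ℝ} (hl : 0 < l) {w : ℂ} {r : ℝ} (hw : ‖w‖ ≤ r) : ‖cV (l - 1 / 2) w‖ ≤ vB (l - 1 / 2) r := by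
  unfold cV vB
  refine tsum_of_norm_bounded (vB_summable (l - 1 / 2) r).hasSum fun m => ?_
  rw [norm_mul, norm_pow, Complex.norm_real, Real.norm_of_nonneg (vcoef_nonneg hl m)]
  have := vcoef_nonneg hl m
  gcongr

lemma gauss_vB_int {l ρ : ℝ} (hl : 0 < l) (hρ : 0 < ρ) (M : ℝ) :
    Integrable (fun x : ℝ => x ^ (2 * l) * exp (-ρ * x ^ 2) * vB (l - 1 / 2) (x ^ 2 * M / 4)) (volume.restrict (Ioi 0)) := by
  have h := gauss_laplace hl hρ (-(M : ℂ))
  have h1 : Integrable (fun x : ℝ => ((x ^ (2 * l) * exp (-ρ * x ^ 2) : ℝ) : ℂ) * cV (l - 1 / 2) (-(x : ℂ) ^ 2 * (-(M : ℂ)) / 4)) (volume.restrict (Ioi 0)) := by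
    by_contra hn
    rw [integral_undef hn] at h
    have h3 : ((ρ ^ (-(l + 1 / 2)) / 2 : ℝ) : ℂ) ≠ 0 := by
      have : ρ ^ (-(l + 1 / 2)) / 2 ≠ 0 := by positivity
      exact_mod_cast this
    exact mul_ne_zero h3 (Complex.exp_ne_zero _) h.symm
  have h2 := h1.re
  refine h2.congr (Eventually.of_forall fun x => ?_)
  simp only
  rw [show -(x : ℂ) ^ 2 * (-(M : ℂ)) / 4 = ((x ^ 2 * M / 4 : ℝ) : ℂ) by push_cast; ring, cV_ofReal, ← Complex.ofReal_mul]
  exact Complex.ofReal_re _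

noncomputable def kk (a b v : ℝ) : ℝ := √(a ^ 2 + b ^ 2 - 2 * a * b * v)

noncomputable def GG (p a b : ℝ) (w : ℝ × ℝ) : ℂ :=
  (kk a b w.1 : ℂ) ^ 2 - (p : ℂ) ^ 2 - 2 * Complex.I * p * kk a b w.1 * w.2

noncomputable def PhiB (l p a b x : ℝ) : ℝ :=
  vB (l - 1 / 2) ((p * x) ^ 2 / 4) * vB (l - 1 / 2) (-((a * x) ^ 2) / 4) * vB (l - 1 / 2) (-((b * x) ^ 2) / 4)

lemma kk_cont (a b : ℝ) : Continuous (kk a b) := by unfold kk; fun_prop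

lemma GG_cont (p a b : ℝ) : Continuous (GG p a b) := by
  have := kk_cont a b
  unfold GG; fun_prop

lemma kk_sq {a b v : ℝ} (ha : 0 ≤ a) (hb : 0 ≤ b) (hv : v ∈ Ioo (-1 : ℝ) 1) :
    kk a b v ^ 2 = a ^ 2 + b ^ 2 - 2 * a * b * v := by
  unfold kk
  rw [Real.sq_sqrt]
  have := mul_nonneg ha hb
  nlinarith [sq_nonneg (a - b), hv.2]

lemma GG_norm {p a b : ℝ} (ha : 0 ≤ a) (hb : 0 ≤ b) {w : ℝ × ℝ} (h1 : w.1 ∈ Ioo (-1 : ℝ) 1) (h2 : w.2 ∈ Ioo (-1 : ℝ) 1) :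
    ‖GG p a b w‖ ≤ (a + b + |p|) ^ 2 := by
  have hk0 : 0 ≤ kk a b w.1 := Real.sqrt_nonneg _
  have hk : kk a b w.1 ≤ a + b := by
    have := kk_sq ha hb h1
    apply (sq_le_sq₀ hk0 (by positivity)).1
    have := mul_nonneg ha hb
    nlinarith [h1.1]
  have hv : |w.2| ≤ 1 := abs_le.2 ⟨h2.1.le, h2.2.le⟩
  unfold GG
  refine (norm_sub_le _ _).trans ?_
  have e1 := norm_sub_le ((kk a b w.1 : ℂ) ^ 2) ((p : ℂ) ^ 2)
  have e2 : ‖2 * Complex.I * p * kk a b w.1 * w.2‖ = 2 * |p| * kk a b w.1 * |w.2| := by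
    simp [abs_of_nonneg hk0]
  have e3 : ‖(kk a b w.1 : ℂ) ^ 2‖ = kk a b w.1 ^ 2 := by simp
  have e4 : ‖(p : ℂ) ^ 2‖ = |p| ^ 2 := by simp
  rw [e2]; rw [e3, e4] at e1
  have e5 : 2 * |p| * kk a b w.1 * |w.2| ≤ 2 * |p| * (a + b) * 1 := by gcongr
  have e6 : kk a b w.1 ^ 2 ≤ (a + b) ^ 2 := by gcongr
  nlinarith

lemma gnu2_ae (l : ℝ) (hl : 0 < l) : ∀ᵐ w ∂((gnu l).prod (gnu l)), w.1 ∈ Ioo (-1 : ℝ) 1 ∧ w.2 ∈ Ioo (-1 : ℝ) 1 := by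
  have := gnu_finite hl
  have h1 := Measure.quasiMeasurePreserving_fst (μ := gnu l) (ν := gnu l) |>.ae (gnu_ae l)
  have h2 := Measure.quasiMeasurePreserving_snd (μ := gnu l) (ν := gnu l) |>.ae (gnu_ae l)
  filter_upwards [h1, h2] with w a b using ⟨a, b⟩

lemma prod_cV_int {l : ℝ} (hl : 0 < l) {p a b : ℝ} (ha : 0 ≤ a) (hb : 0 ≤ b) (x : ℝ) :
    Integrable (fun w => cV (l - 1 / 2) (-(x : ℂ) ^ 2 * GG p a b w / 4)) ((gnu l).prod (gnu l)) := by
  have := gnu_finite hl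
  have c := cV_cont (l - 1 / 2)
  have g := GG_cont p a b
  refine Integrable.mono' (integrable_const (vB (l - 1 / 2) (x ^ 2 * (a + b + |p|) ^ 2 / 4)))
    (by fun_prop : Continuous _).aestronglyMeasurable ?_
  filter_upwards [gnu2_ae l hl] with w hw
  apply cV_norm_le hl
  have := GG_norm (p := p) ha hb hw.1 hw.2
  simp only [norm_div, norm_mul, norm_neg, norm_pow, Complex.norm_real, Real.norm_eq_abs, sq_abs]
  norm_num
  gcongr

lemma prod3 {l : ℝ} (hl : 0 < l) {p a b x : ℝ} (ha : 0 ≤ a) (hb : 0 ≤ b) (hx : 0 ≤ x) :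
    ∫ w, cV (l - 1 / 2) (-(x : ℂ) ^ 2 * GG p a b w / 4) ∂((gnu l).prod (gnu l))
      = (((gm0 l * Real.Gamma (l + 1 / 2)) ^ 2 * PhiB l p a b x : ℝ) : ℂ) := by
  have := gnu_finite hl
  rw [integral_prod _ (prod_cV_int hl ha hb x)]
  have h1 : ∀ v : ℝ, v ∈ Ioo (-1 : ℝ) 1 → ∫ v2, cV (l - 1 / 2) (-(x : ℂ) ^ 2 * GG p a b (v, v2) / 4) ∂(gnu l)
      = ((gm0 l * Real.Gamma (l + 1 / 2) * vB (l - 1 / 2) ((p * x) ^ 2 / 4) : ℝ) : ℂ) *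
        cV (l - 1 / 2) (-(((a * x : ℝ) : ℂ) ^ 2 + ((b * x : ℝ) : ℂ) ^ 2 - 2 * ((a * x : ℝ) : ℂ) * ((b * x : ℝ) : ℂ) * v) / 4) := by
    intro v hv
    have h := bessel_prod hl (Complex.I * ((p * x : ℝ) : ℂ)) (b := kk a b v * x) (mul_nonneg (Real.sqrt_nonneg _) hx)
    have e1 : -(Complex.I * ((p * x : ℝ) : ℂ)) ^ 2 / 4 = (((p * x) ^ 2 / 4 : ℝ) : ℂ) := by
      rw [mul_pow, Complex.I_sq]; push_cast; ring
    have e2 : -((kk a b v * x : ℝ) : ℂ) ^ 2 / 4 = -(((a * x : ℝ) : ℂ) ^ 2 + ((b * x : ℝ) : ℂ) ^ 2 - 2 * ((a * x : ℝ) : ℂ) * ((b * x : ℝ) : ℂ) * v) / 4 := by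
      have := congrArg (fun r : ℝ => (r : ℂ)) (kk_sq ha hb hv)
      push_cast at this ⊢
      rw [mul_pow, this]; ring
    rw [e1, e2, cV_ofReal] at h
    rw [Complex.ofReal_mul _ (vB _ _), ← h]
    congr 1; ext v2; congr 1
    unfold GG
    push_cast
    ring_nf
    rw [Complex.I_sq]; ring
  rw [integral_congr_ae ((gnu_ae l).mono h1), integral_const_mul, bessel_prod hl _ (mul_nonneg hb hx)]
  rw [show -((a * x : ℝ) : ℂ) ^ 2 / 4 = ((-((a * x) ^ 2) / 4 : ℝ) : ℂ) by push_cast; ring,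
    show -((b * x : ℝ) : ℂ) ^ 2 / 4 = ((-((b * x) ^ 2) / 4 : ℝ) : ℂ) by push_cast; ring, cV_ofReal, cV_ofReal]
  unfold PhiB
  push_cast; ring

/-- the inner Gaussian integral -/
lemma inner_gauss {l ρ : ℝ} (hl : 0 < l) (hρ : 0 < ρ) {p a b : ℝ} (ha : 0 ≤ a) (hb : 0 ≤ b) :
    (((gm0 l * Real.Gamma (l + 1 / 2)) ^ 2 * ∫ x in Ioi (0 : ℝ), x ^ (2 * l) * exp (-ρ * x ^ 2) * PhiB l p a b x : ℝ) : ℂ)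
      = ((ρ ^ (-(l + 1 / 2)) / 2 : ℝ) : ℂ) * ∫ w, Complex.exp (-GG p a b w / (4 * ρ)) ∂((gnu l).prod (gnu l)) := by
  have := gnu_finite hl
  rw [← integral_const_mul, ← integral_const_mul, ← integral_complex_ofReal]
  simp_rw [← gauss_laplace hl hρ]
  have c := cV_cont (l - 1 / 2)
  have g := GG_cont p a b
  rw [integral_integral_swap]
  · refine setIntegral_congr_fun measurableSet_Ioi fun x hx => ?_
    have hx' : 0 < x := hx
    rw [integral_const_mul, prod3 hl ha hb hx'.le]
    push_cast; ring
  · have hb1 := ((integrable_const (1 : ℝ)).mul_prod (μ := (gnu l).prod (gnu l)) (gauss_vB_int hl hρ ((a + b + |p|) ^ 2)))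
    refine Integrable.mono' hb1 ?_ ?_
    · apply Measurable.aestronglyMeasurable
      unfold Function.uncurry
      have c' := c.measurable
      have g' := g.measurable
      fun_prop
    · have h1 := Measure.quasiMeasurePreserving_fst (μ := (gnu l).prod (gnu l)) (ν := volume.restrict (Ioi (0:ℝ))) |>.ae (gnu2_ae l hl)
      have h2 := Measure.quasiMeasurePreserving_snd (μ := (gnu l).prod (gnu l)) (ν := volume.restrict (Ioi (0:ℝ))) |>.ae (ae_restrict_mem measurableSet_Ioi)
      filter_upwards [h1, h2] with z hz hx
      have hx' : 0 < z.2 := hx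
      have := GG_norm (p := p) ha hb hz.1 hz.2
      simp only [Function.uncurry, one_mul, norm_mul]
      rw [Complex.norm_real, Real.norm_of_nonneg (by positivity)]
      gcongr
      apply cV_norm_le hl
      simp only [norm_div, norm_mul, norm_neg, norm_pow, Complex.norm_real, Real.norm_eq_abs, sq_abs]
      norm_num
      gcongr

lemma PhiB_bound {l : ℝ} (hl : 1 / 2 ≤ l) (p a b : ℝ) {x : ℝ} (hx : 0 ≤ x) :
    |PhiB l p a b x| ≤ (1 + rG (l + 1 / 2)) * rG (l + 1 / 2) * rG (l + 1 / 2) * exp (|p| * x) := by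
  have h0 : 0 < l := by linarith
  have hr : 0 < rG (l + 1 / 2) := by
    unfold rG; have := Real.Gamma_pos_of_pos (by positivity : 0 < l + 1 / 2); positivity
  unfold PhiB
  rw [abs_mul, abs_mul]
  have h1 := vB_I_bound hl (p * x)
  rw [abs_mul, abs_of_nonneg hx] at h1
  have h2 := vB_J_bound h0 (a * x)
  have h3 := vB_J_bound h0 (b * x)
  calc _ ≤ ((1 + rG (l + 1 / 2)) * exp (|p| * x)) * rG (l + 1 / 2) * rG (l + 1 / 2) := by gcongr
    _ = _ := by ring

lemma vB_cont (β : ℝ) : Continuous (vB β) :=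
  continuous_iff_continuousAt.2 fun z => (vB_deriv β z).continuousAt

lemma PhiB_cont (l p a b : ℝ) : Continuous (PhiB l p a b) := by
  have := vB_cont (l - 1 / 2)
  unfold PhiB; fun_prop

lemma exp_bd {q p x s : ℝ} (hq : 0 < q) (hp : |p| < q) (hx : 0 < x) (hs : 0 < s) :
    exp (|p| * x) * exp (-s - q ^ 2 * x ^ 2 / 4 / s)
      ≤ (exp (-((q - |p|) / 2) * x) * exp (-((q - |p|) / (2 * q)) * s)) * (s ^ (1 / 2 : ℝ) * ((√((q - |p|) / (2 * q)) * q / 2)⁻¹ * x⁻¹)) := by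
  set ε := (q - |p|) / (2 * q) with hε
  have hε0 : 0 < ε := div_pos (by linarith) (by linarith)
  have hqp : q - |p| = 2 * q * ε := by rw [hε]; field_simp
  have hp' : |p| = q - 2 * q * ε := by linarith
  set r := √s with hr
  have hr0 : 0 < r := Real.sqrt_pos.2 hs
  have hs' : s = r ^ 2 := (Real.sq_sqrt hs.le).symm
  rw [← Real.sqrt_eq_rpow, ← hr]
  set e := √ε with he
  have he0 : 0 < e := Real.sqrt_pos.2 hε0
  have he' : ε = e ^ 2 := (Real.sq_sqrt hε0.le).symm
  set w := e * q * x / (2 * r) with hw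
  have hw0 : 0 < w := by positivity
  have h1 : exp (-w ^ 2) ≤ w⁻¹ := by
    rw [Real.exp_neg]
    apply inv_anti₀ hw0
    nlinarith [Real.add_one_le_exp (w ^ 2), sq_nonneg (w - 1)]
  have h2 : w⁻¹ = r * ((e * q / 2)⁻¹ * x⁻¹) := by rw [hw]; field_simp
  rw [← h2]
  refine le_trans ?_ (mul_le_mul_of_nonneg_left h1 (by positivity))
  rw [← Real.exp_add, ← Real.exp_add, ← Real.exp_add]
  apply Real.exp_le_exp.2
  have hε1 : ε ≤ 1 / 2 := by
    have : 0 ≤ |p| := abs_nonneg p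
    rw [hp'] at this
    nlinarith
  have h3 : r ^ 2 + q ^ 2 * x ^ 2 / 4 / r ^ 2 ≥ q * x := by
    have : r ^ 2 + q ^ 2 * x ^ 2 / 4 / r ^ 2 - q * x = (r - q * x / (2 * r)) ^ 2 := by field_simp; ring
    nlinarith [sq_nonneg (r - q * x / (2 * r))]
  have h4 : w ^ 2 = ε * (q ^ 2 * x ^ 2 / 4 / r ^ 2) := by rw [hw, he']; field_simp; ring
  rw [hqp, hp', hs', h4]
  nlinarith [mul_le_mul_of_nonneg_left h3 (by linarith : 0 ≤ 1 - ε)]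

lemma swap_xs {l : ℝ} (hl : 1 / 2 ≤ l) {p q : ℝ} (hq : 0 < q) (hp : |p| < q) (a b : ℝ) :
    ∫ x in Ioi (0 : ℝ), x ^ (2 * l) * PhiB l p a b x * gB (l - 1 / 2) (q ^ 2 * x ^ 2 / 4)
      = ∫ s in Ioi (0 : ℝ), exp (-s) * s ^ (l - 3 / 2) *
          ∫ x in Ioi (0 : ℝ), x ^ (2 * l) * exp (-(q ^ 2 / (4 * s)) * x ^ 2) * PhiB l p a b x := by
  have h0 : 0 < l := by linarith
  have hr : 0 < rG (l + 1 / 2) := by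
    unfold rG; have := Real.Gamma_pos_of_pos (by positivity : 0 < l + 1 / 2); positivity
  unfold gB
  simp_rw [← integral_const_mul]
  rw [integral_integral_swap]
  · refine setIntegral_congr_fun measurableSet_Ioi fun s hs => ?_
    have hs' : 0 < s := hs
    refine setIntegral_congr_fun measurableSet_Ioi fun x hx => ?_
    rw [show -s - q ^ 2 * x ^ 2 / 4 / s = -s + -(q ^ 2 / (4 * s)) * x ^ 2 by field_simp; ring, Real.exp_add,
      show l - 1 / 2 - 1 = l - 3 / 2 by ring]
    ring
  · set C := (1 + rG (l + 1 / 2)) * rG (l + 1 / 2) * rG (l + 1 / 2) with hC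
    have hC0 : 0 < C := by positivity
    set ε := (q - |p|) / (2 * q) with hε
    have hε0 : 0 < ε := div_pos (by linarith) (by linarith)
    have hκ : 0 < (q - |p|) / 2 := by linarith
    have i1 := integrableOn_rpow_mul_exp_neg_mul_rpow (p := 1) (s := 2 * l - 1) (b := (q - |p|) / 2) (by linarith) one_pos hκ
    have i2 := integrableOn_rpow_mul_exp_neg_mul_rpow (p := 1) (s := l - 1) (b := ε) (by linarith) one_pos hε0
    simp only [Real.rpow_one] at i1 i2
    have i3 := ((i1.const_mul (C * (√ε * q / 2)⁻¹)).mul_prod i2)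
    refine Integrable.mono' i3 ?_ ?_
    · apply Measurable.aestronglyMeasurable
      unfold Function.uncurry
      have c' := (PhiB_cont l p a b).measurable
      fun_prop
    · have h1 := Measure.quasiMeasurePreserving_fst (μ := volume.restrict (Ioi (0:ℝ))) (ν := volume.restrict (Ioi (0:ℝ))) |>.ae (ae_restrict_mem measurableSet_Ioi)
      have h2 := Measure.quasiMeasurePreserving_snd (μ := volume.restrict (Ioi (0:ℝ))) (ν := volume.restrict (Ioi (0:ℝ))) |>.ae (ae_restrict_mem measurableSet_Ioi)
      filter_upwards [h1, h2] with z hx hs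
      obtain ⟨x, s⟩ := z
      have hx' : 0 < x := hx
      have hs' : 0 < s := hs
      simp only [Function.uncurry, norm_mul, Real.norm_eq_abs]
      rw [abs_of_pos (Real.rpow_pos_of_pos hx' _), abs_of_pos (Real.rpow_pos_of_pos hs' _), abs_of_pos (exp_pos _)]
      have b1 := PhiB_bound hl p a b hx'.le
      have b2 := exp_bd hq hp hx' hs'
      rw [← hC] at b1
      rw [← hε] at b2
      calc x ^ (2 * l) * |PhiB l p a b x| * (exp (-s - q ^ 2 * x ^ 2 / 4 / s) * s ^ (l - 1 / 2 - 1))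
          ≤ x ^ (2 * l) * (C * exp (|p| * x)) * (exp (-s - q ^ 2 * x ^ 2 / 4 / s) * s ^ (l - 1 / 2 - 1)) := by gcongr
        _ = x ^ (2 * l) * C * s ^ (l - 1 / 2 - 1) * (exp (|p| * x) * exp (-s - q ^ 2 * x ^ 2 / 4 / s)) := by ring
        _ ≤ x ^ (2 * l) * C * s ^ (l - 1 / 2 - 1) * ((exp (-((q - |p|) / 2) * x) * exp (-ε * s)) * (s ^ (1 / 2 : ℝ) * ((√ε * q / 2)⁻¹ * x⁻¹))) := by gcongr
        _ = _ := by
          rw [show l - 1 = (l - 1 / 2 - 1) + 1 / 2 by ring, Real.rpow_add hs', Real.rpow_sub_one hx'.ne']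
          ring

lemma lap_norm (k : ℕ) (W : ℂ) {s : ℝ} (hs : 0 ≤ s) :
    ‖(s : ℂ) ^ k * Complex.exp (-(s * W))‖ = s ^ (k : ℝ) * exp (-W.re * s) := by
  rw [norm_mul, norm_pow, Complex.norm_real, Real.norm_of_nonneg hs, Complex.norm_exp, Real.rpow_natCast]
  congr 2
  simp; ring

lemma lap_int_real (k : ℕ) {r : ℝ} (hr : 0 < r) : IntegrableOn (fun s : ℝ => s ^ (k : ℝ) * exp (-r * s)) (Ioi 0) := by
  have i1 := integrableOn_rpow_mul_exp_neg_mul_rpow (p := 1) (s := (k : ℝ)) (b := r) (by have : (0:ℝ) ≤ k := Nat.cast_nonneg k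
                                                                                         linarith) one_pos hr
  simpa only [Real.rpow_one] using i1

lemma lap_int (k : ℕ) {W : ℂ} (hW : 0 < W.re) :
    IntegrableOn (fun s : ℝ => (s : ℂ) ^ k * Complex.exp (-(s * W))) (Ioi 0) := by
  refine Integrable.mono' (lap_int_real k hW) (by fun_prop : Continuous _).aestronglyMeasurable ?_
  filter_upwards [ae_restrict_mem measurableSet_Ioi] with s hs
  exact (lap_norm k W (le_of_lt hs)).le

lemma lap_val (k : ℕ) {W : ℂ} (hW : 0 < W.re) :
    ∫ s in Ioi (0 : ℝ), (s : ℂ) ^ k * Complex.exp (-(s * W)) = k.factorial * (W ^ (k + 1))⁻¹ := by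
  have hW0 : W ≠ 0 := by rintro rfl; simp at hW
  induction k with
  | zero =>
    have h := integral_exp_mul_complex_Ioi (a := -W) (by simpa using hW) 0
    simp only [pow_zero, one_mul]
    rw [show (fun s : ℝ => Complex.exp (-(s * W))) = fun s : ℝ => Complex.exp (-W * s) by ext s; ring_nf]
    rw [h]; simp
  | succ k ih =>
    have hd : ∀ x ∈ Ici (0:ℝ), HasDerivAt (fun s : ℝ => (s : ℂ) ^ (k + 1) * Complex.exp (-(s * W)))
        (((k : ℂ) + 1) * ((x : ℂ) ^ k * Complex.exp (-(x * W))) - W * ((x : ℂ) ^ (k + 1) * Complex.exp (-(x * W)))) x := by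
      intro x _
      have h1 : HasDerivAt (fun z : ℂ => z ^ (k + 1) * Complex.exp (-(z * W))) 
        (((k : ℂ) + 1) * ((x : ℂ) ^ k * Complex.exp (-(x * W))) - W * ((x : ℂ) ^ (k + 1) * Complex.exp (-(x * W)))) (x : ℂ) := by
        have h2 := (hasDerivAt_pow (k + 1) (x : ℂ)).mul ((((hasDerivAt_id (x : ℂ)).mul_const W).neg).cexp)
        refine h2.congr_deriv ?_
        simp; ring
      exact h1.comp_ofReal
    have ht : Tendsto (fun s : ℝ => (s : ℂ) ^ (k + 1) * Complex.exp (-(s * W))) atTop (nhds 0) := by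
      rw [tendsto_zero_iff_norm_tendsto_zero]
      refine (tendsto_rpow_mul_exp_neg_mul_atTop_nhds_zero ((k + 1 : ℕ) : ℝ) W.re hW).congr' ?_
      filter_upwards [eventually_ge_atTop 0] with s hs
      exact (lap_norm (k + 1) W hs).symm
    have i1 := (lap_int k hW).const_mul ((k : ℂ) + 1)
    have i2 := (lap_int (k + 1) hW).const_mul W
    have h := integral_Ioi_of_hasDerivAt_of_tendsto' hd (i1.sub i2) ht
    rw [integral_sub i1 i2, integral_const_mul, integral_const_mul, ih] at h
    simp only [Complex.ofReal_zero, ne_eq, Nat.succ_ne_zero, not_false_eq_true, zero_pow, zero_mul, sub_zero] at h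
    have h3 : ∫ s in Ioi (0 : ℝ), (s : ℂ) ^ (k + 1) * Complex.exp (-(s * W)) = W⁻¹ * (((k : ℂ) + 1) * (k.factorial * (W ^ (k + 1))⁻¹)) := by
      rw [sub_eq_zero.1 h, inv_mul_cancel_left₀ hW0]
    rw [h3, Nat.factorial_succ]
    push_cast
    field_simp
    ring

lemma GG_re (p a b : ℝ) (w : ℝ × ℝ) : (GG p a b w).re = kk a b w.1 ^ 2 - p ^ 2 := by
  unfold GG
  simp [pow_two]

lemma WW_re {p q : ℝ} (hq : 0 < q) (a b : ℝ) (w : ℝ × ℝ) :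
    1 - p ^ 2 / q ^ 2 ≤ (1 + GG p a b w / (q : ℂ) ^ 2).re := by
  have : (1 + GG p a b w / (q : ℂ) ^ 2).re = 1 + (kk a b w.1 ^ 2 - p ^ 2) / q ^ 2 := by
    rw [← Complex.ofReal_pow, Complex.add_re, Complex.div_ofReal_re, GG_re]; simp
  rw [this, sub_div]
  have : 0 ≤ kk a b w.1 ^ 2 / q ^ 2 := by positivity
  linarith

lemma total {l : ℝ} {k : ℕ} (hk : 2 * l = k + 1) {p q : ℝ} (hq : 0 < q) (hp : |p| < q) {a b : ℝ} (ha : 0 ≤ a) (hb : 0 ≤ b) :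
    (gm0 l * Real.Gamma (l + 1 / 2)) ^ 2 *
      ∫ x in Ioi (0 : ℝ), x ^ (2 * l) * PhiB l p a b x * gB (l - 1 / 2) (q ^ 2 * x ^ 2 / 4)
      = ((q ^ 2 / 4) ^ (-(l + 1 / 2)) / 2) * (Real.Gamma (2 * l) *
        (gm0 l * ∫ v, ((1 + (kk a b v ^ 2 - p ^ 2) / q ^ 2) ^ 2 + (-(2 * p * kk a b v / q ^ 2)) ^ 2) ^ (-l) ∂(gnu l))) := by
  have hl : 1 / 2 ≤ l := by have : (0:ℝ) ≤ k := Nat.cast_nonneg k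
                            linarith
  have h0 : 0 < l := by linarith
  have := gnu_finite h0
  have hd : 0 < 1 - p ^ 2 / q ^ 2 := by
    rw [sub_pos, div_lt_one (by positivity)]
    exact sq_lt_sq' (by linarith [neg_abs_le p]) (by linarith [le_abs_self p])
  have g := GG_cont p a b
  have g' := g.measurable
  rw [swap_xs hl hq hp, ← integral_const_mul]
  rw [← Complex.ofReal_inj, ← integral_complex_ofReal]
  have e1 : ∀ s ∈ Ioi (0 : ℝ), ((((gm0 l * Real.Gamma (l + 1 / 2)) ^ 2 * (exp (-s) * s ^ (l - 3 / 2) *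
          ∫ x in Ioi (0 : ℝ), x ^ (2 * l) * exp (-(q ^ 2 / (4 * s)) * x ^ 2) * PhiB l p a b x)) : ℝ) : ℂ)
      = (((q ^ 2 / 4) ^ (-(l + 1 / 2)) / 2 : ℝ) : ℂ) * ∫ w, (s : ℂ) ^ k * Complex.exp (-(s * (1 + GG p a b w / (q : ℂ) ^ 2))) ∂((gnu l).prod (gnu l)) := by
    intro s hs
    have hs' : 0 < s := hs
    have h := inner_gauss (p := p) (l := l) (ρ := q ^ 2 / (4 * s)) h0 (by positivity) ha hb
    rw [mul_left_comm, Complex.ofReal_mul, h, ← integral_const_mul, ← integral_const_mul, ← integral_const_mul]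
    congr 1; ext w
    have e2 : Complex.exp (-(s * (1 + GG p a b w / (q : ℂ) ^ 2))) = ((exp (-s) : ℝ) : ℂ) * Complex.exp (-GG p a b w / (4 * ((q ^ 2 / (4 * s) : ℝ) : ℂ))) := by
      rw [Complex.ofReal_exp, ← Complex.exp_add]
      congr 1
      have : (q : ℂ) ≠ 0 := by exact_mod_cast hq.ne'
      have : (s : ℂ) ≠ 0 := by exact_mod_cast hs'.ne'
      push_cast
      field_simp; ring
    have e3 : s ^ (l - 3 / 2) * (q ^ 2 / (4 * s)) ^ (-(l + 1 / 2)) = (q ^ 2 / 4) ^ (-(l + 1 / 2)) * s ^ k := by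
      rw [show q ^ 2 / (4 * s) = (q ^ 2 / 4) * s⁻¹ by field_simp, Real.mul_rpow (by positivity) (by positivity),
        Real.inv_rpow hs'.le, ← Real.rpow_neg hs'.le, mul_left_comm, ← Real.rpow_add hs', ← Real.rpow_natCast s k]
      congr 2; linarith
    have e4 := congrArg (fun r : ℝ => (r : ℂ)) e3
    rw [e2]
    push_cast at e4 ⊢
    linear_combination (Complex.exp (-s) * Complex.exp (-GG p a b w / (4 * (q ^ 2 / (4 * s)))) / 2) * e4
  rw [setIntegral_congr_fun measurableSet_Ioi e1, integral_const_mul, integral_integral_swap]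
  · have e5 : ∀ w, ∫ s in Ioi (0 : ℝ), (s : ℂ) ^ k * Complex.exp (-(s * (1 + GG p a b w / (q : ℂ) ^ 2)))
        = (k.factorial : ℂ) * ((1 + GG p a b w / (q : ℂ) ^ 2) ^ (k + 1))⁻¹ := fun w =>
      lap_val k (lt_of_lt_of_le hd (WW_re hq a b w))
    simp_rw [e5]
    have i5 : Integrable (fun w => ((1 + GG p a b w / (q : ℂ) ^ 2) ^ (k + 1))⁻¹) ((gnu l).prod (gnu l)) := by
      refine Integrable.mono' (integrable_const (((1 - p ^ 2 / q ^ 2) ^ (k + 1))⁻¹)) (by fun_prop : Measurable _).aestronglyMeasurable ?_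
      refine Eventually.of_forall fun w => ?_
      rw [norm_inv, norm_pow]
      have := (WW_re (p := p) hq a b w).trans ((le_abs_self _).trans (Complex.abs_re_le_norm _))
      gcongr
    rw [integral_const_mul, integral_prod _ i5]
    have e6 : ∀ v : ℝ, ∫ v2, ((1 + GG p a b (v, v2) / (q : ℂ) ^ 2) ^ (k + 1))⁻¹ ∂(gnu l)
        = ((gm0 l * ((1 + (kk a b v ^ 2 - p ^ 2) / q ^ 2) ^ 2 + (-(2 * p * kk a b v / q ^ 2)) ^ 2) ^ (-l) : ℝ) : ℂ) := by
      intro v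
      rw [← lin_integral h0 (N := k + 1) (by push_cast; linarith) (A := 1 + (kk a b v ^ 2 - p ^ 2) / q ^ 2)]
      · congr 1; ext v2; congr 2
        unfold GG; push_cast
        ring
      · have := WW_re (p := p) hq a b (v, 0)
        rw [← Complex.ofReal_pow, Complex.add_re, Complex.div_ofReal_re, GG_re] at this
        simp only [Complex.one_re] at this
        linarith
    simp_rw [e6]
    rw [integral_complex_ofReal, integral_const_mul, show (k.factorial : ℂ) = ((Real.Gamma (2 * l) : ℝ) : ℂ) by
      rw [hk, Real.Gamma_nat_eq_factorial]; simp]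
    push_cast; ring
  · have i6 := (lap_int_real k hd).mul_prod (integrable_const (μ := (gnu l).prod (gnu l)) (1 : ℝ))
    refine Integrable.mono' i6 ?_ ?_
    · apply Measurable.aestronglyMeasurable
      unfold Function.uncurry
      fun_prop
    · have h2 := Measure.quasiMeasurePreserving_fst (ν := (gnu l).prod (gnu l)) (μ := volume.restrict (Ioi (0:ℝ))) |>.ae (ae_restrict_mem measurableSet_Ioi)
      filter_upwards [h2] with z hx
      have hx' : 0 < z.1 := hx
      simp only [Function.uncurry, mul_one]
      rw [lap_norm k _ hx'.le]
      have := WW_re (p := p) hq a b z.2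
      gcongr

lemma integrand_eq (l : ℝ) {t : ℝ} (ht : t ∈ Ioo (-1 : ℝ) 1) (a b : ℝ) {x : ℝ} (hx : 0 < x) :
    besselIt ((2 * l - 1) / 2) ((-t) * x / (1 - (-t)))
      * besselKt ((2 * l - 1) / 2) (x / (1 - (-t)))
      * besselJt ((2 * l - 1) / 2) (a * x) * besselJt ((2 * l - 1) / 2) (b * x)
      * x ^ ((2 * l - 1) + (2 * l - 1) + 1)
    = ((2 * (1 + t)) ^ (2 * l) / (2 * (1 + t)) / 2) *
      (x ^ (2 * l) * PhiB l (t / (1 + t)) a b x * gB (l - 1 / 2) ((1 / (1 + t)) ^ 2 * x ^ 2 / 4)) := by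
  have hu : 0 < 1 + t := by linarith [ht.1]
  rw [show 1 - (-t) = 1 + t by ring, show (2 * l - 1) / 2 = l - 1 / 2 by ring]
  rw [besselIt_eq, besselJt_eq, besselJt_eq, besselKt, besselK_eq _ (by positivity)]
  have e1 : ((-t) * x / (1 + t)) ^ 2 / 4 = (t / (1 + t) * x) ^ 2 / 4 := by field_simp
  have e2 : (x / (1 + t)) ^ 2 / 4 = (1 / (1 + t)) ^ 2 * x ^ 2 / 4 := by field_simp
  have e3 : (x / (1 + t) / 2) ^ (-(l - 1 / 2)) * (x / (1 + t) / 2) ^ (-(l - 1 / 2)) * x ^ ((2 * l - 1) + (2 * l - 1) + 1)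
      = (2 * (1 + t)) ^ (2 * l) / (2 * (1 + t)) * x ^ (2 * l) := by
    rw [← Real.rpow_add (by positivity), show -(l - 1 / 2) + -(l - 1 / 2) = -(2 * l - 1) by ring,
      show x / (1 + t) / 2 = x * (2 * (1 + t))⁻¹ by field_simp, Real.mul_rpow hx.le (by positivity),
      Real.inv_rpow (by positivity), Real.rpow_neg (by positivity : 0 ≤ 2 * (1 + t)), inv_inv, mul_right_comm,
      ← Real.rpow_add hx, ← Real.rpow_sub_one (by positivity : 2 * (1 + t) ≠ 0), mul_comm]
    congr 2; ring
  rw [e1, e2]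
  unfold PhiB
  linear_combination (vB (l - 1 / 2) ((t / (1 + t) * x) ^ 2 / 4) * vB (l - 1 / 2) (-(a * x) ^ 2 / 4) * vB (l - 1 / 2) (-(b * x) ^ 2 / 4) * gB (l - 1 / 2) ((1 / (1 + t)) ^ 2 * x ^ 2 / 4) / 2) * e3

lemma S_eq {l : ℝ} (hl : 0 < l) {x sx y sy : ℝ} (hx : x ^ 2 + sx ^ 2 = 1) (hy : y ^ 2 + sy ^ 2 = 1) (hc : 0 < x + y)
    (hsx : 0 ≤ sx) (hsy : 0 ≤ sy) {t : ℝ} (ht : t ∈ Ioo (-1 : ℝ) 1) :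
    ∫ v, ((1 + (kk (sx / (x + y)) (sy / (x + y)) v ^ 2 - (t / (1 + t)) ^ 2) / (1 / (1 + t)) ^ 2) ^ 2
        + (-(2 * (t / (1 + t)) * kk (sx / (x + y)) (sy / (x + y)) v / (1 / (1 + t)) ^ 2)) ^ 2) ^ (-l) ∂(gnu l)
      = ((1 + t) ^ (2 * l))⁻¹ * ((2 : ℝ) ^ (2 * l))⁻¹ * (x + y) ^ (2 * l) *
        ∫ v, (1 - 2 * t * (x * y + sx * sy * v) + t ^ 2) ^ (-l) ∂(gnu l) := by
  have hu : 0 < 1 + t := by linarith [ht.1]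
  rw [mobius_kernel hx hy hc t]
  have hC := Real.rpow_pos_of_pos hc (2 * l)
  rw [← mul_assoc, ← integral_const_mul]
  refine integral_congr_ae ((gnu_ae l).mono fun v hv => ?_)
  simp only
  have hk := kk_sq (a := sx / (x + y)) (b := sy / (x + y)) (by positivity) (by positivity) hv
  set κ := kk (sx / (x + y)) (sy / (x + y)) v
  set D := 1 + x * y - sx * sy * v with hD
  set c := x + y with hcc
  have hDk : D = c ^ 2 * (1 + κ ^ 2) / 2 := by
    rw [hk, hD]; field_simp; rw [hcc]; linear_combination (-1) * hx + (-1) * hy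
  have hDp : 0 < D := by rw [hDk]; positivity
  set Z := 1 + t ^ 2 - 2 * t * (c ^ 2 / D - 1) with hZ
  have hE : (1 + (κ ^ 2 - (t / (1 + t)) ^ 2) / (1 / (1 + t)) ^ 2) ^ 2
        + (-(2 * (t / (1 + t)) * κ / (1 / (1 + t)) ^ 2)) ^ 2 = ((1 + t) * 2 * (c ^ 2)⁻¹ * D) ^ 2 * Z := by
    have h1 : (1 + (κ ^ 2 - (t / (1 + t)) ^ 2) / (1 / (1 + t)) ^ 2) = 1 - t ^ 2 + κ ^ 2 * (1 + t) ^ 2 := by field_simp; ring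
    have h2 : (2 * (t / (1 + t)) * κ / (1 / (1 + t)) ^ 2) = 2 * t * (1 + t) * κ := by field_simp
    rw [h1, h2, hZ, hDk]
    have : 1 + κ ^ 2 ≠ 0 := by positivity
    field_simp
    ring
  have hPp : 0 < (1 + t) * 2 * (c ^ 2)⁻¹ * D := by positivity
  have hZ0 : 0 ≤ Z := by
    by_contra hn
    push Not at hn
    have : ((1 + t) * 2 * (c ^ 2)⁻¹ * D) ^ 2 * Z < 0 := mul_neg_of_pos_of_neg (by positivity) hn
    rw [← hE] at this
    linarith [sq_nonneg (1 + (κ ^ 2 - (t / (1 + t)) ^ 2) / (1 / (1 + t)) ^ 2), sq_nonneg (-(2 * (t / (1 + t)) * κ / (1 / (1 + t)) ^ 2))]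
  rw [hE, Real.mul_rpow (by positivity) hZ0, ← Real.rpow_natCast _ 2, ← Real.rpow_mul hPp.le,
    show ((2 : ℕ) : ℝ) * -l = -(2 * l) by push_cast; ring, Real.mul_rpow (by positivity) hDp.le, Real.mul_rpow (by positivity) (by positivity),
    Real.mul_rpow hu.le (by norm_num), Real.inv_rpow (by positivity), Real.rpow_neg (by positivity : 0 ≤ c ^ 2), inv_inv, Real.rpow_neg hu.le,
    Real.rpow_neg (by norm_num : (0:ℝ) ≤ 2), pow_two c, Real.mul_rpow hc.le hc.le]
  ring

lemma closed {l : ℝ} {k : ℕ} (hk : 2 * l = k + 1) {x sx y sy : ℝ} (hx : x ^ 2 + sx ^ 2 = 1) (hy : y ^ 2 + sy ^ 2 = 1) (hc : 0 < x + y)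
    (hsx : 0 ≤ sx) (hsy : 0 ≤ sy) {t : ℝ} (ht : t ∈ Ioo (-1 : ℝ) 1) :
    (Real.pi / (2 : ℝ) ^ (8 * l - 4) * ((x + y) / 2) ^ (-(2 * l))) * ((1 + t) ^ (-(2 * l))
                * ∫ r in Set.Ioi (0 : ℝ),
                    besselIt ((2 * l - 1) / 2) ((-t) * r / (1 - (-t)))
                      * besselKt ((2 * l - 1) / 2) (r / (1 - (-t)))
                      * besselJt ((2 * l - 1) / 2) (sx / (x + y) * r)
                      * besselJt ((2 * l - 1) / 2) (sy / (x + y) * r)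
                      * r ^ ((2 * l - 1) + (2 * l - 1) + 1))
      = Real.Gamma l ^ 2 / (Real.Gamma (2 * l) * gm0 l) * ∫ v, (1 - 2 * t * (x * y + sx * sy * v) + t ^ 2) ^ (-l) ∂(gnu l) := by
  have h0 : 0 < l := by have : (0:ℝ) ≤ k := Nat.cast_nonneg k
                        linarith
  have hu : 0 < 1 + t := by linarith [ht.1]
  rw [setIntegral_congr_fun measurableSet_Ioi (fun r hr => integrand_eq l ht (sx / (x + y)) (sy / (x + y)) hr), integral_const_mul]
  have hT := total hk (p := t / (1 + t)) (q := 1 / (1 + t)) (by positivity) (by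
    rw [abs_div, abs_of_pos hu]
    have := abs_lt.2 ht
    gcongr) (a := sx / (x + y)) (b := sy / (x + y)) (by positivity) (by positivity)
  rw [S_eq h0 hx hy hc hsx hsy ht] at hT
  set T := ∫ r in Set.Ioi (0 : ℝ), r ^ (2 * l) * PhiB l (t / (1 + t)) (sx / (x + y)) (sy / (x + y)) r * gB (l - 1 / 2) ((1 / (1 + t)) ^ 2 * r ^ 2 / 4)
  set K := ∫ v, (1 - 2 * t * (x * y + sx * sy * v) + t ^ 2) ^ (-l) ∂(gnu l)
  have hdup := Real.Gamma_mul_Gamma_add_half l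
  have g1 := Real.Gamma_pos_of_pos h0
  have g2 := Real.Gamma_pos_of_pos (by linarith : 0 < 2 * l)
  have g3 := Real.Gamma_pos_of_pos (by linarith : 0 < l + 1 / 2)
  have m0 := gm0_pos h0
  have hX : (0:ℝ) < (2 : ℝ) ^ (2 * l) := by positivity
  have hU : (0:ℝ) < (1 + t) ^ (2 * l) := by positivity
  have hY : (0:ℝ) < (x + y) ^ (2 * l) := by positivity
  have r1 : (2 : ℝ) ^ (8 * l - 4) = ((2 : ℝ) ^ (2 * l)) ^ 4 / 16 := by
    rw [Real.rpow_sub (by norm_num), ← Real.rpow_natCast, ← Real.rpow_mul (by norm_num)]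
    norm_num
    ring_nf
  have r2 : ((x + y) / 2) ^ (-(2 * l)) = (2 : ℝ) ^ (2 * l) / (x + y) ^ (2 * l) := by
    rw [Real.rpow_neg (by positivity), Real.div_rpow hc.le (by norm_num), inv_div]
  have r3 : (2 * (1 + t)) ^ (2 * l) = (2 : ℝ) ^ (2 * l) * (1 + t) ^ (2 * l) := Real.mul_rpow (by norm_num) hu.le
  have r4 : ((1 / (1 + t)) ^ 2 / 4) ^ (-(l + 1 / 2)) = (2 : ℝ) ^ (2 * l) * (1 + t) ^ (2 * l) * (2 * (1 + t)) := by
    rw [show (1 / (1 + t)) ^ 2 / 4 = ((2 * (1 + t)) ^ 2)⁻¹ by field_simp; ring, Real.inv_rpow (by positivity), Real.rpow_neg (by positivity), inv_inv,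
      ← Real.rpow_natCast (2 * (1 + t)) 2, ← Real.rpow_mul (by positivity), ← r3, ← Real.rpow_add_one (by positivity)]
    congr 1; push_cast; ring
  have r5 : (2 : ℝ) ^ (1 - 2 * l) = 2 / (2 : ℝ) ^ (2 * l) := by rw [Real.rpow_sub (by norm_num), Real.rpow_one]
  rw [r4] at hT
  rw [r5] at hdup
  rw [r1, r2, r3, Real.rpow_neg hu.le]
  set X := (2 : ℝ) ^ (2 * l)
  set U := (1 + t) ^ (2 * l)
  set Y := (x + y) ^ (2 * l)
  set A := Real.Gamma l
  set B := Real.Gamma (l + 1 / 2)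
  set E := Real.Gamma (2 * l)
  have hT2 : T = (1 + t) * E * Y * K / (B ^ 2 * gm0 l) := by
    rw [eq_div_iff (by positivity)]
    have : (gm0 l * B) ^ 2 * T = gm0 l * ((1 + t) * E * Y * K) := by
      rw [hT]; field_simp
    have h2 : gm0 l * (T * (B ^ 2 * gm0 l)) = gm0 l * ((1 + t) * E * Y * K) := by rw [← this]; ring
    exact mul_left_cancel₀ m0.ne' h2
  have hd2 : A ^ 2 * B ^ 2 = E ^ 2 * (4 / X ^ 2) * π := by
    have : (A * B) ^ 2 = (E * (2 / X) * √π) ^ 2 := by rw [hdup]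
    rw [mul_pow, mul_pow, mul_pow, Real.sq_sqrt Real.pi_pos.le] at this
    rw [this]; ring
  have hd3 : A ^ 2 = E ^ 2 * (4 / X ^ 2) * π / B ^ 2 := by rw [← hd2]; field_simp
  rw [hT2, hd3]
  field_simp
  ring

/-- **Poisson kernel formula** for the Gegenbauer polynomials in terms of
`I_{2λ−1,2λ−1}(−t,ϑ,φ)`. -/
theorem poissonKernel_formula (l : ℝ) (hl : 0 < l) (hl2 : ∃ k : ℤ, (k : ℝ) = 2 * l)
    (ϑ φ : ℝ) (hϑ : ϑ ∈ Set.Icc (0 : ℝ) Real.pi) (hφ : φ ∈ Set.Icc (0 : ℝ) Real.pi)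
    (hpos : Real.cos ϑ + Real.cos φ > 0) (t : ℝ) (ht : t ∈ Set.Ioo (-1 : ℝ) 1) :
    HasSum
      (fun n : ℕ =>
        n.factorial * ((n : ℝ) + l) / Real.Gamma (n + 2 * l)
          * gegenbauerCt n l (Real.cos ϑ) * gegenbauerCt n l (Real.cos φ) * t ^ n)
      (Real.pi / (2 : ℝ) ^ (8 * l - 4) * ((Real.cos ϑ + Real.cos φ) / 2) ^ (-(2 * l))
        * (t * deriv
              (fun s : ℝ => (1 + s) ^ (-(2 * l))
                * ∫ x in Set.Ioi (0 : ℝ),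
                    besselIt ((2 * l - 1) / 2) ((-s) * x / (1 - (-s)))
                      * besselKt ((2 * l - 1) / 2) (x / (1 - (-s)))
                      * besselJt ((2 * l - 1) / 2)
                          (Real.sin ϑ / (Real.cos ϑ + Real.cos φ) * x)
                      * besselJt ((2 * l - 1) / 2)
                          (Real.sin φ / (Real.cos ϑ + Real.cos φ) * x)
                      * x ^ ((2 * l - 1) + (2 * l - 1) + 1)) t
            + l * ((1 + t) ^ (-(2 * l))
                * ∫ x in Set.Ioi (0 : ℝ),
                    besselIt ((2 * l - 1) / 2) ((-t) * x / (1 - (-t)))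
                      * besselKt ((2 * l - 1) / 2) (x / (1 - (-t)))
                      * besselJt ((2 * l - 1) / 2)
                          (Real.sin ϑ / (Real.cos ϑ + Real.cos φ) * x)
                      * besselJt ((2 * l - 1) / 2)
                          (Real.sin φ / (Real.cos ϑ + Real.cos φ) * x)
                      * x ^ ((2 * l - 1) + (2 * l - 1) + 1)))) := by
  obtain ⟨kz, hkz⟩ := hl2
  have hkz1 : 1 ≤ kz := by
    have : (0:ℝ) < kz := by rw [hkz]; linarith
    exact_mod_cast this
  obtain ⟨k, rfl⟩ : ∃ k : ℕ, kz = (k : ℤ) + 1 := ⟨(kz - 1).toNat, by omega⟩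
  have hk : 2 * l = k + 1 := by rw [← hkz]; push_cast; ring
  have hsx : 0 ≤ sin ϑ := sin_nonneg_of_mem_Icc hϑ
  have hsy : 0 ≤ sin φ := sin_nonneg_of_mem_Icc hφ
  have hx : cos ϑ ^ 2 + sin ϑ ^ 2 = 1 := Real.cos_sq_add_sin_sq ϑ
  have hy : cos φ ^ 2 + sin φ ^ 2 = 1 := Real.cos_sq_add_sin_sq φ
  set g : ℝ → ℝ := (fun s : ℝ => (1 + s) ^ (-(2 * l))
                * ∫ x in Set.Ioi (0 : ℝ),
                    besselIt ((2 * l - 1) / 2) ((-s) * x / (1 - (-s)))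
                      * besselKt ((2 * l - 1) / 2) (x / (1 - (-s)))
                      * besselJt ((2 * l - 1) / 2)
                          (Real.sin ϑ / (Real.cos ϑ + Real.cos φ) * x)
                      * besselJt ((2 * l - 1) / 2)
                          (Real.sin φ / (Real.cos ϑ + Real.cos φ) * x)
                      * x ^ ((2 * l - 1) + (2 * l - 1) + 1)) with hg
  have hgt : (1 + t) ^ (-(2 * l))
                * ∫ x in Set.Ioi (0 : ℝ),
                    besselIt ((2 * l - 1) / 2) ((-t) * x / (1 - (-t)))
                      * besselKt ((2 * l - 1) / 2) (x / (1 - (-t)))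
                      * besselJt ((2 * l - 1) / 2)
                          (Real.sin ϑ / (Real.cos ϑ + Real.cos φ) * x)
                      * besselJt ((2 * l - 1) / 2)
                          (Real.sin φ / (Real.cos ϑ + Real.cos φ) * x)
                      * x ^ ((2 * l - 1) + (2 * l - 1) + 1) = g t := rfl
  rw [hgt]
  set C : ℝ := Real.pi / (2 : ℝ) ^ (8 * l - 4) * ((Real.cos ϑ + Real.cos φ) / 2) ^ (-(2 * l)) with hC
  have hC0 : 0 < C := by have := Real.pi_pos; positivity
  set a : ℕ → ℝ := fun n => n.factorial / Real.Gamma (n + 2 * l) * gegenbauerCt n l (cos ϑ) * gegenbauerCt n l (cos φ) with ha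
  have hsum : ∀ s ∈ Ioo (-1 : ℝ) 1, HasSum (fun n => a n * s ^ n) (C * g s) := by
    intro s hs
    rw [hC, hg]
    have h1 := closed hk hx hy hpos hsx hsy hs
    simp only
    rw [h1]
    exact kernelF hl hk hx φ (abs_lt.2 hs)
  have habs : ∀ r, 0 ≤ r → r < 1 → Summable (fun n => |a n| * r ^ n) := by
    intro r hr hr1
    refine (hsum r ⟨by linarith, hr1⟩).summable.abs.congr fun n => ?_
    rw [abs_mul, abs_pow, abs_of_nonneg hr]
  obtain ⟨s1, d1⟩ := powser_deriv habs (abs_lt.2 ht)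
  have hd : deriv g t = C⁻¹ * ∑' n : ℕ, n * a n * t ^ (n - 1) := by
    refine HasDerivAt.deriv (HasDerivAt.congr_of_eventuallyEq (d1.const_mul C⁻¹) ?_)
    filter_upwards [Ioo_mem_nhds ht.1 ht.2] with s hs
    rw [(hsum s hs).tsum_eq]
    field_simp
  rw [hd]
  refine hasSum_of_eq ((s1.hasSum.mul_left t).add ((hsum t ht).mul_left l)) (fun n => ?_) ?_
  · rw [ha]
    rcases n with _ | n
    · simp; ring
    · simp only [Nat.add_sub_cancel, pow_succ]; ring
  · field_simp
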